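/- Let φ be a continuous injective map on {z ∈ ℂ : |z| ≥ 1} that is holomorphic on {|z| > 1} with Laurent expansion φ(z) = z + φ₀ + ∑_{k≥1} φ_{-k} z^{-k} at infinity; assume θ ↦ φ(e^{iθ}) is five times continuously differentiable with α-Hölder continuous fifth derivative for some α ∈ (0,1) and nonvanishing derivative, that φ' extends continuously and without zeros to {|z| ≥ 1}, and that the Grunsky expansion of φ converges absolutely for |z|, |ζ| ≥ 1 (so the image curve γ = φ(𝕋) is a C^{5+α} Jordan curve of logarithmic capacity 1). Set b_{kℓ} = √(kℓ) a_{kℓ} and let K_m be the associated 2m×2m real symmetric block matrix. Define the partition function Z_n = (1/n!) ∫_{[−π,π]^n} ∏_{1≤μ<ν≤n} |φ(e^{iθ_μ}) − φ(e^{iθ_ν})|² ∏_{μ=1}^n |φ'(e^{iθ_μ})| dθ. Then det(I_{2m} + K_m) > 0 for every m, the limit D = lim_{m→∞} det(I_{2m} + K_m) exists in (0, ∞), and lim_{n→∞} Z_n/(2π)^n = D^{−1/2}. -/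

import Mathlib

open MeasureTheory Filter Matrix

/-- The `2m × 2m` real symmetric block matrix `K_m = [[B⁽¹⁾, B⁽²⁾],[B⁽²⁾, −B⁽¹⁾]]`
built from the truncated Grunsky matrix `B_m = (√(kℓ) a_{kℓ})_{1≤k,ℓ≤m}`
(with `B_m = B⁽¹⁾ + iB⁽²⁾`, `B⁽ʲ⁾` real). -/
noncomputable def grunskyK (a : ℕ → ℕ → ℂ) (m : ℕ) :
    Matrix (Fin m ⊕ Fin m) (Fin m ⊕ Fin m) ℝ :=
  Matrix.fromBlocks
    (Matrix.of fun k l : Fin m =>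
      ((Real.sqrt ((((k : ℕ) + 1) * ((l : ℕ) + 1) : ℕ)) : ℂ)
        * a ((k : ℕ) + 1) ((l : ℕ) + 1)).re)
    (Matrix.of fun k l : Fin m =>
      ((Real.sqrt ((((k : ℕ) + 1) * ((l : ℕ) + 1) : ℕ)) : ℂ)
        * a ((k : ℕ) + 1) ((l : ℕ) + 1)).im)
    (Matrix.of fun k l : Fin m =>
      ((Real.sqrt ((((k : ℕ) + 1) * ((l : ℕ) + 1) : ℕ)) : ℂ)
        * a ((k : ℕ) + 1) ((l : ℕ) + 1)).im)
    (-(Matrix.of fun k l : Fin m =>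
      ((Real.sqrt ((((k : ℕ) + 1) * ((l : ℕ) + 1) : ℕ)) : ℂ)
        * a ((k : ℕ) + 1) ((l : ℕ) + 1)).re))

/-!
With `u = 1 / z`, multiplying the Grunsky expansions over all pairs of points turns the Coulomb gas
weight at `z = exp (iθ)` into `|Δ(u)|² |exp (-(1/2) ∑ a_{kl} p_k(u) p_l(u))|²`, where `p_k` is the
`k`-th power sum. Hence `Z_n / (2π)^n` is the mean square of this exponential over the eigenvalues
of a Haar unitary matrix. Expand the exponential in the products `p_ν` of power sums. By Diaconis
and Shahshahani these are orthogonal with `n`-independent square norms `z_ν` as long as `|ν| ≤ n`,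
so the mean squares, once bounded, converge to the series `∑ |c_ν|² z_ν`, where `c_ν` are the
coefficients of the expansion. The same series is the Gaussian integral of
`|exp (-(1/2) ∑ b_{kl} ξ_k ξ_l)|²`, which equals `det (I + K)^{-1/2}`.

For the bound, `∏_{i<j} (φ(z_i) - φ(z_j)) ∏ √φ'(z_i)` is, up to sign, the determinant of
`√φ'(z_i) P_j(φ(z_i))` for any monic polynomials `P_j` of degree `j`. By Andréief's identity
`Z_n / (2π)^n` is the determinant of the Gram matrix `G` of the functions `√φ' P_j(φ)`, `j < n`, and
so is at most `exp (tr G - n)`. For the generalized Faber polynomials `P_j` with weight `√φ'`,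
`tr G - n` stays bounded, because the generating function of `√φ' P_j(φ)` is a Cauchy kernel times a
function equal to `1` on the diagonal, and this function is Lipschitz when `φ` is `C²` on the
circle.
-/

namespace CoulombGas

open scoped ComplexConjugate

section MultiIndex

variable {ι M : Type*}

/-- The monomial `a ^ ν = ∏ₖ a k ^ ν k` of a finitely supported multi-index `ν`. -/
def multiPow [CommMonoid M] (a : ι → M) (ν : ι →₀ ℕ) : M := ν.prod fun k e => a k ^ e

/-- The multi-index factorial `ν! = ∏ₖ (ν k)!`. -/
def multiFactorial (ν : ι →₀ ℕ) : ℕ := ν.prod fun _ e => e.factorial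

lemma multiFactorial_pos (ν : ι →₀ ℕ) : 0 < multiFactorial ν :=
  Finset.prod_pos fun _ _ => Nat.factorial_pos _

lemma multiPow_of_support_subset [CommMonoid M] (a : ι → M) {ν : ι →₀ ℕ} {s : Finset ι}
    (h : ν.support ⊆ s) : multiPow a ν = ∏ k ∈ s, a k ^ ν k :=
  Finsupp.prod_of_support_subset _ h _ fun _ _ => pow_zero _

lemma multiFactorial_of_support_subset {ν : ι →₀ ℕ} {s : Finset ι} (h : ν.support ⊆ s) :
    multiFactorial ν = ∏ k ∈ s, (ν k).factorial :=
  Finsupp.prod_of_support_subset _ h _ fun _ _ => rfl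

lemma multiPow_one [CommMonoid M] (ν : ι →₀ ℕ) : multiPow (fun _ => (1 : M)) ν = 1 := by
  simp [multiPow]

lemma multiPow_mul [CommMonoid M] (a b : ι → M) (ν : ι →₀ ℕ) :
    multiPow (fun k => a k * b k) ν = multiPow a ν * multiPow b ν := by
  simp [multiPow, mul_pow, Finsupp.prod_mul]

@[fun_prop]
lemma continuous_multiPow {X : Type*} [TopologicalSpace X] [CommMonoid M] [TopologicalSpace M]
    [ContinuousMul M] {a : X → ι → M} (ha : Continuous a) (ν : ι →₀ ℕ) :
    Continuous fun x => multiPow (a x) ν :=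
  continuous_finsetProd _ fun k _ => ((continuous_apply k).comp ha).pow _

lemma multiPow_mapDomain {κ : Type*} [CommMonoid M] (a : ι → M) (f : κ → ι) (ν : κ →₀ ℕ) :
    multiPow a (ν.mapDomain f) = multiPow (fun k => a (f k)) ν :=
  Finsupp.prod_mapDomain_index (fun _ => pow_zero _) fun _ _ _ => pow_add _ _ _

lemma multiFactorial_mapDomain {κ : Type*} {f : κ → ι} (hf : Function.Injective f) (ν : κ →₀ ℕ) :
    multiFactorial (ν.mapDomain f) = multiFactorial ν :=
  Finsupp.prod_mapDomain_index_inj hf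

lemma map_multiPow {M' F : Type*} [CommMonoid M] [CommMonoid M'] [FunLike F M M']
    [MonoidHomClass F M M'] (f : F) (a : ι → M) (ν : ι →₀ ℕ) :
    f (multiPow a ν) = multiPow (fun k => f (a k)) ν := by
  simp [multiPow, Finsupp.prod, map_prod]

lemma norm_multiPow [NormedField M] (a : ι → M) (ν : ι →₀ ℕ) :
    ‖multiPow a ν‖ = multiPow (fun k => ‖a k‖) ν := by
  simp [multiPow, Finsupp.prod]

lemma norm_multiPow_le [NormedField M] {a b : ι → M} (h : ∀ k, ‖a k‖ ≤ ‖b k‖) (ν : ι →₀ ℕ) :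
    ‖multiPow a ν‖ ≤ ‖multiPow b ν‖ := by
  rw [norm_multiPow, norm_multiPow]
  exact Finset.prod_le_prod (fun _ _ => by positivity) fun k _ =>
    pow_le_pow_left₀ (norm_nonneg _) (h k) _

/-! ### The multi-index expansion of the exponential -/

lemma multiPow_div_multiFactorial [Field M] (a : ι → M) {ν : ι →₀ ℕ} {s : Finset ι}
    (h : ν.support ⊆ s) :
    multiPow a ν / multiFactorial ν = ∏ k ∈ s, a k ^ ν k / ((ν k).factorial : M) := by
  rw [multiPow_of_support_subset a h, multiFactorial_of_support_subset h, Finset.prod_div_distrib,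
    Nat.cast_prod]

lemma sum_box_multiPow_div_multiFactorial [Field M] (a : ι → M) (s : Finset ι) (N : ℕ) :
    ∑ ν ∈ s.finsupp (fun _ => Finset.range N), multiPow a ν / multiFactorial ν
      = ∏ k ∈ s, ∑ j ∈ Finset.range N, a k ^ j / (j.factorial : M) := by
  classical
  rw [Finset.prod_sum, Finset.finsupp, Finset.sum_map]
  refine Finset.sum_congr rfl fun p _ => ?_
  rw [Function.Embedding.coeFn_mk,
    multiPow_div_multiFactorial a (Finsupp.support_indicator_subset s p), ← Finset.prod_attach]
  exact Finset.prod_congr rfl fun k _ => by simp [Finsupp.indicator_of_mem k.2]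

lemma exists_subset_box (u : Finset (ι →₀ ℕ)) :
    ∃ p : Finset ι × ℕ, ∀ q ≥ p, u ⊆ q.1.finsupp fun _ => Finset.range q.2 := by
  classical
  refine ⟨(u.biUnion Finsupp.support, u.sup fun ν => ν.support.sup ν + 1), fun q hq ν hν => ?_⟩
  have hsupp : ν.support ⊆ q.1 :=
    (Finset.subset_biUnion_of_mem (fun ν : ι →₀ ℕ => ν.support) hν).trans hq.1
  have hle : ν.support.sup ν + 1 ≤ q.2 :=
    (Finset.le_sup (f := fun ν : ι →₀ ℕ => ν.support.sup ν + 1) hν).trans hq.2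
  refine Finset.mem_finsupp_iff.2 ⟨hsupp, fun k _ => Finset.mem_range.2 ?_⟩
  by_cases hk : k ∈ ν.support
  · exact (Nat.lt_succ_of_le (Finset.le_sup (f := ν) hk)).trans_le hle
  · rw [Finsupp.notMem_support_iff.1 hk]
    exact (Nat.succ_pos _).trans_le hle

lemma summable_norm_multiPow_div_multiFactorial {a : ι → ℂ} (ha : Summable fun k => ‖a k‖) :
    Summable fun ν : ι →₀ ℕ => ‖multiPow a ν / multiFactorial ν‖ := by
  refine summable_of_sum_le (c := Real.exp (∑' k, ‖a k‖)) (fun _ => norm_nonneg _) fun u => ?_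
  obtain ⟨⟨s, N⟩, hu⟩ := exists_subset_box u
  calc ∑ ν ∈ u, ‖multiPow a ν / multiFactorial ν‖
      ≤ ∑ ν ∈ s.finsupp fun _ => Finset.range N, ‖multiPow a ν / multiFactorial ν‖ :=
        Finset.sum_le_sum_of_subset_of_nonneg (hu _ le_rfl) fun _ _ _ => norm_nonneg _
    _ = ∏ k ∈ s, ∑ j ∈ Finset.range N, ‖a k‖ ^ j / (j.factorial : ℝ) := by
        rw [← sum_box_multiPow_div_multiFactorial]
        simp only [norm_div, norm_multiPow, Complex.norm_natCast]
    _ ≤ ∏ k ∈ s, Real.exp ‖a k‖ := by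
        gcongr
        exact Real.sum_le_exp_of_nonneg (norm_nonneg _) N
    _ = Real.exp (∑ k ∈ s, ‖a k‖) := (Real.exp_sum s _).symm
    _ ≤ Real.exp (∑' k, ‖a k‖) :=
        Real.exp_le_exp.2 (ha.sum_le_tsum s fun _ _ => norm_nonneg _)

theorem hasSum_multiPow_div_multiFactorial {a : ι → ℂ} (ha : Summable fun k => ‖a k‖) :
    HasSum (fun ν : ι →₀ ℕ => multiPow a ν / multiFactorial ν) (Complex.exp (∑' k, a k)) := by
  have hsum := (summable_norm_multiPow_div_multiFactorial ha).of_norm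
  have hbox : Tendsto (fun p : Finset ι × ℕ => p.1.finsupp fun _ => Finset.range p.2)
      atTop atTop := tendsto_atTop.2 fun u =>
    let ⟨p, hp⟩ := exists_subset_box u
    (eventually_ge_atTop p).mono hp
  have hjoint := hsum.hasSum.comp hbox
  simp only [Function.comp_def, sum_box_multiPow_div_multiFactorial] at hjoint
  have hrow (s : Finset ι) : Tendsto
      (fun N => ∏ k ∈ s, ∑ j ∈ Finset.range N, a k ^ j / (j.factorial : ℂ)) atTop
      (nhds (Complex.exp (∑ k ∈ s, a k))) := by
    rw [Complex.exp_sum]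
    refine tendsto_finsetProd s fun k _ => ?_
    rw [Complex.exp_eq_exp_ℂ]
    exact (NormedSpace.expSeries_div_hasSum_exp (a k)).tendsto_sum_nat
  have hexp : Tendsto (fun s : Finset ι => Complex.exp (∑ k ∈ s, a k)) atTop
      (nhds (∑' ν : ι →₀ ℕ, multiPow a ν / multiFactorial ν)) := by
    refine (closed_nhds_basis _).tendsto_right_iff.2 fun V hV => ?_
    rw [← prod_atTop_atTop_eq] at hjoint
    filter_upwards [(hjoint.eventually hV.1).curry] with s hs
    exact hV.2.mem_of_tendsto (hrow s) hs
  rw [hsum.hasSum_iff]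
  exact tendsto_nhds_unique hexp ((Complex.continuous_exp.tendsto _).comp ha.of_norm.hasSum)

end MultiIndex

/-! ### Integration over the unit circle and the torus -/

/-- The parametrization `θ ↦ exp (-iθ)` of the unit circle. The exponent is negative because the
Grunsky series is a power series in `z⁻¹`, so that `z = exp (iθ)` corresponds to
`u = z⁻¹ = exp (-iθ)`. -/
noncomputable def circleParam (θ : ℝ) : ℂ := Complex.exp (-(Complex.I * θ))

/-- The uniform probability measure on the unit circle, as a measure on `ℂ`. -/
noncomputable def circleMeasure : Measure ℂ :=
  (ENNReal.ofReal (2 * Real.pi))⁻¹ • (volume.restrict (Set.Icc (-Real.pi) Real.pi)).map circleParam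

/-- The uniform probability measure on the `n`-dimensional torus, as a measure on `ℂⁿ`. -/
noncomputable def torusMeasure (n : ℕ) : Measure (Fin n → ℂ) := Measure.pi fun _ => circleMeasure

/-- The `n`-dimensional torus, as a subset of `ℂⁿ`. -/
def unitTorus (n : ℕ) : Set (Fin n → ℂ) := {x | ∀ i, ‖x i‖ = 1}

lemma continuous_circleParam : Continuous circleParam := by unfold circleParam; fun_prop

lemma norm_circleParam (θ : ℝ) : ‖circleParam θ‖ = 1 := by simp [circleParam, Complex.norm_exp]

lemma circleParam_inv (θ : ℝ) : (circleParam θ)⁻¹ = Complex.exp (Complex.I * θ) := by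
  rw [circleParam, Complex.exp_neg, inv_inv]

lemma ne_zero_of_norm_eq_one {u : ℂ} (hu : ‖u‖ = 1) : u ≠ 0 :=
  norm_ne_zero_iff.1 (hu ▸ one_ne_zero)

instance : IsProbabilityMeasure circleMeasure := by
  refine ⟨?_⟩
  rw [circleMeasure, Measure.smul_apply, Measure.map_apply continuous_circleParam.measurable .univ,
    Set.preimage_univ, Measure.restrict_apply_univ, Real.volume_Icc, smul_eq_mul, sub_neg_eq_add,
    ← two_mul]
  exact ENNReal.inv_mul_cancel (by simp [Real.pi_pos]) ENNReal.ofReal_ne_top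

instance (n : ℕ) : IsProbabilityMeasure (torusMeasure n) := by
  unfold torusMeasure; infer_instance

lemma ae_norm_eq_one : ∀ᵐ u ∂circleMeasure, ‖u‖ = 1 := by
  refine Measure.ae_smul_measure ?_ _
  rw [ae_map_iff continuous_circleParam.measurable.aemeasurable
    (measurableSet_eq_fun measurable_norm measurable_const)]
  exact Eventually.of_forall norm_circleParam

lemma ae_mem_unitTorus (n : ℕ) : ∀ᵐ x ∂torusMeasure n, x ∈ unitTorus n :=
  ae_all_iff.2 fun i =>
    (Measure.quasiMeasurePreserving_eval (fun _ : Fin n => circleMeasure) i).ae ae_norm_eq_one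

lemma isCompact_unitTorus (n : ℕ) : IsCompact (unitTorus n) := by
  have h : unitTorus n = Set.pi Set.univ fun _ => Metric.sphere (0 : ℂ) 1 := by
    ext x; simp [unitTorus]
  exact h ▸ isCompact_univ_pi fun _ => isCompact_sphere _ _

section Integrable

variable {E : Type*} [NormedAddCommGroup E]

lemma integrable_torusMeasure {n : ℕ} {f : (Fin n → ℂ) → E} (hf : ContinuousOn f (unitTorus n)) :
    Integrable f (torusMeasure n) := by
  rw [← Measure.restrict_eq_self_of_ae_mem (ae_mem_unitTorus n)]
  exact hf.integrableOn_compact (isCompact_unitTorus n)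

lemma integrable_circleMeasure {f : ℂ → E} (hf : ContinuousOn f (Metric.sphere 0 1)) :
    Integrable f circleMeasure := by
  have hae : ∀ᵐ u ∂circleMeasure, u ∈ Metric.sphere (0 : ℂ) 1 := by simpa using ae_norm_eq_one
  rw [← Measure.restrict_eq_self_of_ae_mem hae]
  exact hf.integrableOn_compact (isCompact_sphere _ _)

end Integrable

lemma hasSum_integral_of_ae_mem_unitTorus {n : ℕ} {μ : Measure (Fin n → ℂ)} [IsFiniteMeasure μ]
    (hμ : ∀ᵐ x ∂μ, x ∈ unitTorus n) {ι : Type*} [Countable ι] {F : ι → (Fin n → ℂ) → ℂ}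
    {f : (Fin n → ℂ) → ℂ} {b : ι → ℝ} (hb : Summable b)
    (hF : ∀ i, Continuous (F i)) (hFb : ∀ i, ∀ x ∈ unitTorus n, ‖F i x‖ ≤ b i)
    (hs : ∀ x ∈ unitTorus n, HasSum (fun i => F i x) (f x)) :
    HasSum (fun i => ∫ x, F i x ∂μ) (∫ x, f x ∂μ) :=
  hasSum_integral_of_dominated_convergence (fun i _ => b i)
    (fun i => (hF i).aestronglyMeasurable) (fun i => hμ.mono (hFb i))
    (Eventually.of_forall fun _ => hb) (integrable_const _) (hμ.mono hs)

lemma integral_torusMeasure_prod {n : ℕ} (f : Fin n → ℂ → ℂ) :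
    ∫ x, ∏ i, f i (x i) ∂torusMeasure n = ∏ i, ∫ u, f i u ∂circleMeasure :=
  integral_fintype_prod_eq_prod (μ := fun _ => circleMeasure) (f := f)

lemma integral_circleMeasure {f : ℂ → ℂ} (hf : ContinuousOn f (Metric.sphere 0 1)) :
    ∫ u, f u ∂circleMeasure
      = (2 * Real.pi)⁻¹ • ∫ θ in Set.Icc (-Real.pi) Real.pi, f (circleParam θ) := by
  have hint := integrable_circleMeasure hf
  rw [circleMeasure, integrable_smul_measure (ENNReal.inv_ne_zero.2 ENNReal.ofReal_ne_top)
    (by simp [Real.pi_pos])] at hint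
  rw [circleMeasure, integral_smul_measure,
    integral_map continuous_circleParam.measurable.aemeasurable hint.1, ENNReal.toReal_inv,
    ENNReal.toReal_ofReal (by positivity)]

lemma integral_circleMeasure_eq_circleAverage {f : ℂ → ℂ}
    (hf : ContinuousOn f (Metric.sphere 0 1)) :
    ∫ u, f u ∂circleMeasure = Real.circleAverage f 0 1 := by
  have hreflect : ∀ θ : ℝ, f (circleParam θ) = f (circleMap 0 1 (-θ)) := fun θ => by
    simp [circleParam, circleMap, mul_comm]
  have hper : Function.Periodic (fun θ => f (circleMap 0 1 θ)) (2 * Real.pi) := fun θ => by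
    simp only [periodic_circleMap 0 1 θ]
  have hshift := hper.intervalIntegral_add_eq (-Real.pi) 0
  rw [show -Real.pi + 2 * Real.pi = Real.pi by ring, zero_add] at hshift
  rw [integral_circleMeasure hf, integral_Icc_eq_integral_Ioc,
    ← intervalIntegral.integral_of_le (by linarith [Real.pi_pos]), Real.circleAverage_def]
  simp only [hreflect]
  rw [intervalIntegral.integral_comp_neg fun θ => f (circleMap 0 1 θ), neg_neg, hshift]

lemma integral_circleMeasure_eq_apply_zero {f : ℂ → ℂ}
    (hf : DiffContOnCl ℂ f (Metric.ball 0 1)) : ∫ u, f u ∂circleMeasure = f 0 := by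
  rw [integral_circleMeasure_eq_circleAverage
    (hf.continuousOn_ball.mono Metric.sphere_subset_closedBall)]
  exact DiffContOnCl.circleAverage (by simpa using hf)

lemma integral_pow_mul_conj_pow_of_lt {a b : ℕ} (h : b < a) :
    ∫ u, u ^ a * conj u ^ b ∂circleMeasure = 0 := by
  calc ∫ u, u ^ a * conj u ^ b ∂circleMeasure = ∫ u, u ^ (a - b) ∂circleMeasure := by
        refine integral_congr_ae ?_
        filter_upwards [ae_norm_eq_one] with u hu
        rw [← Complex.inv_eq_conj hu, pow_sub₀ _ (ne_zero_of_norm_eq_one hu) h.le, inv_pow]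
    _ = 0 ^ (a - b) := integral_circleMeasure_eq_apply_zero (differentiable_id.pow _).diffContOnCl
    _ = 0 := zero_pow (by omega)

lemma integral_pow_mul_conj_pow (a b : ℕ) :
    ∫ u, u ^ a * conj u ^ b ∂circleMeasure = if a = b then 1 else 0 := by
  rcases lt_trichotomy a b with h | rfl | h
  · have hconj := congrArg conj (integral_pow_mul_conj_pow_of_lt h)
    rw [← integral_conj] at hconj
    simpa [h.ne, mul_comm] using hconj
  · have hone : ∀ᵐ u ∂circleMeasure, u ^ a * conj u ^ a = 1 := by
      filter_upwards [ae_norm_eq_one] with u hu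
      rw [← Complex.inv_eq_conj hu, ← mul_pow, mul_inv_cancel₀ (ne_zero_of_norm_eq_one hu), one_pow]
    simp [integral_congr_ae hone]
  · rw [if_neg h.ne', integral_pow_mul_conj_pow_of_lt h]

/-! ### Cauchy's determinant and the reproducing kernel of symmetric polynomials -/

section CauchyDeterminant

variable {K : Type*} [Field K]

/- The elimination step of Cauchy's determinant: the second summand is a multiple of the first row
`(1 - q t)⁻¹`, and the first one carries the factors to be pulled out of rows and columns. -/
lemma inv_one_sub_mul_eq_add {p q s t : K} (hpt : 1 - p * t ≠ 0) (hps : 1 - p * s ≠ 0)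
    (hqt : 1 - q * t ≠ 0) :
    (1 - p * t)⁻¹ = (p - q) * (1 - p * s)⁻¹ * ((t - s) * (1 - q * t)⁻¹) * (1 - p * t)⁻¹
      + (1 - q * s) * (1 - p * s)⁻¹ * (1 - q * t)⁻¹ := by
  have hpt' := inv_mul_cancel₀ hpt
  have hps' := inv_mul_cancel₀ hps
  have hqt' := inv_mul_cancel₀ hqt
  have hcross : (p - q) * (t - s) + (1 - q * s) * (1 - p * t) - (1 - q * t) * (1 - p * s) = 0 := by
    ring
  generalize (1 - p * t)⁻¹ = A, (1 - p * s)⁻¹ = B, (1 - q * t)⁻¹ = C at *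
  linear_combination (-A) * hps' + (-A * B * (1 - p * s)) * hqt' + (1 - q * s) * B * C * hpt'
    - A * B * C * hcross

theorem det_inv_one_sub_mul {n : ℕ} (y x : Fin n → K) (h : ∀ i j, 1 - y i * x j ≠ 0) :
    (of fun i j => (1 - y i * x j)⁻¹).det
      = (vandermonde y).det * (vandermonde x).det * ∏ i, ∏ j, (1 - y i * x j)⁻¹ := by
  induction n with
  | zero => simp
  | succ n ih =>
    let B : Matrix (Fin (n + 1)) (Fin (n + 1)) K := of fun i j => Fin.cases (1 - y 0 * x j)⁻¹
      (fun i' : Fin n => (y i'.succ - y 0) * (1 - y i'.succ * x 0)⁻¹ *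
        ((x j - x 0) * (1 - y 0 * x j)⁻¹) * (1 - y i'.succ * x j)⁻¹) i
    have hrows : (of fun i j => (1 - y i * x j)⁻¹).det = B.det := by
      refine det_eq_of_forall_row_eq_smul_add_const
        (Fin.cons 0 fun i' : Fin n => (1 - y 0 * x 0) * (1 - y i'.succ * x 0)⁻¹) 0 (by simp) ?_
      refine fun i j => Fin.cases (by simp [B]) (fun i' => ?_) i
      simp only [B, of_apply, Fin.cases_succ, Fin.cons_succ, Fin.cases_zero]
      exact inv_one_sub_mul_eq_add (h _ _) (h _ _) (h _ _)
    have hexpand : B.det = (1 - y 0 * x 0)⁻¹ * (B.submatrix Fin.succ Fin.succ).det := by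
      rw [det_succ_column_zero, Fin.sum_univ_succ]
      simp [B, Fin.succAbove_zero]
    have hminor : B.submatrix Fin.succ Fin.succ = of fun i j : Fin n =>
        ((y i.succ - y 0) * (1 - y i.succ * x 0)⁻¹) *
        (of (fun i j : Fin n => ((x j.succ - x 0) * (1 - y 0 * x j.succ)⁻¹) *
          (of (fun i j : Fin n => (1 - y i.succ * x j.succ)⁻¹) i j)) i j) := by
      ext i j
      simp [B]; ring
    rw [hrows, hexpand, hminor, det_mul_column, det_mul_row,
      ih (fun i => y i.succ) (fun i => x i.succ) fun i j => h _ _]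
    simp only [det_vandermonde, Fin.prod_univ_succ, Fin.prod_Ioi_zero, Fin.prod_Ioi_succ,
      Finset.prod_mul_distrib]
    ring

end CauchyDeterminant

lemma one_sub_mul_conj_ne_zero {y u : ℂ} (hy : ‖y‖ < 1) (hu : ‖u‖ = 1) : 1 - y * conj u ≠ 0 := by
  intro h
  have hnorm := congrArg norm (sub_eq_zero.1 h)
  rw [norm_one, norm_mul, RCLike.norm_conj, hu, mul_one] at hnorm
  exact hy.ne' hnorm

lemma integral_pow_mul_inv_one_sub {y : ℂ} (hy : ‖y‖ < 1) (m : ℕ) :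
    ∫ u, u ^ m * (1 - y * conj u)⁻¹ ∂circleMeasure = y ^ m := by
  have hne {u : ℂ} (hu : ‖u‖ = 1) : u - y ≠ 0 := fun h => by
    rw [← sub_eq_zero.1 h] at hy
    exact hy.ne hu
  calc ∫ u, u ^ m * (1 - y * conj u)⁻¹ ∂circleMeasure
      = ∫ u, ((u - 0) / (u - y)) • u ^ m ∂circleMeasure := by
        refine integral_congr_ae ?_
        filter_upwards [ae_norm_eq_one] with u hu
        have hu0 := ne_zero_of_norm_eq_one hu
        rw [← Complex.inv_eq_conj hu, sub_zero, smul_eq_mul, mul_comm]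
        congr 1
        field_simp
    _ = Real.circleAverage (fun u => ((u - 0) / (u - y)) • u ^ m) 0 1 := by
        refine integral_circleMeasure_eq_circleAverage fun u hu => ?_
        have := hne (mem_sphere_zero_iff_norm.1 hu)
        exact ContinuousAt.continuousWithinAt (by fun_prop (disch := assumption))
    _ = y ^ m := DiffContOnCl.circleAverage_smul_div (f := fun u : ℂ => u ^ m)
        (differentiable_id.pow _).diffContOnCl (by simpa using hy)

section ReproducingKernel

variable {n : ℕ}

lemma continuousOn_inv_one_sub_mul_conj {y : ℂ} (hy : ‖y‖ < 1) (j : Fin n) :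
    ContinuousOn (fun x : Fin n → ℂ => (1 - y * conj (x j))⁻¹) (unitTorus n) :=
  ContinuousOn.inv₀ (Continuous.continuousOn (by fun_prop)) fun _ hx =>
    one_sub_mul_conj_ne_zero hy (hx j)

lemma continuousOn_eval_mul_prod_inv (P : MvPolynomial (Fin n) ℂ) {y : Fin n → ℂ}
    (hy : ∀ i, ‖y i‖ < 1) :
    ContinuousOn (fun x => MvPolynomial.eval x P * ∏ j, (1 - y j * conj (x j))⁻¹) (unitTorus n) :=
  (MvPolynomial.continuous_eval P).continuousOn.mul
    (continuousOn_finsetProd _ fun j _ => continuousOn_inv_one_sub_mul_conj (hy j) j)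

theorem integral_eval_mul_prod_inv_one_sub (P : MvPolynomial (Fin n) ℂ) {y : Fin n → ℂ}
    (hy : ∀ i, ‖y i‖ < 1) :
    ∫ x, MvPolynomial.eval x P * ∏ j, (1 - y j * conj (x j))⁻¹ ∂torusMeasure n
      = MvPolynomial.eval y P := by
  induction P using MvPolynomial.induction_on' with
  | monomial d c =>
    have hprod (x : Fin n → ℂ) : MvPolynomial.eval x (MvPolynomial.monomial d c)
        * ∏ j, (1 - y j * conj (x j))⁻¹
          = c * ∏ j, (fun u => u ^ d j * (1 - y j * conj u)⁻¹) (x j) := by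
      rw [MvPolynomial.eval_monomial, Finsupp.prod_fintype _ _ fun _ => pow_zero _, mul_assoc,
        ← Finset.prod_mul_distrib]
    simp_rw [hprod]
    rw [integral_const_mul, integral_torusMeasure_prod fun j u => u ^ d j * (1 - y j * conj u)⁻¹,
      MvPolynomial.eval_monomial, Finsupp.prod_fintype _ _ fun _ => pow_zero _]
    simp only [integral_pow_mul_inv_one_sub (hy _)]
  | add P Q hP hQ =>
    simp only [map_add, add_mul]
    rw [integral_add (integrable_torusMeasure (continuousOn_eval_mul_prod_inv P hy))
      (integrable_torusMeasure (continuousOn_eval_mul_prod_inv Q hy)), hP, hQ]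

lemma continuous_det_vandermonde : Continuous fun x : Fin n → ℂ => (vandermonde x).det := by
  simp only [det_vandermonde]
  fun_prop

/-- The density `|Δ(x)|² / n!` of the eigenvalues of a Haar-distributed unitary `n × n` matrix with
respect to the uniform measure on the torus, where `Δ` is the Vandermonde determinant. -/
noncomputable def cueDensity (x : Fin n → ℂ) : NNReal := ‖(vandermonde x).det‖₊ ^ 2 / n.factorial

/-- The distribution of the eigenvalues of a Haar-distributed unitary `n × n` matrix (the circular
unitary ensemble), given by Weyl's integration formula. -/
noncomputable def cueMeasure (n : ℕ) : Measure (Fin n → ℂ) :=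
  (torusMeasure n).withDensity fun x => cueDensity x

lemma continuous_cueDensity : Continuous (cueDensity : (Fin n → ℂ) → NNReal) :=
  (continuous_det_vandermonde.nnnorm.pow 2).div_const _

instance : IsFiniteMeasure (cueMeasure n) := by
  refine isFiniteMeasure_withDensity ?_
  rw [lintegral_coe_eq_integral _ (integrable_torusMeasure
    (NNReal.continuous_coe.comp continuous_cueDensity).continuousOn)]
  exact ENNReal.ofReal_ne_top

lemma ae_cueMeasure_mem_unitTorus : ∀ᵐ x ∂cueMeasure n, x ∈ unitTorus n :=
  (withDensity_absolutelyContinuous _ _).ae_le (ae_mem_unitTorus n)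

lemma integrable_cueMeasure {E : Type*} [NormedAddCommGroup E] {f : (Fin n → ℂ) → E}
    (hf : ContinuousOn f (unitTorus n)) : Integrable f (cueMeasure n) := by
  rw [← Measure.restrict_eq_self_of_ae_mem ae_cueMeasure_mem_unitTorus]
  exact hf.integrableOn_compact (isCompact_unitTorus n)

lemma integral_cueMeasure (f : (Fin n → ℂ) → ℂ) :
    ∫ x, f x ∂cueMeasure n = (n.factorial : ℂ)⁻¹ *
      ∫ x, (vandermonde x).det * conj (vandermonde x).det * f x ∂torusMeasure n := by
  rw [cueMeasure, integral_withDensity_eq_integral_smul continuous_cueDensity.measurable,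
    ← integral_const_mul]
  refine integral_congr_ae (Eventually.of_forall fun x => ?_)
  simp only [cueDensity, NNReal.smul_def, Complex.real_smul, Complex.mul_conj,
    Complex.normSq_eq_norm_sq]
  push_cast
  ring

lemma eval_det_vandermonde_X (y : Fin n → ℂ) :
    MvPolynomial.eval y (vandermonde (MvPolynomial.X : Fin n → MvPolynomial (Fin n) ℂ)).det
      = (vandermonde y).det := by
  simp [det_vandermonde]

lemma conj_det_vandermonde (x : Fin n → ℂ) :
    conj (vandermonde x).det = (vandermonde fun i => conj (x i)).det := by
  simp [det_vandermonde]

lemma det_vandermonde_comp_perm (σ : Equiv.Perm (Fin n)) (y : Fin n → ℂ) :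
    (vandermonde (y ∘ σ)).det = (Equiv.Perm.sign σ : ℤ) * (vandermonde y).det := by
  rw [← det_permute]
  rfl

lemma eval_comp_perm {Q : MvPolynomial (Fin n) ℂ} (hQ : Q.IsSymmetric) (σ : Equiv.Perm (Fin n))
    (y : Fin n → ℂ) : MvPolynomial.eval (y ∘ σ) Q = MvPolynomial.eval y Q := by
  rw [← MvPolynomial.eval_rename, hQ σ]

/- Expanding Cauchy's determinant over permutations reduces to the multivariate Cauchy formula
`integral_eval_mul_prod_inv_one_sub`, and all `n!` permutations contribute equally. -/
theorem integral_cueMeasure_eval_mul_prod_inv_one_sub {Q : MvPolynomial (Fin n) ℂ}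
    (hQ : Q.IsSymmetric) {y : Fin n → ℂ} (hy : ∀ i, ‖y i‖ < 1) :
    (vandermonde y).det *
        ∫ x, MvPolynomial.eval x Q * ∏ i, ∏ j, (1 - y i * conj (x j))⁻¹ ∂cueMeasure n
      = (vandermonde y).det * MvPolynomial.eval y Q := by
  set V : MvPolynomial (Fin n) ℂ := (vandermonde MvPolynomial.X).det with hV
  let term (σ : Equiv.Perm (Fin n)) (x : Fin n → ℂ) : ℂ := (Equiv.Perm.sign σ : ℤ) *
    (MvPolynomial.eval x (V * Q) * ∏ j, (1 - (y ∘ σ) j * conj (x j))⁻¹)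
  have hexpand {x : Fin n → ℂ} (hx : x ∈ unitTorus n) :
      (vandermonde y).det * ((vandermonde x).det * conj (vandermonde x).det *
        (MvPolynomial.eval x Q * ∏ i, ∏ j, (1 - y i * conj (x j))⁻¹)) = ∑ σ, term σ x := by
    have hcauchy := det_inv_one_sub_mul y (fun j => conj (x j)) fun i j =>
      one_sub_mul_conj_ne_zero (hy i) (hx j)
    calc _ = (vandermonde x).det * MvPolynomial.eval x Q * ((vandermonde y).det *
          (vandermonde fun j => conj (x j)).det * ∏ i, ∏ j, (1 - y i * conj (x j))⁻¹) := by
          rw [conj_det_vandermonde]; ring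
      _ = ∑ σ, term σ x := by
          rw [← hcauchy, det_apply' (of fun i j => (1 - y i * conj (x j))⁻¹),
            Finset.mul_sum]
          refine Finset.sum_congr rfl fun σ _ => ?_
          simp only [term, map_mul, hV, eval_det_vandermonde_X, of_apply, Function.comp_apply]
          ring
  have hterm (σ : Equiv.Perm (Fin n)) : ∫ x, term σ x ∂torusMeasure n
      = (vandermonde y).det * MvPolynomial.eval y Q := by
    have hsign : ((Equiv.Perm.sign σ : ℤ) : ℂ) * (Equiv.Perm.sign σ : ℤ) = 1 := by
      rw [← Int.cast_mul, ← Units.val_mul, Int.units_mul_self, Units.val_one, Int.cast_one]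
    rw [integral_const_mul,
      integral_eval_mul_prod_inv_one_sub (y := y ∘ σ) _ fun i => hy (σ i), map_mul,
      eval_comp_perm hQ, hV, eval_det_vandermonde_X, det_vandermonde_comp_perm, mul_assoc,
      ← mul_assoc, hsign, one_mul]
  have hintegral : (vandermonde y).det * ∫ x, (vandermonde x).det * conj (vandermonde x).det *
      (MvPolynomial.eval x Q * ∏ i, ∏ j, (1 - y i * conj (x j))⁻¹) ∂torusMeasure n
        = n.factorial * ((vandermonde y).det * MvPolynomial.eval y Q) := by
    rw [← integral_const_mul, integral_congr_ae ((ae_mem_unitTorus n).mono fun x => hexpand),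
      integral_finsetSum _ fun σ _ => (integrable_torusMeasure
        (continuousOn_eval_mul_prod_inv (V * Q) fun i => hy (σ i))).const_mul _]
    simp [hterm, Fintype.card_perm]
  rw [integral_cueMeasure, mul_left_comm, hintegral, inv_mul_cancel_left₀]
  exact_mod_cast n.factorial_ne_zero

end ReproducingKernel

/-! ### Power sums -/

section PowerSum

variable {n : ℕ}

/-- The power sum `∑ᵢ xᵢ ^ (k + 1)`; the index is shifted because only positive powers occur. -/
def powerSum (x : Fin n → ℂ) (k : ℕ) : ℂ := ∑ i, x i ^ (k + 1)

/-- The product `p_ν(x)` of power sums, where the multi-index `ν` stands for the partition having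
`ν k` parts equal to `k + 1`. -/
def powerSumProd (ν : ℕ →₀ ℕ) (x : Fin n → ℂ) : ℂ := multiPow (powerSum x) ν

/-- The product `p_ν` of power sums as a polynomial in `n` variables. -/
noncomputable def powerSumPoly (n : ℕ) (ν : ℕ →₀ ℕ) : MvPolynomial (Fin n) ℂ :=
  multiPow (fun k => MvPolynomial.psum (Fin n) ℂ (k + 1)) ν

/-- The size `∑ₖ (k + 1) ν k` of the partition having `ν k` parts equal to `k + 1`. -/
noncomputable def weight (ν : ℕ →₀ ℕ) : ℕ := Finsupp.weight (fun k : ℕ => k + 1) ν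

/-- The order `z_ν = ∏ₖ (k + 1) ^ ν k * (ν k)!` of the centralizer of a permutation having `ν k`
cycles of length `k + 1`. -/
def centralizerCard (ν : ℕ →₀ ℕ) : ℕ := multiPow (fun k => k + 1) ν * multiFactorial ν

lemma eval_powerSumPoly (ν : ℕ →₀ ℕ) (x : Fin n → ℂ) :
    MvPolynomial.eval x (powerSumPoly n ν) = powerSumProd ν x := by
  rw [powerSumPoly, map_multiPow]
  simp only [MvPolynomial.psum, map_sum, map_pow, MvPolynomial.eval_X]
  rfl

lemma isSymmetric_powerSumPoly (ν : ℕ →₀ ℕ) : (powerSumPoly n ν).IsSymmetric := fun σ => by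
  rw [powerSumPoly, map_multiPow]
  simp only [MvPolynomial.rename_psum]

lemma isHomogeneous_powerSumPoly (ν : ℕ →₀ ℕ) : (powerSumPoly n ν).IsHomogeneous (weight ν) := by
  rw [weight, Finsupp.weight_apply]
  refine MvPolynomial.IsHomogeneous.prod _ _ _ fun k _ => ?_
  have hpsum : (MvPolynomial.psum (Fin n) ℂ (k + 1)).IsHomogeneous (k + 1) :=
    MvPolynomial.IsHomogeneous.sum _ _ _ fun i _ => MvPolynomial.isHomogeneous_X_pow i (k + 1)
  simpa only [smul_eq_mul, mul_comm] using hpsum.pow (ν k)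

lemma continuous_powerSumProd (ν : ℕ →₀ ℕ) :
    Continuous (powerSumProd ν : (Fin n → ℂ) → ℂ) := by
  simpa only [eval_powerSumPoly] using MvPolynomial.continuous_eval (powerSumPoly n ν)

lemma norm_powerSum_le {x : Fin n → ℂ} (hx : x ∈ unitTorus n) (k : ℕ) :
    ‖powerSum x k‖ ≤ ‖(n : ℂ)‖ := by
  refine (norm_sum_le _ _).trans ?_
  simp [hx _]

lemma norm_powerSumProd_le (ν : ℕ →₀ ℕ) {x : Fin n → ℂ} (hx : x ∈ unitTorus n) :
    ‖powerSumProd ν x‖ ≤ ‖multiPow (fun _ => (n : ℂ)) ν‖ :=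
  norm_multiPow_le (norm_powerSum_le hx) ν

lemma lt_weight {ν : ℕ →₀ ℕ} {k : ℕ} (hk : k ∈ ν.support) : k < weight ν :=
  Finsupp.le_weight_of_ne_zero' (fun k : ℕ => k + 1) (Finsupp.mem_support_iff.1 hk)

lemma finite_weight_lt (d : ℕ) : {ν : ℕ →₀ ℕ | weight ν < d}.Finite := by
  refine ((Finset.range d).finsupp fun _ => Finset.range d).finite_toSet.subset fun ν hν => ?_
  refine Finset.mem_finsupp_iff.2 ⟨fun k hk => ?_, fun k _ => ?_⟩
  · exact Finset.mem_range.2 ((lt_weight hk).trans hν)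
  · exact Finset.mem_range.2 ((Finsupp.le_weight _ k.succ_ne_zero ν).trans_lt hν)

lemma centralizerCard_pos (ν : ℕ →₀ ℕ) : 0 < centralizerCard ν :=
  mul_pos (Finset.prod_pos fun _ _ => by positivity) (multiFactorial_pos ν)

lemma centralizerCard_ne_zero (ν : ℕ →₀ ℕ) : (centralizerCard ν : ℂ) ≠ 0 :=
  Nat.cast_ne_zero.2 (centralizerCard_pos ν).ne'

lemma multiPow_div_centralizerCard (s t : ℕ → ℂ) (ν : ℕ →₀ ℕ) :
    multiPow s ν * multiPow t ν / centralizerCard ν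
      = multiPow (fun k => s k * t k / ((k : ℂ) + 1)) ν / multiFactorial ν := by
  have hcast : ((multiPow (fun k => k + 1) ν : ℕ) : ℂ) = multiPow (fun k : ℕ => (k : ℂ) + 1) ν := by
    simp [multiPow, Finsupp.prod]
  rw [centralizerCard, Nat.cast_mul, hcast, ← div_div]
  simp [multiPow, Finsupp.prod, div_pow, mul_pow, Finset.prod_div_distrib, Finset.prod_mul_distrib]

end PowerSum

/-! ### Orthogonality of power sums of different weights -/

section Orthogonality

variable {n : ℕ}

lemma integral_multiPow_mul_conj_multiPow (α β : Fin n →₀ ℕ) :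
    ∫ x, multiPow x α * conj (multiPow x β) ∂torusMeasure n = if α = β then 1 else 0 := by
  have hprod (x : Fin n → ℂ) :
      multiPow x α * conj (multiPow x β) = ∏ i, x i ^ α i * conj (x i) ^ β i := by
    simp [multiPow_of_support_subset x (Finset.subset_univ _), Finset.prod_mul_distrib]
  simp_rw [hprod, integral_torusMeasure_prod fun i u => u ^ α i * conj u ^ β i,
    integral_pow_mul_conj_pow]
  simp [Finset.prod_ite_zero, DFunLike.ext_iff]

theorem integral_eval_mul_conj_eval_of_isHomogeneous {P Q : MvPolynomial (Fin n) ℂ} {a b : ℕ}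
    (hP : P.IsHomogeneous a) (hQ : Q.IsHomogeneous b) (hab : a ≠ b) :
    ∫ x, MvPolynomial.eval x P * conj (MvPolynomial.eval x Q) ∂torusMeasure n = 0 := by
  have hexpand (x : Fin n → ℂ) : MvPolynomial.eval x P * conj (MvPolynomial.eval x Q)
      = ∑ α ∈ P.support, ∑ β ∈ Q.support,
          P.coeff α * conj (Q.coeff β) * (multiPow x α * conj (multiPow x β)) := by
    rw [MvPolynomial.eval_eq, MvPolynomial.eval_eq, map_sum, Finset.sum_mul_sum]
    refine Finset.sum_congr rfl fun α _ => Finset.sum_congr rfl fun β _ => ?_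
    rw [map_mul, mul_mul_mul_comm]
    rfl
  have hint {f : (Fin n → ℂ) → ℂ} (hf : Continuous f) : Integrable f (torusMeasure n) :=
    integrable_torusMeasure hf.continuousOn
  simp_rw [hexpand]
  rw [integral_finsetSum _ fun α _ => hint (by fun_prop)]
  refine Finset.sum_eq_zero fun α hα => ?_
  rw [integral_finsetSum _ fun β _ => hint (by fun_prop)]
  refine Finset.sum_eq_zero fun β hβ => ?_
  have hne : α ≠ β := by
    rintro rfl
    exact hab ((hP (MvPolynomial.mem_support_iff.1 hα)).symm.trans
      (hQ (MvPolynomial.mem_support_iff.1 hβ)))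
  rw [integral_const_mul, integral_multiPow_mul_conj_multiPow, if_neg hne, mul_zero]

lemma exists_isHomogeneous_det_vandermonde_X (n : ℕ) : ∃ N,
    (vandermonde (MvPolynomial.X : Fin n → MvPolynomial (Fin n) ℂ)).det.IsHomogeneous N := by
  rw [det_vandermonde]
  refine ⟨∑ i : Fin n, ∑ _j ∈ Finset.Ioi i, 1, MvPolynomial.IsHomogeneous.prod _ _ _ fun i _ =>
    MvPolynomial.IsHomogeneous.prod _ _ _ fun j _ => ?_⟩
  exact (MvPolynomial.isHomogeneous_X _ _).sub (MvPolynomial.isHomogeneous_X _ _)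

/-- The Gram matrix of the products of power sums in `L²` of the circular unitary ensemble. -/
noncomputable def powerSumGram (n : ℕ) (μ ν : ℕ →₀ ℕ) : ℂ :=
  ∫ x, powerSumProd μ x * conj (powerSumProd ν x) ∂cueMeasure n

theorem powerSumGram_eq_zero_of_weight_ne {μ ν : ℕ →₀ ℕ} (h : weight μ ≠ weight ν) :
    powerSumGram n μ ν = 0 := by
  obtain ⟨N, hN⟩ := exists_isHomogeneous_det_vandermonde_X n
  have horth := integral_eval_mul_conj_eval_of_isHomogeneous
    (hN.mul (isHomogeneous_powerSumPoly μ)) (hN.mul (isHomogeneous_powerSumPoly ν)) (by omega)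
  simp only [map_mul, eval_det_vandermonde_X, eval_powerSumPoly] at horth
  rw [powerSumGram, integral_cueMeasure, mul_eq_zero]
  right
  rw [← horth]
  refine integral_congr_ae (Eventually.of_forall fun x => ?_)
  ring

/-! ### The Gram matrix reproduces the products of power sums -/

lemma summable_norm_powerSum_mul_div {y : Fin n → ℂ} (hy : ∀ i, ‖y i‖ < 1) (c : ℂ) :
    Summable fun k => ‖powerSum y k * c / ((k : ℂ) + 1)‖ := by
  have hgeom : Summable fun k => (∑ i, ‖y i‖ ^ k) * ‖c‖ :=
    (summable_sum fun i _ =>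
      summable_geometric_of_lt_one (norm_nonneg _) (hy i)).mul_right _
  refine hgeom.of_nonneg_of_le (fun _ => norm_nonneg _) fun k => ?_
  have hk : (1 : ℝ) ≤ ‖(k : ℂ) + 1‖ := by
    rw [← Nat.cast_succ, Complex.norm_natCast]
    exact_mod_cast k.succ_pos
  have hpow : ‖powerSum y k‖ ≤ ∑ i, ‖y i‖ ^ k :=
    (norm_sum_le _ _).trans <| Finset.sum_le_sum fun i _ => by
      rw [norm_pow]
      exact pow_le_pow_of_le_one (norm_nonneg _) (hy i).le k.le_succ
  rw [norm_div, norm_mul]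
  exact (div_le_self (by positivity) hk).trans (by gcongr)

/- The exponential series applied to
`∑ᵢⱼ -log (1 - yᵢ x̄ⱼ) = ∑ₖ p_{k+1}(y) conj (p_{k+1}(x)) / (k + 1)`. -/
theorem hasSum_powerSumProd_mul_conj {x y : Fin n → ℂ} (hx : x ∈ unitTorus n)
    (hy : ∀ i, ‖y i‖ < 1) :
    HasSum (fun ν : ℕ →₀ ℕ => powerSumProd ν y * conj (powerSumProd ν x) / centralizerCard ν)
      (∏ i, ∏ j, (1 - y i * conj (x j))⁻¹) := by
  set a : ℕ → ℂ := fun k => powerSum y k * conj (powerSum x k) / ((k : ℂ) + 1) with ha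
  have hsum : Summable fun k => ‖a k‖ := by
    refine .of_nonneg_of_le (fun _ => norm_nonneg _) (fun k => ?_)
      (summable_norm_powerSum_mul_div hy n)
    simp only [ha, norm_div, norm_mul, RCLike.norm_conj]
    gcongr
    exact norm_powerSum_le hx k
  have hlog : HasSum a (∑ i, ∑ j, -Complex.log (1 - y i * conj (x j))) := by
    have hexpand : a = fun k => ∑ i, ∑ j, (y i * conj (x j)) ^ (k + 1) / ((k + 1 : ℕ) : ℂ) := by
      ext k
      simp [ha, powerSum, Finset.sum_mul_sum, Finset.sum_div, mul_pow]
    rw [hexpand]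
    refine hasSum_sum fun i _ => hasSum_sum fun j _ => ?_
    have hlt : ‖y i * conj (x j)‖ < 1 := by
      rw [norm_mul, RCLike.norm_conj, hx j, mul_one]; exact hy i
    simpa using (hasSum_nat_add_iff' 1).2 (Complex.hasSum_taylorSeries_neg_log hlt)
  have hexp : Complex.exp (∑' k, a k) = ∏ i, ∏ j, (1 - y i * conj (x j))⁻¹ := by
    simp only [hlog.tsum_eq, Complex.exp_sum, Complex.exp_neg,
      Complex.exp_log (one_sub_mul_conj_ne_zero (hy _) (hx _))]
  rw [← hexp]
  convert hasSum_multiPow_div_multiFactorial hsum using 2 with ν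
  rw [ha, ← multiPow_div_centralizerCard, ← map_multiPow]
  rfl

lemma hasSum_powerSumGram_mul (μ : ℕ →₀ ℕ) {y : Fin n → ℂ} (hy : ∀ i, ‖y i‖ < 1) :
    HasSum (fun ν : ℕ →₀ ℕ => powerSumGram n μ ν / centralizerCard ν * powerSumProd ν y)
      (∫ x, powerSumProd μ x * ∏ i, ∏ j, (1 - y i * conj (x j))⁻¹ ∂cueMeasure n) := by
  have hcont (ν : ℕ →₀ ℕ) : Continuous (powerSumProd ν : (Fin n → ℂ) → ℂ) :=
    continuous_powerSumProd ν
  have hbound := (summable_norm_multiPow_div_multiFactorial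
    (summable_norm_powerSum_mul_div hy n)).mul_left ‖multiPow (fun _ => (n : ℂ)) μ‖
  have h := hasSum_integral_of_ae_mem_unitTorus ae_cueMeasure_mem_unitTorus
    (F := fun ν x => powerSumProd μ x *
      (powerSumProd ν y * conj (powerSumProd ν x) / centralizerCard ν)) hbound
    (fun ν => by fun_prop) (fun ν x hx => ?_)
    (fun x hx => (hasSum_powerSumProd_mul_conj hx hy).mul_left _)
  · convert h using 2 with ν
    rw [powerSumGram, div_mul_eq_mul_div, mul_div_assoc, mul_comm, ← integral_const_mul]
    refine integral_congr_ae (Eventually.of_forall fun x => ?_)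
    ring
  · rw [norm_mul, ← multiPow_div_centralizerCard]
    simp only [norm_div, norm_mul, RCLike.norm_conj]
    gcongr
    · exact norm_powerSumProd_le μ hx
    · exact le_rfl
    · exact norm_powerSumProd_le ν hx

theorem powerSumPoly_eq_sum_powerSumGram (μ : ℕ →₀ ℕ) {T : Finset (ℕ →₀ ℕ)}
    (hT : ∀ ν, weight ν = weight μ → ν ∈ T) :
    powerSumPoly n μ
      = ∑ ν ∈ T, MvPolynomial.C (powerSumGram n μ ν / centralizerCard ν) * powerSumPoly n ν := by
  have hVX : (vandermonde (MvPolynomial.X : Fin n → MvPolynomial (Fin n) ℂ)).det ≠ 0 :=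
    det_vandermonde_ne_zero_iff.2 MvPolynomial.X_injective
  refine mul_left_cancel₀ hVX (MvPolynomial.funext_set (fun _ => Metric.ball (0 : ℂ) 1)
    (fun _ => infinite_of_mem_nhds 0 (Metric.ball_mem_nhds _ one_pos)) fun y hy => ?_)
  have hy' (i : Fin n) : ‖y i‖ < 1 := by simpa using hy i (Set.mem_univ _)
  have hfinite : HasSum
      (fun ν : ℕ →₀ ℕ => powerSumGram n μ ν / centralizerCard ν * powerSumProd ν y)
      (∑ ν ∈ T, powerSumGram n μ ν / centralizerCard ν * powerSumProd ν y) :=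
    hasSum_sum_of_ne_finset_zero fun ν hν => by
      rw [powerSumGram_eq_zero_of_weight_ne fun h => hν (hT ν h.symm), zero_div, zero_mul]
  have hrepro := integral_cueMeasure_eval_mul_prod_inv_one_sub (isSymmetric_powerSumPoly μ) hy'
  simp only [eval_powerSumPoly, (hasSum_powerSumGram_mul μ hy').unique hfinite] at hrepro
  simpa only [map_mul, map_sum, eval_det_vandermonde_X, eval_powerSumPoly, MvPolynomial.eval_C]
    using hrepro.symm

lemma powerSumProd_eq_sum_powerSumGram (μ : ℕ →₀ ℕ) {T : Finset (ℕ →₀ ℕ)}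
    (hT : ∀ ν, weight ν = weight μ → ν ∈ T) (y : Fin n → ℂ) :
    powerSumProd μ y = ∑ ν ∈ T, powerSumGram n μ ν / centralizerCard ν * powerSumProd ν y := by
  simpa only [map_mul, map_sum, eval_powerSumPoly, MvPolynomial.eval_C]
    using congrArg (MvPolynomial.eval y) (powerSumPoly_eq_sum_powerSumGram μ hT)

end Orthogonality

/-! ### Orthogonality of power sums and Bessel's inequality -/

section DiaconisShahshahani

variable {m n : ℕ}

lemma powerSum_append (x : Fin m → ℂ) (y : Fin n → ℂ) (k : ℕ) :
    powerSum (Fin.append x y) k = powerSum x k + powerSum y k := by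
  simp [powerSum, Fin.sum_univ_add]

/- Take for `y` all `(d + 1)`-st roots of a suitable number. -/
lemma exists_powerSum_eq_single (d : ℕ) (w : ℂ) :
    ∃ y : Fin (d + 1) → ℂ, (∀ k < d, powerSum y k = 0) ∧ powerSum y d = w := by
  obtain ⟨c, hc⟩ := IsAlgClosed.exists_pow_nat_eq (w / (d + 1 : ℕ)) d.succ_pos
  have hω := Complex.isPrimitiveRoot_exp (d + 1) d.succ_ne_zero
  set ω := Complex.exp (2 * Real.pi * Complex.I / (d + 1 : ℕ))
  have hgeom (k : ℕ) : powerSum (fun j : Fin (d + 1) => c * ω ^ (j : ℕ)) k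
      = c ^ (k + 1) * ∑ j ∈ Finset.range (d + 1), (ω ^ (k + 1)) ^ j := by
    rw [powerSum, Finset.mul_sum, Finset.sum_range fun j => c ^ (k + 1) * (ω ^ (k + 1)) ^ j]
    refine Finset.sum_congr rfl fun j _ => ?_
    rw [mul_pow, ← pow_mul, ← pow_mul, mul_comm (k + 1)]
  refine ⟨fun j => c * ω ^ (j : ℕ), fun k hk => ?_, ?_⟩
  · have hne : ω ^ (k + 1) ≠ 1 := hω.pow_ne_one_of_pos_of_lt k.succ_ne_zero (by omega)
    have hsum := mul_geom_sum (ω ^ (k + 1)) (d + 1)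
    rw [← pow_mul, mul_comm (k + 1), pow_mul, hω.pow_eq_one, one_pow, sub_self] at hsum
    rw [hgeom, (mul_eq_zero.1 hsum).resolve_left (sub_ne_zero.2 hne), mul_zero]
  · have hd : ((d + 1 : ℕ) : ℂ) ≠ 0 := Nat.cast_ne_zero.2 d.succ_ne_zero
    rw [hgeom, hω.pow_eq_one, hc]
    simp only [one_pow, Finset.sum_const, Finset.card_range, nsmul_eq_mul, mul_one]
    exact div_mul_cancel₀ w hd

lemma eventually_exists_powerSum_eq (d : ℕ) :
    ∀ᶠ n in atTop, ∀ s : ℕ → ℂ, ∃ y : Fin n → ℂ, ∀ k < d, powerSum y k = s k := by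
  induction d with
  | zero => exact Eventually.of_forall fun n s => ⟨0, fun k hk => absurd hk k.not_lt_zero⟩
  | succ d ih =>
    filter_upwards [(tendsto_sub_atTop_nat (d + 1)).eventually ih, eventually_ge_atTop (d + 1)]
      with n hn hdn s
    obtain ⟨m, rfl⟩ := Nat.exists_eq_add_of_le' hdn
    rw [Nat.add_sub_cancel] at hn
    obtain ⟨y, hy⟩ := hn s
    obtain ⟨w, hw, hwd⟩ := exists_powerSum_eq_single d (s d - powerSum y d)
    refine ⟨Fin.append y w, fun k hk => ?_⟩
    rw [powerSum_append]
    rcases Nat.lt_succ_iff_lt_or_eq.1 hk with h | rfl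
    · rw [hy k h, hw k h, add_zero]
    · rw [hwd, add_sub_cancel]

/- When `n` is large, the power sums of index below `d` take arbitrary values, so the expansion
`powerSumProd_eq_sum_powerSumGram` is an identity between polynomials in these values, and its
coefficients can be compared. -/
theorem eventually_powerSumGram_eq_ite (d : ℕ) : ∀ᶠ n in atTop, ∀ μ ν, weight ν < d →
    powerSumGram n μ ν = if μ = ν then (centralizerCard ν : ℂ) else 0 := by
  filter_upwards [eventually_exists_powerSum_eq d] with n hn μ ν hν
  by_cases hw : weight μ = weight ν
  swap
  · rw [powerSumGram_eq_zero_of_weight_ne hw, if_neg fun h => hw (congrArg weight h)]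
  have hfin : {η : ℕ →₀ ℕ | weight η = weight μ}.Finite :=
    (finite_weight_lt d).subset fun η hη => by simp_all
  have hmem {η : ℕ →₀ ℕ} : η ∈ hfin.toFinset ↔ weight η = weight μ := by simp
  have hpoly : MvPolynomial.monomial μ (1 : ℂ) = ∑ η ∈ hfin.toFinset,
      MvPolynomial.monomial η (powerSumGram n μ η / centralizerCard η) := by
    refine MvPolynomial.funext fun s => ?_
    obtain ⟨y, hy⟩ := hn s
    have hprod {η : ℕ →₀ ℕ} (hη : weight η = weight μ) :
        η.prod (fun k e => s k ^ e) = powerSumProd η y :=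
      Finset.prod_congr rfl fun k hk => by
        simp only [hy k ((lt_weight hk).trans (by omega))]
    rw [map_sum, MvPolynomial.eval_monomial, one_mul, hprod rfl,
      powerSumProd_eq_sum_powerSumGram μ (fun η => hmem.2) y]
    exact Finset.sum_congr rfl fun η hη => by
      rw [MvPolynomial.eval_monomial, hprod (hmem.1 hη)]
  have hcoeff := congrArg (MvPolynomial.coeff ν) hpoly
  classical
  simp only [MvPolynomial.coeff_sum, MvPolynomial.coeff_monomial] at hcoeff
  rw [Finset.sum_ite_eq', if_pos (hmem.2 hw.symm), eq_div_iff (centralizerCard_ne_zero ν),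
    ite_mul, one_mul, zero_mul] at hcoeff
  exact hcoeff.symm

end DiaconisShahshahani

section Bessel

variable {n : ℕ}

lemma integral_sum_mul_conj_sum_cueMeasure (S T : Finset (ℕ →₀ ℕ)) (Q R : (ℕ →₀ ℕ) → ℂ) :
    ∫ x, (∑ μ ∈ S, Q μ * powerSumProd μ x) * conj (∑ ν ∈ T, R ν * powerSumProd ν x) ∂cueMeasure n
      = ∑ ν ∈ T, conj (R ν) * ∑ μ ∈ S, Q μ * powerSumGram n μ ν := by
  have hcont (ν : ℕ →₀ ℕ) : Continuous (powerSumProd ν : (Fin n → ℂ) → ℂ) :=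
    continuous_powerSumProd ν
  have hint {f : (Fin n → ℂ) → ℂ} (hf : Continuous f) : Integrable f (cueMeasure n) :=
    integrable_cueMeasure hf.continuousOn
  have hexpand (x : Fin n → ℂ) :
      (∑ μ ∈ S, Q μ * powerSumProd μ x) * conj (∑ ν ∈ T, R ν * powerSumProd ν x)
        = ∑ ν ∈ T, ∑ μ ∈ S, conj (R ν) * Q μ * (powerSumProd μ x * conj (powerSumProd ν x)) := by
    rw [Finset.sum_comm, map_sum, Finset.sum_mul_sum]
    refine Finset.sum_congr rfl fun μ _ => Finset.sum_congr rfl fun ν _ => ?_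
    rw [map_mul]
    ring
  simp_rw [hexpand]
  rw [integral_finsetSum _ fun ν _ => hint (by fun_prop)]
  refine Finset.sum_congr rfl fun ν _ => ?_
  rw [integral_finsetSum _ fun μ _ => hint (by fun_prop), Finset.mul_sum]
  refine Finset.sum_congr rfl fun μ _ => ?_
  rw [integral_const_mul, powerSumGram, mul_assoc]

lemma sum_powerSumProd_eq (S T : Finset (ℕ →₀ ℕ)) (Q : (ℕ →₀ ℕ) → ℂ)
    (hT : ∀ μ ∈ S, ∀ ν, weight ν = weight μ → ν ∈ T) (x : Fin n → ℂ) :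
    ∑ μ ∈ S, Q μ * powerSumProd μ x
      = ∑ ν ∈ T, (∑ μ ∈ S, Q μ * powerSumGram n μ ν) / centralizerCard ν * powerSumProd ν x := by
  simp only [Finset.sum_div, Finset.sum_mul]
  rw [Finset.sum_comm]
  refine Finset.sum_congr rfl fun μ hμ => ?_
  rw [powerSumProd_eq_sum_powerSumGram μ (hT μ hμ), Finset.mul_sum]
  exact Finset.sum_congr rfl fun ν _ => by ring

lemma ofReal_integral_norm_sq_cueMeasure (f : (Fin n → ℂ) → ℂ) :
    ((∫ x, ‖f x‖ ^ 2 ∂cueMeasure n : ℝ) : ℂ) = ∫ x, f x * conj (f x) ∂cueMeasure n := by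
  simp only [Complex.mul_conj', ← Complex.ofReal_pow, integral_complex_ofReal]

/- With `q ν` the inner product of the sum with `p_ν`, the squared norm of the sum equals both
`∑ conj (Q ν) q ν` and, by reproduction, `∑ |q ν|² / z_ν`, so AM-GM applies. -/
theorem integral_norm_sq_sum_powerSumProd_le (S : Finset (ℕ →₀ ℕ)) (Q : (ℕ →₀ ℕ) → ℂ) :
    ∫ x, ‖∑ ν ∈ S, Q ν * powerSumProd ν x‖ ^ 2 ∂cueMeasure n
      ≤ ∑ ν ∈ S, ‖Q ν‖ ^ 2 * centralizerCard ν := by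
  set T := (finite_weight_lt (S.sup weight + 1)).toFinset with hTdef
  have hT (μ : ℕ →₀ ℕ) (hμ : μ ∈ S) (ν : ℕ →₀ ℕ) (hν : weight ν = weight μ) : ν ∈ T := by
    simpa [hTdef, hν] using Nat.lt_succ_of_le (Finset.le_sup (f := weight) hμ)
  set q : (ℕ →₀ ℕ) → ℂ := fun ν => ∑ μ ∈ S, Q μ * powerSumGram n μ ν
  set X := ∫ x, ‖∑ ν ∈ S, Q ν * powerSumProd ν x‖ ^ 2 ∂cueMeasure n
  have hXQ : (X : ℂ) = ∑ ν ∈ S, conj (Q ν) * q ν := by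
    rw [ofReal_integral_norm_sq_cueMeasure, integral_sum_mul_conj_sum_cueMeasure]
  have hXq : X = ∑ ν ∈ T, (centralizerCard ν : ℝ)⁻¹ * ‖q ν‖ ^ 2 := by
    refine Complex.ofReal_injective ?_
    calc (X : ℂ) = ∫ x, (∑ ν ∈ S, Q ν * powerSumProd ν x) *
          conj (∑ ν ∈ T, q ν / centralizerCard ν * powerSumProd ν x) ∂cueMeasure n := by
          simp only [X, ofReal_integral_norm_sq_cueMeasure, ← sum_powerSumProd_eq S T Q hT, q]
      _ = ∑ ν ∈ T, conj (q ν / centralizerCard ν) * q ν :=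
          integral_sum_mul_conj_sum_cueMeasure S T Q _
      _ = _ := by
          push_cast
          refine Finset.sum_congr rfl fun ν _ => ?_
          rw [map_div₀, Complex.conj_natCast, div_mul_eq_mul_div, Complex.conj_mul', div_eq_inv_mul]
  have hamgm : ∀ ν, 2 * (conj (Q ν) * q ν).re
      ≤ ‖Q ν‖ ^ 2 * centralizerCard ν + (centralizerCard ν : ℝ)⁻¹ * ‖q ν‖ ^ 2 := fun ν => by
    have hpos : (0 : ℝ) < centralizerCard ν := Nat.cast_pos.2 (centralizerCard_pos ν)
    have hre : (conj (Q ν) * q ν).re ≤ ‖Q ν‖ * ‖q ν‖ := by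
      simpa using Complex.re_le_norm (conj (Q ν) * q ν)
    linarith [two_mul_le_add_mul_sq (a := ‖Q ν‖) (b := ‖q ν‖) hpos]
  have hST : ∑ ν ∈ S, (centralizerCard ν : ℝ)⁻¹ * ‖q ν‖ ^ 2 ≤ X :=
    hXq ▸ Finset.sum_le_sum_of_subset_of_nonneg (fun μ hμ => hT μ hμ μ rfl)
      fun _ _ _ => by positivity
  have hsum := Finset.sum_le_sum fun ν (_ : ν ∈ S) => hamgm ν
  rw [← Finset.mul_sum, ← Complex.re_sum, ← hXQ, Complex.ofReal_re, Finset.sum_add_distrib] at hsum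
  linarith

end Bessel

/-! ### Exponentials of quadratic forms in the power sums -/

section QuadExp

variable {ι : Type*}

/-- The exponent `ν` for which `s ^ ν = ∏ₚ (s p.1 * s p.2) ^ η p`. -/
noncomputable def pairDegree (η : ι × ι →₀ ℕ) : ι →₀ ℕ :=
  η.mapDomain Prod.fst + η.mapDomain Prod.snd

/-- The Gaussian `exp (-(1/2) ∑ A k l * s k * s l)` of a quadratic form in infinitely many
variables. -/
noncomputable def quadExp (A : ι → ι → ℂ) (s : ι → ℂ) : ℂ :=
  Complex.exp (∑' p : ι × ι, -(1 / 2) * A p.1 p.2 * (s p.1 * s p.2))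

/-- The coefficient of the monomial `s ^ ν` in the power series expansion of `quadExp A s`. -/
noncomputable def quadExpCoeff (A : ι → ι → ℂ) (ν : ι →₀ ℕ) : ℂ :=
  ∑' η : {η : ι × ι →₀ ℕ // pairDegree η = ν},
    multiPow (fun p => -(1 / 2) * A p.1 p.2) η.1 / multiFactorial η.1

lemma multiPow_pairDegree {M : Type*} [CommMonoid M] (s : ι → M) (η : ι × ι →₀ ℕ) :
    multiPow s (pairDegree η) = multiPow (fun p => s p.1 * s p.2) η := by
  have hadd : multiPow s (η.mapDomain Prod.fst + η.mapDomain Prod.snd)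
      = multiPow s (η.mapDomain Prod.fst) * multiPow s (η.mapDomain Prod.snd) :=
    Finsupp.prod_add_index' (fun _ => pow_zero _) fun _ _ _ => pow_add _ _ _
  rw [pairDegree, hadd, multiPow_mapDomain, multiPow_mapDomain, multiPow_mul]

lemma multiPow_quadForm_div (A : ι → ι → ℂ) (s : ι → ℂ) (η : ι × ι →₀ ℕ) :
    multiPow (fun p => -(1 / 2) * A p.1 p.2 * (s p.1 * s p.2)) η / multiFactorial η
      = multiPow (fun p => -(1 / 2) * A p.1 p.2) η / multiFactorial η
        * multiPow s (pairDegree η) := by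
  rw [multiPow_mul (fun p : ι × ι => -(1 / 2) * A p.1 p.2), multiPow_pairDegree, mul_div_right_comm]

lemma quadExpCoeff_mul (c : ι → ℂ) (A : ι → ι → ℂ) (ν : ι →₀ ℕ) :
    quadExpCoeff (fun k l => c k * c l * A k l) ν = quadExpCoeff A ν * multiPow c ν := by
  rw [quadExpCoeff, quadExpCoeff, ← tsum_mul_right]
  refine tsum_congr fun η => ?_
  have hterm : multiPow (fun p => -(1 / 2) * (c p.1 * c p.2 * A p.1 p.2)) η.1
      = multiPow (fun p => -(1 / 2) * A p.1 p.2) η.1 * multiPow c ν := by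
    rw [show multiPow c ν = multiPow (fun p => c p.1 * c p.2) η.1 by
      rw [← multiPow_pairDegree, η.2], ← multiPow_mul]
    exact congrArg (multiPow · η.1) (funext fun p => by ring)
  rw [hterm, mul_div_right_comm]

section Restriction

variable {κ : Type*} {f : κ → ι}

lemma pairDegree_mapDomain (f : κ → ι) (η : κ × κ →₀ ℕ) :
    pairDegree (η.mapDomain (Prod.map f f)) = (pairDegree η).mapDomain f := by
  simp only [pairDegree, Finsupp.mapDomain_add, ← Finsupp.mapDomain_comp]
  rfl

lemma support_subset_range_of_pairDegree_eq {ν : κ →₀ ℕ} {η : ι × ι →₀ ℕ}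
    (h : pairDegree η = ν.mapDomain f) : (η.support : Set (ι × ι)) ⊆ Set.range (Prod.map f f) := by
  classical
  set s : ι → ℕ := (Set.range f).indicator 1
  have hprod : multiPow (fun p => s p.1 * s p.2) η = 1 := by
    rw [← multiPow_pairDegree, h, multiPow_mapDomain]
    simp [s, multiPow]
  intro p hp
  have hne : s p.1 * s p.2 ≠ 0 := fun h0 => by
    refine zero_ne_one ((Finset.prod_eq_zero hp ?_).symm.trans hprod)
    simp only [h0, zero_pow (Finsupp.mem_support_iff.1 hp)]
  rw [Set.range_prodMap]
  exact ⟨Set.mem_of_indicator_ne_zero (left_ne_zero_of_mul hne),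
    Set.mem_of_indicator_ne_zero (right_ne_zero_of_mul hne)⟩

lemma quadExpCoeff_comp (hf : Function.Injective f) (A : ι → ι → ℂ) (ν : κ →₀ ℕ) :
    quadExpCoeff (fun k l => A (f k) (f l)) ν = quadExpCoeff A (ν.mapDomain f) := by
  have hff : Function.Injective (Prod.map f f) := hf.prodMap hf
  let e (η : {η : κ × κ →₀ ℕ // pairDegree η = ν}) :
      {η : ι × ι →₀ ℕ // pairDegree η = ν.mapDomain f} :=
    ⟨η.1.mapDomain (Prod.map f f), by rw [pairDegree_mapDomain, η.2]⟩
  have he : Function.Bijective e := by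
    refine ⟨fun η η' h => Subtype.ext (Finsupp.mapDomain_injective hff (Subtype.ext_iff.1 h)),
      fun η => ?_⟩
    have hη := Finsupp.mapDomain_comapDomain _ hff η.1 (support_subset_range_of_pairDegree_eq η.2)
    refine ⟨⟨η.1.comapDomain _ hff.injOn, Finsupp.mapDomain_injective hf ?_⟩, Subtype.ext hη⟩
    rw [← pairDegree_mapDomain, hη, η.2]
  rw [quadExpCoeff, quadExpCoeff, ← (Equiv.ofBijective e he).tsum_eq]
  refine tsum_congr fun η => ?_
  simp only [Equiv.ofBijective_apply, e, multiPow_mapDomain, multiFactorial_mapDomain hff]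
  rfl

end Restriction

variable {A : ι → ι → ℂ} (hA : Summable fun p : ι × ι => ‖A p.1 p.2‖)
include hA

lemma summable_norm_quadForm {s : ι → ℂ} {R : ℝ} (hs : ∀ k, ‖s k‖ ≤ R) :
    Summable fun p : ι × ι => ‖-(1 / 2) * A p.1 p.2 * (s p.1 * s p.2)‖ := by
  refine (hA.mul_right (1 / 2 * (R * R))).of_nonneg_of_le (fun _ => norm_nonneg _) fun p => ?_
  have hR : 0 ≤ R := (norm_nonneg _).trans (hs p.1)
  calc ‖-(1 / 2) * A p.1 p.2 * (s p.1 * s p.2)‖ = ‖A p.1 p.2‖ * (1 / 2 * (‖s p.1‖ * ‖s p.2‖)) := by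
        simp only [norm_mul, norm_neg, norm_div, norm_one, RCLike.norm_ofNat]
        ring
    _ ≤ ‖A p.1 p.2‖ * (1 / 2 * (R * R)) := by
        gcongr <;> exact hs _

lemma summable_norm_quadExp_term {s : ι → ℂ} {R : ℝ} (hs : ∀ k, ‖s k‖ ≤ R) :
    Summable fun η : ι × ι →₀ ℕ => ‖multiPow (fun p => -(1 / 2) * A p.1 p.2) η / multiFactorial η
      * multiPow s (pairDegree η)‖ := by
  simpa only [multiPow_quadForm_div]
    using summable_norm_multiPow_div_multiFactorial (summable_norm_quadForm hA hs)

lemma hasSum_quadExp_term {s : ι → ℂ} {R : ℝ} (hs : ∀ k, ‖s k‖ ≤ R) :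
    HasSum (fun η : ι × ι →₀ ℕ => multiPow (fun p => -(1 / 2) * A p.1 p.2) η / multiFactorial η
      * multiPow s (pairDegree η)) (quadExp A s) := by
  simpa only [multiPow_quadForm_div, quadExp]
    using hasSum_multiPow_div_multiFactorial (summable_norm_quadForm hA hs)

lemma hasSum_quadExpCoeff_mul (s : ι → ℂ) (ν : ι →₀ ℕ) :
    HasSum (fun η : {η : ι × ι →₀ ℕ // pairDegree η = ν} =>
      multiPow (fun p => -(1 / 2) * A p.1 p.2) η.1 / multiFactorial η.1
        * multiPow s (pairDegree η.1)) (quadExpCoeff A ν * multiPow s ν) := by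
  have hsum := (summable_norm_quadExp_term hA (s := fun _ => 1) (R := 1) (by simp)).of_norm
  simp only [multiPow_one, mul_one] at hsum
  refine ((hsum.subtype {η | pairDegree η = ν}).hasSum.mul_right (multiPow s ν)).congr_fun ?_
  exact fun η => by rw [η.2]; rfl

theorem hasSum_quadExp {s : ι → ℂ} {R : ℝ} (hs : ∀ k, ‖s k‖ ≤ R) :
    HasSum (fun ν => quadExpCoeff A ν * multiPow s ν) (quadExp A s) :=
  ((Equiv.sigmaFiberEquiv pairDegree).hasSum_iff.2 (hasSum_quadExp_term hA hs)).sigma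
    fun ν => hasSum_quadExpCoeff_mul hA s ν

lemma summable_norm_quadExpCoeff_mul {s : ι → ℂ} {R : ℝ} (hs : ∀ k, ‖s k‖ ≤ R) :
    Summable fun ν => ‖quadExpCoeff A ν * multiPow s ν‖ := by
  have hfibers := (Equiv.sigmaFiberEquiv pairDegree).summable_iff.2
    (summable_norm_quadExp_term hA hs)
  refine hfibers.sigma.of_nonneg_of_le (fun _ => norm_nonneg _) fun ν => ?_
  rw [← (hasSum_quadExpCoeff_mul hA s ν).tsum_eq]
  exact norm_tsum_le_tsum_norm (hfibers.sigma_factor ν)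

end QuadExp

section QuadExpNorm

variable {A : ℕ → ℕ → ℂ} {n : ℕ}

/-- The mean square of `quadExp A (p₁, p₂, …)` over the circular unitary ensemble, which for the
Grunsky coefficients is the normalized partition function. -/
noncomputable def quadExpNormSq (A : ℕ → ℕ → ℂ) (n : ℕ) : ℝ :=
  ∫ x, ‖quadExp A (powerSum x)‖ ^ 2 ∂cueMeasure n

/-- The `ν`-th term of the limit of `quadExpNormSq A n`, in which the `p_ν` are orthogonal with
square norms `z_ν`. -/
noncomputable def limitTerm (A : ℕ → ℕ → ℂ) (ν : ℕ →₀ ℕ) : ℝ :=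
  ‖quadExpCoeff A ν‖ ^ 2 * centralizerCard ν

lemma limitTerm_nonneg (ν : ℕ →₀ ℕ) : 0 ≤ limitTerm A ν := by
  unfold limitTerm
  positivity

lemma norm_quadExpCoeff_mul_powerSumProd_le (ν : ℕ →₀ ℕ) {x : Fin n → ℂ}
    (hx : x ∈ unitTorus n) :
    ‖quadExpCoeff A ν * powerSumProd ν x‖ ≤ ‖quadExpCoeff A ν * multiPow (fun _ => (n : ℂ)) ν‖ := by
  rw [norm_mul, norm_mul]
  gcongr
  exact norm_powerSumProd_le ν hx

lemma two_mul_re_integral_mul_conj_le {F Q : (Fin n → ℂ) → ℂ} (hF : ContinuousOn F (unitTorus n))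
    (hQ : ContinuousOn Q (unitTorus n)) :
    2 * (∫ x, F x * conj (Q x) ∂cueMeasure n).re
      ≤ ∫ x, ‖F x‖ ^ 2 ∂cueMeasure n + ∫ x, ‖Q x‖ ^ 2 ∂cueMeasure n := by
  have hFQ : Integrable (fun x => F x * conj (Q x)) (cueMeasure n) :=
    integrable_cueMeasure (hF.mul (Complex.continuous_conj.comp_continuousOn hQ))
  have hFF : Integrable (fun x => ‖F x‖ ^ 2) (cueMeasure n) := integrable_cueMeasure (hF.norm.pow 2)
  have hQQ : Integrable (fun x => ‖Q x‖ ^ 2) (cueMeasure n) := integrable_cueMeasure (hQ.norm.pow 2)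
  have hre : ∫ x, (F x * conj (Q x)).re ∂cueMeasure n = (∫ x, F x * conj (Q x) ∂cueMeasure n).re :=
    integral_re hFQ
  rw [← hre, ← integral_const_mul, ← integral_add hFF hQQ]
  refine integral_mono (hFQ.re.const_mul 2) (hFF.add hQQ) fun x => ?_
  have hnorm := Complex.re_le_norm (F x * conj (Q x))
  rw [norm_mul, RCLike.norm_conj] at hnorm
  linarith [two_mul_le_add_sq ‖F x‖ ‖Q x‖]

variable (hA : Summable fun p : ℕ × ℕ => ‖A p.1 p.2‖)
include hA

lemma hasSum_quadExp_powerSum {x : Fin n → ℂ} (hx : x ∈ unitTorus n) :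
    HasSum (fun ν => quadExpCoeff A ν * powerSumProd ν x) (quadExp A (powerSum x)) :=
  hasSum_quadExp hA (norm_powerSum_le hx)

lemma continuousOn_quadExp_powerSum :
    ContinuousOn (fun x : Fin n → ℂ => quadExp A (powerSum x)) (unitTorus n) := by
  have htsum : ContinuousOn (fun x : Fin n → ℂ => ∑' ν, quadExpCoeff A ν * powerSumProd ν x)
      (unitTorus n) :=
    continuousOn_tsum (fun ν => (continuous_const.mul (continuous_powerSumProd ν)).continuousOn)
      (summable_norm_quadExpCoeff_mul hA fun _ => le_rfl)
      fun ν x hx => norm_quadExpCoeff_mul_powerSumProd_le ν hx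
  exact htsum.congr fun x hx => (hasSum_quadExp_powerSum hA hx).tsum_eq.symm

lemma quadExpNormSq_le {X : ℝ} (hX : ∀ S : Finset (ℕ →₀ ℕ), ∑ ν ∈ S, limitTerm A ν ≤ X) :
    quadExpNormSq A n ≤ X := by
  set B := ∑' ν, ‖quadExpCoeff A ν * multiPow (fun _ => (n : ℂ)) ν‖
  have hcont (ν : ℕ →₀ ℕ) := continuous_powerSumProd (n := n) ν
  have hpartial (S : Finset (ℕ →₀ ℕ)) {x : Fin n → ℂ} (hx : x ∈ unitTorus n) :
      ‖∑ ν ∈ S, quadExpCoeff A ν * powerSumProd ν x‖ ≤ B :=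
    (norm_sum_le_of_le S fun ν _ => norm_quadExpCoeff_mul_powerSumProd_le ν hx).trans
      ((summable_norm_quadExpCoeff_mul hA fun _ => le_rfl).sum_le_tsum S fun _ _ => norm_nonneg _)
  have hlim : Tendsto (fun S : Finset (ℕ →₀ ℕ) =>
      ∫ x, ‖∑ ν ∈ S, quadExpCoeff A ν * powerSumProd ν x‖ ^ 2 ∂cueMeasure n) atTop
      (nhds (quadExpNormSq A n)) := by
    refine tendsto_integral_filter_of_dominated_convergence (fun _ => B ^ 2) ?_ ?_
      (integrable_const _) ?_
    · exact .of_forall fun S => Continuous.aestronglyMeasurable (by fun_prop)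
    · refine .of_forall fun S => ae_cueMeasure_mem_unitTorus.mono fun x hx => ?_
      rw [norm_pow, norm_norm]
      exact pow_le_pow_left₀ (norm_nonneg _) (hpartial S hx) 2
    · exact ae_cueMeasure_mem_unitTorus.mono fun x hx => (hasSum_quadExp_powerSum hA hx).norm.pow 2
  exact le_of_tendsto hlim
    (.of_forall fun S => (integral_norm_sq_sum_powerSumProd_le S _).trans (hX S))

lemma integral_quadExp_mul_conj_sum {S : Finset (ℕ →₀ ℕ)}
    (horth : ∀ μ, ∀ ν ∈ S, powerSumGram n μ ν = if μ = ν then (centralizerCard ν : ℂ) else 0) :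
    ∫ x, quadExp A (powerSum x) * conj (∑ ν ∈ S, quadExpCoeff A ν * powerSumProd ν x) ∂cueMeasure n
      = ((∑ ν ∈ S, limitTerm A ν : ℝ) : ℂ) := by
  have hcont (ν : ℕ →₀ ℕ) := continuous_powerSumProd (n := n) ν
  have hsum : HasSum (fun μ => ∫ x, quadExpCoeff A μ * powerSumProd μ x
      * conj (∑ ν ∈ S, quadExpCoeff A ν * powerSumProd ν x) ∂cueMeasure n)
      (∫ x, quadExp A (powerSum x) * conj (∑ ν ∈ S, quadExpCoeff A ν * powerSumProd ν x)
        ∂cueMeasure n) := by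
    refine hasSum_integral_of_ae_mem_unitTorus ae_cueMeasure_mem_unitTorus
      ((summable_norm_quadExpCoeff_mul hA (s := fun _ => n) fun _ => le_rfl).mul_right
        (∑ ν ∈ S, ‖quadExpCoeff A ν * multiPow (fun _ => (n : ℂ)) ν‖))
      (fun μ => ?_) (fun μ x hx => ?_) fun x hx => (hasSum_quadExp_powerSum hA hx).mul_right _
    · fun_prop
    · rw [norm_mul, RCLike.norm_conj]
      exact mul_le_mul (norm_quadExpCoeff_mul_powerSumProd_le μ hx)
        (norm_sum_le_of_le S fun ν _ => norm_quadExpCoeff_mul_powerSumProd_le ν hx)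
        (norm_nonneg _) (norm_nonneg _)
  have hterm (μ : ℕ →₀ ℕ) : ∫ x, quadExpCoeff A μ * powerSumProd μ x
      * conj (∑ ν ∈ S, quadExpCoeff A ν * powerSumProd ν x) ∂cueMeasure n
      = if μ ∈ S then (limitTerm A μ : ℂ) else 0 := by
    have hexpand := integral_sum_mul_conj_sum_cueMeasure (n := n) {μ} S
      (quadExpCoeff A) (quadExpCoeff A)
    simp only [Finset.sum_singleton] at hexpand
    rw [hexpand, Finset.sum_congr rfl fun ν hν => by rw [horth μ ν hν]]
    simp only [mul_ite, mul_zero, Finset.sum_ite_eq, limitTerm]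
    push_cast
    rw [← mul_assoc, Complex.conj_mul']
  simp only [hterm] at hsum
  rw [hsum.unique (hasSum_sum_of_ne_finset_zero fun μ (hμ : μ ∉ S) => if_neg hμ)]
  push_cast
  exact Finset.sum_congr rfl fun μ hμ => if_pos hμ

lemma eventually_sum_limitTerm_le_quadExpNormSq (S : Finset (ℕ →₀ ℕ)) :
    ∀ᶠ n in atTop, ∑ ν ∈ S, limitTerm A ν ≤ quadExpNormSq A n := by
  filter_upwards [eventually_powerSumGram_eq_ite (S.sup weight + 1)] with n hn
  set Q : (Fin n → ℂ) → ℂ := fun x => ∑ ν ∈ S, quadExpCoeff A ν * powerSumProd ν x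
  have hQ : ContinuousOn Q (unitTorus n) := continuousOn_finsetSum S fun ν _ =>
    (continuous_const.mul (continuous_powerSumProd ν)).continuousOn
  have hinner := integral_quadExp_mul_conj_sum hA fun μ ν (hν : ν ∈ S) =>
    hn μ ν (Nat.lt_succ_of_le (Finset.le_sup hν))
  have hpolar := two_mul_re_integral_mul_conj_le (continuousOn_quadExp_powerSum hA) hQ
  have hbessel : ∫ x, ‖Q x‖ ^ 2 ∂cueMeasure n ≤ ∑ ν ∈ S, limitTerm A ν :=
    integral_norm_sq_sum_powerSumProd_le S _
  rw [hinner, Complex.ofReal_re] at hpolar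
  unfold quadExpNormSq
  linarith

theorem summable_limitTerm_of_bounded {C : ℝ} (hC : ∀ n, quadExpNormSq A n ≤ C) :
    Summable (limitTerm A) :=
  summable_of_sum_le limitTerm_nonneg fun S =>
    let ⟨n, hn⟩ := (eventually_sum_limitTerm_le_quadExpNormSq hA S).exists
    hn.trans (hC n)

theorem tendsto_quadExpNormSq (hs : Summable (limitTerm A)) :
    Tendsto (quadExpNormSq A) atTop (nhds (∑' ν, limitTerm A ν)) := by
  have hle (n : ℕ) : quadExpNormSq A n ≤ ∑' ν, limitTerm A ν :=
    quadExpNormSq_le hA fun S => hs.sum_le_tsum S fun _ _ => limitTerm_nonneg _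
  refine tendsto_order.2 ⟨fun b hb => ?_, fun b hb => .of_forall fun n => (hle n).trans_lt hb⟩
  obtain ⟨S, hS⟩ := (hs.hasSum.eventually_const_lt hb).exists
  exact (eventually_sum_limitTerm_le_quadExpNormSq hA S).mono fun n hn => hS.trans_le hn

end QuadExpNorm

/-! ### Gaussian integrals -/

section RealGaussian

variable {ι : Type*} [Fintype ι] [DecidableEq ι]

lemma measurePreserving_mulVec_of_mem_orthogonalGroup {U : Matrix ι ι ℝ}
    (hU : U ∈ orthogonalGroup ι ℝ) : MeasurePreserving fun w : ι → ℝ => U *ᵥ w := by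
  have habs : ‖U.det‖ = 1 := CStarRing.norm_of_mem_unitary (det_of_mem_unitary hU)
  have hmap := Real.map_matrix_volume_pi_eq_smul_volume_pi (norm_ne_zero_iff.1 (habs ▸ one_ne_zero))
  rw [abs_inv, ← Real.norm_eq_abs, habs, inv_one, ENNReal.ofReal_one, one_smul] at hmap
  exact ⟨(Continuous.matrix_mulVec continuous_const continuous_id).measurable, hmap⟩

lemma dotProduct_mulVec_eigenvectorUnitary {M : Matrix ι ι ℝ} (hM : M.IsHermitian) (w : ι → ℝ) :
    (hM.eigenvectorUnitary.1 *ᵥ w) ⬝ᵥ M *ᵥ (hM.eigenvectorUnitary.1 *ᵥ w)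
      = ∑ i, hM.eigenvalues i * w i ^ 2 := by
  have hspec : hM.eigenvectorUnitary.1ᵀ * M * hM.eigenvectorUnitary.1
      = diagonal hM.eigenvalues := by
    have h := hM.conjStarAlgAut_star_eigenvectorUnitary
    rw [Unitary.conjStarAlgAut_star_apply, star_eq_conjTranspose,
      conjTranspose_eq_transpose_of_trivial] at h
    exact h
  rw [mulVec_mulVec, dotProduct_mulVec, vecMul_mulVec, ← Matrix.mul_assoc, hspec]
  simp only [dotProduct, vecMul_diagonal]
  exact Finset.sum_congr rfl fun i _ => by ring

theorem integral_exp_neg_quadForm {M : Matrix ι ι ℝ} (hM : M.IsHermitian)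
    (hint : Integrable fun v : ι → ℝ => Real.exp (-(v ⬝ᵥ M *ᵥ v))) :
    0 < M.det ∧ ∫ v : ι → ℝ, Real.exp (-(v ⬝ᵥ M *ᵥ v))
      = √Real.pi ^ Fintype.card ι * (√M.det)⁻¹ := by
  have hU := measurePreserving_mulVec_of_mem_orthogonalGroup hM.eigenvectorUnitary.2
  have hmeas := hint.aestronglyMeasurable
  rw [← hU.map_eq] at hmeas
  have hprod : ∫ v : ι → ℝ, Real.exp (-(v ⬝ᵥ M *ᵥ v)) = ∏ i, √(Real.pi / hM.eigenvalues i) :=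
    calc ∫ v : ι → ℝ, Real.exp (-(v ⬝ᵥ M *ᵥ v))
        = ∫ v, Real.exp (-(v ⬝ᵥ M *ᵥ v))
            ∂volume.map fun w : ι → ℝ => hM.eigenvectorUnitary.1 *ᵥ w := by rw [hU.map_eq]
      _ = ∫ w : ι → ℝ, ∏ i, Real.exp (-hM.eigenvalues i * w i ^ 2) := by
          rw [integral_map hU.aemeasurable hmeas]
          simp only [dotProduct_mulVec_eigenvectorUnitary, ← Real.exp_sum, neg_mul,
            Finset.sum_neg_distrib]
      _ = ∏ i, √(Real.pi / hM.eigenvalues i) := by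
          rw [integral_fintype_prod_volume_eq_prod
            fun i (x : ℝ) => Real.exp (-hM.eigenvalues i * x ^ 2)]
          simp only [integral_gaussian]
  have hpos (i : ι) : 0 < hM.eigenvalues i := by
    have hne : ∏ i, √(Real.pi / hM.eigenvalues i) ≠ 0 := hprod ▸ (integral_exp_pos hint).ne'
    have hi := Real.sqrt_ne_zero'.1 (Finset.prod_ne_zero_iff.1 hne i (Finset.mem_univ i))
    exact (div_pos_iff_of_pos_left Real.pi_pos).1 hi
  have hdet : M.det = ∏ i, hM.eigenvalues i := by simpa using hM.det_eq_prod_eigenvalues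
  refine ⟨hdet ▸ Finset.prod_pos fun i _ => hpos i, ?_⟩
  rw [hprod, hdet, Real.sqrt_prod _ fun i _ => (hpos i).le, ← div_eq_mul_inv, ← Finset.card_univ,
    ← Finset.prod_const, ← Finset.prod_div_distrib]
  exact Finset.prod_congr rfl fun i _ => Real.sqrt_div Real.pi_pos.le _

end RealGaussian

section Parseval

variable {Ω ι : Type*} [MeasurableSpace Ω] {μ : Measure Ω} [IsFiniteMeasure μ] [Countable ι]
  {e : ι → Ω → ℂ} {d : ι → ℂ} {F : Ω → ℂ} (hmeas : ∀ i, AEStronglyMeasurable (e i) μ)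
  (hbound : ∀ᵐ x ∂μ, ∀ i, ‖e i x‖ ≤ 1) (hd : Summable fun i => ‖d i‖)
  (hF : ∀ᵐ x ∂μ, HasSum (fun i => d i * e i x) (F x))
include hmeas hbound hd hF

lemma hasSum_integral_mul_conj_of_hasSum :
    HasSum (fun p : ι × ι => ∫ x, d p.1 * e p.1 x * conj (d p.2 * e p.2 x) ∂μ)
      (∫ x, F x * conj (F x) ∂μ) := by
  have hle {x : Ω} (hx : ∀ i, ‖e i x‖ ≤ 1) (i : ι) : ‖d i * e i x‖ ≤ ‖d i‖ := by
    rw [norm_mul]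
    exact mul_le_of_le_one_right (norm_nonneg _) (hx i)
  refine hasSum_integral_of_dominated_convergence (fun p _ => ‖d p.1‖ * ‖d p.2‖) (fun p => ?_)
    (fun p => hbound.mono fun x hx => norm_mul_le_of_le (hle hx _) ?_)
    (.of_forall fun _ => hd.mul_of_nonneg hd (fun _ => norm_nonneg _) fun _ => norm_nonneg _)
    (integrable_const _) ?_
  · exact ((hmeas _).const_mul _).mul
      (Complex.continuous_conj.comp_aestronglyMeasurable ((hmeas _).const_mul _))
  · rw [RCLike.norm_conj]
    exact hle hx _
  · filter_upwards [hbound, hF] with x hx hFx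
    have hsum : Summable fun i => ‖d i * e i x‖ :=
      hd.of_nonneg_of_le (fun _ => norm_nonneg _) (hle hx)
    have hsum' : Summable fun i => ‖conj (d i * e i x)‖ := by simpa only [RCLike.norm_conj]
    have hconj : HasSum (fun i => conj (d i * e i x)) (conj (F x)) :=
      Complex.hasSum_conj'.2 (by simpa using hFx)
    have hmul := summable_mul_of_summable_norm hsum hsum'
    have hprod := hFx.mul hconj hmul
    exact hprod

theorem hasSum_norm_sq_of_orthonormal [DecidableEq ι]
    (horth : ∀ i j, ∫ x, e i x * conj (e j x) ∂μ = if i = j then 1 else 0) :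
    HasSum (fun i => ‖d i‖ ^ 2) (∫ x, ‖F x‖ ^ 2 ∂μ) := by
  have hpairs := hasSum_integral_mul_conj_of_hasSum hmeas hbound hd hF
  have hpair (p : ι × ι) : ∫ x, d p.1 * e p.1 x * conj (d p.2 * e p.2 x) ∂μ
      = if p.1 = p.2 then ((‖d p.1‖ ^ 2 : ℝ) : ℂ) else 0 := by
    simp only [map_mul, mul_mul_mul_comm (d p.1) (e p.1 _)]
    rw [integral_const_mul, horth]
    split_ifs with h
    · rw [← h, Complex.mul_conj', mul_one, Complex.ofReal_pow]
    · exact mul_zero _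
  have hdiag : Function.Injective fun i : ι => (i, i) := fun _ _ h => congrArg Prod.fst h
  simp only [hpair, Complex.mul_conj'] at hpairs
  rw [← hdiag.hasSum_iff fun p hp => if_neg fun h => hp ⟨p.1, Prod.ext rfl h⟩] at hpairs
  simp only [Function.comp_def, if_true, ← Complex.ofReal_pow, integral_complex_ofReal,
    Complex.hasSum_ofReal] at hpairs
  exact hpairs

end Parseval

section ComplexGaussian

variable {ι : Type*} [Fintype ι]

/-- The unnormalized density `exp (-∑ ‖ξ k‖²)` of the standard Gaussian measure on `ℂ^ι`. -/
noncomputable def gaussianWeight (ξ : ι → ℂ) : ℝ := Real.exp (-∑ k, ‖ξ k‖ ^ 2)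

lemma gaussianWeight_pos (ξ : ι → ℂ) : 0 < gaussianWeight ξ := Real.exp_pos _

@[fun_prop]
lemma continuous_gaussianWeight : Continuous (gaussianWeight (ι := ι)) := by
  unfold gaussianWeight
  fun_prop

lemma integral_norm_pow_mul_exp_neg_norm_sq (k : ℕ) :
    ∫ z : ℂ, (‖z‖ ^ k) ^ 2 * Real.exp (-‖z‖ ^ 2) = Real.pi * k.factorial := by
  have h := Complex.integral_rpow_mul_exp_neg_rpow (p := (2 : ℕ)) (q := (k * 2 : ℕ))
    (by norm_num) (lt_of_lt_of_le (by norm_num) (Nat.cast_nonneg _))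
  simp only [Real.rpow_natCast, pow_mul] at h
  rw [h, ← Real.Gamma_nat_eq_factorial]
  push_cast
  congr 1 <;> [ring; (congr 1; ring)]

lemma integral_norm_multiPow_sq_mul_gaussianWeight (ν : ι →₀ ℕ) :
    ∫ ξ : ι → ℂ, ‖multiPow ξ ν‖ ^ 2 * gaussianWeight ξ
      = Real.pi ^ Fintype.card ι * multiFactorial ν := by
  have hprod (ξ : ι → ℂ) : ‖multiPow ξ ν‖ ^ 2 * gaussianWeight ξ
      = ∏ k, (‖ξ k‖ ^ ν k) ^ 2 * Real.exp (-‖ξ k‖ ^ 2) := by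
    rw [multiPow_of_support_subset ξ (Finset.subset_univ _), gaussianWeight, norm_prod,
      ← Finset.prod_pow, ← Finset.sum_neg_distrib, Real.exp_sum, ← Finset.prod_mul_distrib]
    simp only [norm_pow]
  simp_rw [hprod]
  rw [integral_fintype_prod_volume_eq_prod
    fun k (z : ℂ) => (‖z‖ ^ ν k) ^ 2 * Real.exp (-‖z‖ ^ 2)]
  simp only [integral_norm_pow_mul_exp_neg_norm_sq, Finset.prod_mul_distrib, Finset.prod_const,
    Finset.card_univ, multiFactorial_of_support_subset (Finset.subset_univ _), Nat.cast_prod]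

lemma lintegral_norm_multiPow_sq_mul_gaussianWeight (ν : ι →₀ ℕ) :
    ∫⁻ ξ : ι → ℂ, ENNReal.ofReal (‖multiPow ξ ν‖ ^ 2 * gaussianWeight ξ)
      = ENNReal.ofReal (Real.pi ^ Fintype.card ι * multiFactorial ν) := by
  have hint := integral_norm_multiPow_sq_mul_gaussianWeight ν
  have hpos := multiFactorial_pos ν
  rw [← hint, ofReal_integral_eq_lintegral_ofReal]
  · exact .of_integral_ne_zero (hint.trans_ne (by positivity))
  · exact .of_forall fun ξ => mul_nonneg (sq_nonneg _) (gaussianWeight_pos ξ).le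

lemma gaussianWeight_mul {m : ℕ} {u : Fin m → ℂ} (hu : u ∈ unitTorus m) (ξ : Fin m → ℂ) :
    gaussianWeight (u * ξ) = gaussianWeight ξ := by
  simp only [gaussianWeight, Pi.mul_apply, norm_mul, hu _, one_mul]

lemma measurePreserving_mul_left_of_mem_unitTorus {m : ℕ} {u : Fin m → ℂ}
    (hu : u ∈ unitTorus m) : MeasurePreserving fun ξ : Fin m → ℂ => u * ξ :=
  volume_preserving_pi fun k =>
    (rotation ⟨u k, mem_sphere_zero_iff_norm.2 (hu k)⟩).measurePreserving

lemma lintegral_eq_lintegral_lintegral_torus {m : ℕ} {g : (Fin m → ℂ) → ENNReal}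
    (hg : Measurable g) : ∫⁻ ξ, g ξ = ∫⁻ ξ, ∫⁻ u, g (u * ξ) ∂torusMeasure m := by
  have hmul : Measurable fun p : (Fin m → ℂ) × (Fin m → ℂ) => g (p.2 * p.1) :=
    hg.comp (measurable_snd.mul measurable_fst)
  rw [lintegral_lintegral_swap hmul.aemeasurable]
  have hconst : ∀ᵐ u ∂torusMeasure m, ∫⁻ ξ, g (u * ξ) = ∫⁻ ξ, g ξ := by
    filter_upwards [ae_mem_unitTorus m] with u hu
    exact (measurePreserving_mul_left_of_mem_unitTorus hu).lintegral_comp hg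
  rw [lintegral_congr_ae hconst, lintegral_const, measure_univ, mul_one]

end ComplexGaussian

section QuadExpGaussian

variable {m : ℕ}

lemma continuous_quadExp {ι : Type*} [Finite ι] (B : ι → ι → ℂ) : Continuous (quadExp B) := by
  have := Fintype.ofFinite ι
  unfold quadExp
  simp only [tsum_fintype]
  fun_prop

lemma norm_multiPow_eq_one {ι : Type*} {u : ι → ℂ} (hu : ∀ k, ‖u k‖ = 1) (ν : ι →₀ ℕ) :
    ‖multiPow u ν‖ = 1 := by
  rw [norm_multiPow, funext hu, multiPow_one]

lemma hasSum_integral_norm_quadExp_mul_sq (B : Fin m → Fin m → ℂ) (ξ : Fin m → ℂ) :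
    HasSum (fun ν => ‖quadExpCoeff B ν * multiPow ξ ν‖ ^ 2)
      (∫ u, ‖quadExp B (u * ξ)‖ ^ 2 ∂torusMeasure m) := by
  have hB : Summable fun p : Fin m × Fin m => ‖B p.1 p.2‖ := .of_finite
  refine hasSum_norm_sq_of_orthonormal (e := fun ν u => multiPow u ν)
    (fun ν => Continuous.aestronglyMeasurable (by fun_prop))
    ((ae_mem_unitTorus m).mono fun u hu ν => (norm_multiPow_eq_one hu ν).le)
    (summable_norm_quadExpCoeff_mul hB (norm_le_pi_norm ξ)) (.of_forall fun u => ?_)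
    integral_multiPow_mul_conj_multiPow
  convert hasSum_quadExp hB (norm_le_pi_norm (u * ξ)) using 2 with ν
  rw [mul_assoc, mul_comm (multiPow ξ ν), ← multiPow_mul]
  rfl

lemma lintegral_torus_norm_quadExp_sq_mul_gaussianWeight (B : Fin m → Fin m → ℂ) (ξ : Fin m → ℂ) :
    ∫⁻ u, ENNReal.ofReal (‖quadExp B (u * ξ)‖ ^ 2 * gaussianWeight (u * ξ)) ∂torusMeasure m
      = ∑' ν, ENNReal.ofReal (‖quadExpCoeff B ν‖ ^ 2)
          * ENNReal.ofReal (‖multiPow ξ ν‖ ^ 2 * gaussianWeight ξ) := by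
  have hcont := continuous_quadExp B
  have hsum := (hasSum_integral_norm_quadExp_mul_sq B ξ).mul_right (gaussianWeight ξ)
  have hnonneg (ν : Fin m →₀ ℕ) :
      0 ≤ ‖quadExpCoeff B ν * multiPow ξ ν‖ ^ 2 * gaussianWeight ξ :=
    mul_nonneg (sq_nonneg _) (gaussianWeight_pos ξ).le
  have hint : Integrable (fun u => ‖quadExp B (u * ξ)‖ ^ 2 * gaussianWeight ξ)
      (torusMeasure m) := integrable_torusMeasure (Continuous.continuousOn (by fun_prop))
  have hrot : ∀ᵐ u ∂torusMeasure m, gaussianWeight (u * ξ) = gaussianWeight ξ :=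
    (ae_mem_unitTorus m).mono fun u hu => gaussianWeight_mul hu ξ
  rw [lintegral_congr_ae (hrot.mono fun u hu => by rw [hu]),
    ← ofReal_integral_eq_lintegral_ofReal hint
      (.of_forall fun u => mul_nonneg (sq_nonneg _) (gaussianWeight_pos ξ).le),
    integral_mul_const, ← hsum.tsum_eq, ENNReal.ofReal_tsum_of_nonneg hnonneg hsum.summable]
  refine tsum_congr fun ν => ?_
  rw [← ENNReal.ofReal_mul (sq_nonneg _), norm_mul, mul_pow, mul_assoc]

theorem lintegral_norm_quadExp_sq_mul_gaussianWeight (B : Fin m → Fin m → ℂ) :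
    ∫⁻ ξ, ENNReal.ofReal (‖quadExp B ξ‖ ^ 2 * gaussianWeight ξ)
      = ∑' ν, ENNReal.ofReal (Real.pi ^ m * (‖quadExpCoeff B ν‖ ^ 2 * multiFactorial ν)) := by
  have hcont := continuous_quadExp B
  have hmeas : Measurable fun ξ => ENNReal.ofReal (‖quadExp B ξ‖ ^ 2 * gaussianWeight ξ) :=
    (Continuous.measurable (by fun_prop)).ennreal_ofReal
  rw [lintegral_eq_lintegral_lintegral_torus hmeas]
  simp_rw [lintegral_torus_norm_quadExp_sq_mul_gaussianWeight]
  rw [lintegral_tsum fun ν => ((Continuous.measurable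
    (by fun_prop)).ennreal_ofReal.const_mul _).aemeasurable]
  refine tsum_congr fun ν => ?_
  rw [lintegral_const_mul' _ _ ENNReal.ofReal_ne_top,
    lintegral_norm_multiPow_sq_mul_gaussianWeight, Fintype.card_fin,
    ← ENNReal.ofReal_mul (sq_nonneg _), mul_left_comm]

end QuadExpGaussian

/-! ### The limiting series as a determinant -/

section RealForm

variable {ι : Type*}

/-- The real matrix of the quadratic form `ξ ↦ Re (∑ B k l * ξ k * ξ l)` on `ℂ^ι`, in the
coordinates `realCoords`. -/
def realForm (B : ι → ι → ℂ) : Matrix (ι ⊕ ι) (ι ⊕ ι) ℝ :=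
  fromBlocks (of fun k l => (B k l).re) (of fun k l => (B k l).im) (of fun k l => (B k l).im)
    (-of fun k l => (B k l).re)

/-- The real coordinates `(x, -y)` of `ξ = x + iy`; the sign of `y` makes the off-diagonal blocks
of `realForm` come out positive. -/
def realCoords (ξ : ι → ℂ) : ι ⊕ ι → ℝ :=
  Sum.elim (fun k => (ξ k).re) fun k => -(ξ k).im

lemma isHermitian_one_add_realForm [DecidableEq ι] {B : ι → ι → ℂ} (hB : ∀ k l, B k l = B l k) :
    (1 + realForm B).IsHermitian := by
  have hblock (f : ℂ → ℝ) : (of fun k l => f (B k l)).IsHermitian :=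
    .ext fun k l => by simp only [of_apply, hB k l, star_trivial]
  exact isHermitian_one.add ((hblock _).fromBlocks (hblock _) (hblock _).neg)

variable [Fintype ι]

lemma realCoords_dotProduct_realForm (B : ι → ι → ℂ) (ξ : ι → ℂ) :
    realCoords ξ ⬝ᵥ realForm B *ᵥ realCoords ξ = (∑ k, ∑ l, B k l * (ξ k * ξ l)).re := by
  simp only [realForm, realCoords, fromBlocks_mulVec, Sum.elim_comp_inl, Sum.elim_comp_inr,
    sumElim_dotProduct_sumElim]
  simp only [dotProduct, mulVec, Pi.add_apply, of_apply, Matrix.neg_apply, Complex.re_sum,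
    Finset.mul_sum, ← Finset.sum_add_distrib]
  refine Finset.sum_congr rfl fun k _ => Finset.sum_congr rfl fun l _ => ?_
  simp only [Complex.mul_re, Complex.mul_im]
  ring

lemma realCoords_dotProduct_self (ξ : ι → ℂ) :
    realCoords ξ ⬝ᵥ realCoords ξ = ∑ k, ‖ξ k‖ ^ 2 := by
  rw [realCoords, sumElim_dotProduct_sumElim]
  simp only [dotProduct, ← Finset.sum_add_distrib, Complex.sq_norm, Complex.normSq_apply,
    neg_mul_neg]

lemma norm_quadExp_sq_mul_gaussianWeight [DecidableEq ι] (B : ι → ι → ℂ) (ξ : ι → ℂ) :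
    ‖quadExp B ξ‖ ^ 2 * gaussianWeight ξ
      = Real.exp (-(realCoords ξ ⬝ᵥ (1 + realForm B) *ᵥ realCoords ξ)) := by
  rw [add_mulVec, one_mulVec, dotProduct_add, realCoords_dotProduct_realForm,
    realCoords_dotProduct_self, quadExp, Complex.norm_exp, gaussianWeight, ← Real.exp_nat_mul,
    ← Real.exp_add, tsum_fintype, Fintype.sum_prod_type]
  simp only [mul_assoc, ← Finset.mul_sum]
  congr 1
  rw [show (-(1 / 2) : ℂ) = ((-(1 / 2) : ℝ) : ℂ) by push_cast; rfl, Complex.re_ofReal_mul]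
  push_cast
  ring

lemma measurePreserving_realCoords : MeasurePreserving (realCoords (ι := ι)) :=
  ((volume_measurePreserving_sumPiEquivProdPi fun _ : ι ⊕ ι => ℝ).symm).comp <|
    (volume_measurePreserving_arrowProdEquivProdArrow ℝ ℝ ι).comp <|
      volume_preserving_pi fun _ =>
        Complex.volume_preserving_equiv_real_prod.comp Complex.conjLIE.measurePreserving

end RealForm

lemma integral_norm_quadExp_sq_mul_gaussianWeight {m : ℕ} {B : Fin m → Fin m → ℂ}
    (hs : Summable fun ν => ‖quadExpCoeff B ν‖ ^ 2 * multiFactorial ν) :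
    Integrable (fun ξ => ‖quadExp B ξ‖ ^ 2 * gaussianWeight ξ) ∧
      ∫ ξ, ‖quadExp B ξ‖ ^ 2 * gaussianWeight ξ
        = Real.pi ^ m * ∑' ν, ‖quadExpCoeff B ν‖ ^ 2 * multiFactorial ν := by
  have hnonneg (ν : Fin m →₀ ℕ) :
      0 ≤ Real.pi ^ m * (‖quadExpCoeff B ν‖ ^ 2 * multiFactorial ν) := by positivity
  have hpos : 0 ≤ᵐ[volume] fun ξ => ‖quadExp B ξ‖ ^ 2 * gaussianWeight ξ :=
    .of_forall fun ξ => mul_nonneg (sq_nonneg _) (gaussianWeight_pos ξ).le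
  have hmeas : AEStronglyMeasurable (fun ξ => ‖quadExp B ξ‖ ^ 2 * gaussianWeight ξ) := by
    have hcont := continuous_quadExp B
    exact Continuous.aestronglyMeasurable (by fun_prop)
  have hlint := lintegral_norm_quadExp_sq_mul_gaussianWeight B
  rw [← ENNReal.ofReal_tsum_of_nonneg hnonneg (hs.mul_left _), tsum_mul_left] at hlint
  refine ⟨⟨hmeas, (hasFiniteIntegral_iff_ofReal hpos).2 (hlint ▸ ENNReal.ofReal_lt_top)⟩, ?_⟩
  rw [integral_eq_lintegral_of_nonneg_ae hpos hmeas, hlint, ENNReal.toReal_ofReal]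
  exact mul_nonneg (by positivity) (tsum_nonneg fun ν => by positivity)

theorem det_one_add_realForm_pos_and_inv_sqrt_eq {m : ℕ} {B : Fin m → Fin m → ℂ}
    (hB : ∀ k l, B k l = B l k) (hs : Summable fun ν => ‖quadExpCoeff B ν‖ ^ 2 * multiFactorial ν) :
    0 < (1 + realForm B).det ∧
      (√(1 + realForm B).det)⁻¹ = ∑' ν, ‖quadExpCoeff B ν‖ ^ 2 * multiFactorial ν := by
  obtain ⟨hint, hval⟩ := integral_norm_quadExp_sq_mul_gaussianWeight hs
  have hmp := measurePreserving_realCoords (ι := Fin m)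
  have hmeas : AEStronglyMeasurable fun v : Fin m ⊕ Fin m → ℝ =>
      Real.exp (-(v ⬝ᵥ (1 + realForm B) *ᵥ v)) := Continuous.aestronglyMeasurable (by fun_prop)
  simp only [norm_quadExp_sq_mul_gaussianWeight B] at hint hval
  obtain ⟨hdet, hgauss⟩ := integral_exp_neg_quadForm (isHermitian_one_add_realForm hB)
    ((hmp.integrable_comp hmeas).1 hint)
  refine ⟨hdet, mul_left_cancel₀ (pow_pos Real.pi_pos m).ne' ?_⟩
  have hchange := integral_map hmp.aemeasurable (hmp.map_eq.symm ▸ hmeas)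
  rw [hmp.map_eq, hgauss] at hchange
  rw [← hval, ← hchange,
    Fintype.card_sum, Fintype.card_fin, ← two_mul, pow_mul, Real.sq_sqrt Real.pi_pos.le]

section Truncation

lemma tendsto_tsum_mapDomain_fin {f : (ℕ →₀ ℕ) → ℝ} (hf : Summable f) :
    Tendsto (fun m => ∑' ν : Fin m →₀ ℕ, f (ν.mapDomain Fin.val)) atTop (nhds (∑' ν, f ν)) := by
  have hinj (m : ℕ) : Function.Injective (Finsupp.mapDomain Fin.val : (Fin m →₀ ℕ) → ℕ →₀ ℕ) :=
    Finsupp.mapDomain_injective Fin.val_injective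
  have hrange (m : ℕ) : ∑' ν : Fin m →₀ ℕ, f (ν.mapDomain Fin.val)
      = ∑' ν, (Set.range (Finsupp.mapDomain (Fin.val (n := m)))).indicator f ν := by
    rw [← tsum_subtype, tsum_range f (hinj m)]
  simp only [hrange]
  refine tendsto_tsum_of_dominated_convergence hf.norm (fun ν => ?_)
    (.of_forall fun m ν => norm_indicator_le_norm_self f ν)
  refine tendsto_const_nhds.congr' ?_
  filter_upwards [eventually_ge_atTop (ν.support.sup id + 1)] with m hm
  have hsupport : (ν.support : Set ℕ) ⊆ Set.range (Fin.val (n := m)) := fun k hk =>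
    ⟨⟨k, (Nat.lt_succ_of_le (Finset.le_sup (f := id) hk)).trans_le hm⟩, rfl⟩
  have hmem := Finsupp.mapDomain_comapDomain _ Fin.val_injective ν hsupport
  exact (Set.indicator_of_mem (Set.mem_range.2 ⟨_, hmem⟩) f).symm

variable {A : ℕ → ℕ → ℂ}

/-- The truncation `(√(k + 1) * √(l + 1) * A k l)` of the infinite matrix `A`, whose variables are
rescaled so that `limitTerm A` turns into the Gaussian square norm of a monomial. -/
noncomputable def scaledTruncation (A : ℕ → ℕ → ℂ) (m : ℕ) (k l : Fin m) : ℂ :=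
  ((√(k + 1) : ℝ) : ℂ) * ((√(l + 1) : ℝ) : ℂ) * A k l

lemma norm_quadExpCoeff_scaledTruncation_sq {m : ℕ} (ν : Fin m →₀ ℕ) :
    ‖quadExpCoeff (scaledTruncation A m) ν‖ ^ 2 * multiFactorial ν
      = limitTerm A (ν.mapDomain Fin.val) := by
  have hroot : ‖multiPow (fun k : Fin m => ((√(k + 1) : ℝ) : ℂ)) ν‖ ^ 2
      = (multiPow (fun k : Fin m => (k : ℕ) + 1) ν : ℕ) := by
    have hsq (k : Fin m) : √((k : ℝ) + 1) * √((k : ℝ) + 1) = ((k : ℕ) + 1 : ℕ) := by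
      rw [Real.mul_self_sqrt (by positivity)]
      push_cast
      rfl
    simp only [norm_multiPow, Complex.norm_real, Real.norm_of_nonneg (Real.sqrt_nonneg _), sq,
      ← multiPow_mul, hsq]
    exact (map_multiPow (Nat.castRingHom ℝ) _ ν).symm
  have hcoeff : quadExpCoeff (scaledTruncation A m) ν = quadExpCoeff A (ν.mapDomain Fin.val)
      * multiPow (fun k : Fin m => ((√(k + 1) : ℝ) : ℂ)) ν := by
    rw [← quadExpCoeff_comp Fin.val_injective, ← quadExpCoeff_mul]
    rfl
  rw [hcoeff, norm_mul, mul_pow, hroot, limitTerm, centralizerCard, multiPow_mapDomain,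
    multiFactorial_mapDomain Fin.val_injective, Nat.cast_mul, mul_assoc]

lemma det_scaledTruncation_pos_and_inv_sqrt_eq (hsym : ∀ k l, A k l = A l k)
    (hs : Summable (limitTerm A)) (m : ℕ) :
    0 < (1 + realForm (scaledTruncation A m)).det ∧
      (√(1 + realForm (scaledTruncation A m)).det)⁻¹
        = ∑' ν : Fin m →₀ ℕ, limitTerm A (ν.mapDomain Fin.val) := by
  simp only [← norm_quadExpCoeff_scaledTruncation_sq]
  refine det_one_add_realForm_pos_and_inv_sqrt_eq (fun k l => ?_) ?_
  · rw [scaledTruncation, scaledTruncation, hsym, mul_comm ((√(k + 1) : ℝ) : ℂ)]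
  · simp only [norm_quadExpCoeff_scaledTruncation_sq]
    exact hs.comp_injective (Finsupp.mapDomain_injective Fin.val_injective)

lemma tsum_limitTerm_pos (hsym : ∀ k l, A k l = A l k) (hs : Summable (limitTerm A)) :
    0 < ∑' ν, limitTerm A ν := by
  obtain ⟨hpos, hval⟩ := det_scaledTruncation_pos_and_inv_sqrt_eq hsym hs 0
  rw [tsum_eq_single 0 fun ν hν => absurd (Subsingleton.elim ν 0) hν, Finsupp.mapDomain_zero]
    at hval
  exact hs.tsum_pos limitTerm_nonneg 0 (hval ▸ inv_pos.2 (Real.sqrt_pos.2 hpos))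

theorem tendsto_det_scaledTruncation (hsym : ∀ k l, A k l = A l k) (hs : Summable (limitTerm A)) :
    Tendsto (fun m => (1 + realForm (scaledTruncation A m)).det) atTop
      (nhds ((∑' ν, limitTerm A ν) ^ 2)⁻¹) := by
  have hdet (m : ℕ) : (1 + realForm (scaledTruncation A m)).det
      = ((∑' ν : Fin m →₀ ℕ, limitTerm A (ν.mapDomain Fin.val)) ^ 2)⁻¹ := by
    obtain ⟨hpos, hval⟩ := det_scaledTruncation_pos_and_inv_sqrt_eq hsym hs m
    rw [← hval, inv_pow, inv_inv, Real.sq_sqrt hpos.le]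
  simp only [hdet]
  exact ((tendsto_tsum_mapDomain_fin hs).pow 2).inv₀ (pow_pos (tsum_limitTerm_pos hsym hs) 2).ne'

lemma grunskyK_eq_realForm (a : ℕ → ℕ → ℂ) (m : ℕ) :
    grunskyK a m = realForm (scaledTruncation (fun k l => a (k + 1) (l + 1)) m) := by
  have hroot (k l : Fin m) : ((√(((k : ℕ) + 1) * ((l : ℕ) + 1) : ℕ) : ℝ) : ℂ)
      = ((√(k + 1) : ℝ) : ℂ) * ((√(l + 1) : ℝ) : ℂ) := by
    push_cast
    rw [Real.sqrt_mul (by positivity), Complex.ofReal_mul]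
  simp only [grunskyK, hroot]
  rfl

end Truncation

/-! ### Grunsky series -/

/-- The double power series `∑ a_{kl} u ^ k * v ^ l` over `k, l ≥ 1`, where `A k l = a_{k+1,l+1}`.
In terms of `u = ζ⁻¹` and `v = z⁻¹` this is the Grunsky expansion
`-log ((φ ζ - φ z) / (ζ - z))`. -/
noncomputable def grunskySeries (A : ℕ → ℕ → ℂ) (u v : ℂ) : ℂ :=
  ∑' p : ℕ × ℕ, A p.1 p.2 * u ^ (p.1 + 1) * v ^ (p.2 + 1)

/-- The map `φ`, defined on the exterior of the open unit disc, has the Grunsky coefficients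
`a_{k+1,l+1} = A k l`, with an expansion that converges absolutely up to the unit circle. -/
structure HasGrunskyCoeffs (φ : ℂ → ℂ) (A : ℕ → ℕ → ℂ) : Prop where
  symm : ∀ k l, A k l = A l k
  summable : Summable fun p : ℕ × ℕ => ‖A p.1 p.2‖
  sub_eq : ∀ {u v : ℂ}, u ≠ 0 → v ≠ 0 → ‖u‖ ≤ 1 → ‖v‖ ≤ 1 →
    φ u⁻¹ - φ v⁻¹ = (u⁻¹ - v⁻¹) * Complex.exp (-grunskySeries A u v)

lemma HasGrunskyCoeffs.of_expansion {φ : ℂ → ℂ} {a : ℕ → ℕ → ℂ} (hsym : ∀ k l, a k l = a l k)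
    (hGrunsky : ∀ z ζ : ℂ, 1 ≤ ‖z‖ → 1 ≤ ‖ζ‖ →
      Summable (fun p : ℕ × ℕ =>
        ‖a (p.1 + 1) (p.2 + 1) * ζ ^ (-(p.1 : ℤ) - 1) * z ^ (-(p.2 : ℤ) - 1)‖) ∧
      (z ≠ ζ → φ ζ - φ z = (ζ - z) * Complex.exp
        (-∑' p : ℕ × ℕ, a (p.1 + 1) (p.2 + 1) * ζ ^ (-(p.1 : ℤ) - 1) * z ^ (-(p.2 : ℤ) - 1)))) :
    HasGrunskyCoeffs φ fun k l => a (k + 1) (l + 1) where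
  symm k l := hsym _ _
  summable := by simpa using (hGrunsky 1 1 (by simp) (by simp)).1
  sub_eq {u v} hu0 hv0 hu hv := by
    have hpow (w : ℂ) (k : ℕ) : w⁻¹ ^ (-(k : ℤ) - 1) = w ^ (k + 1) := by
      rw [_root_.inv_zpow', neg_sub, sub_neg_eq_add, add_comm]
      exact zpow_natCast w (k + 1)
    have hle {w : ℂ} (hw0 : w ≠ 0) (hw : ‖w‖ ≤ 1) : 1 ≤ ‖w⁻¹‖ := by
      rw [norm_inv]; exact (one_le_inv₀ (norm_pos_iff.2 hw0)).2 hw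
    rcases eq_or_ne u v with rfl | huv
    · simp
    · simpa only [hpow, grunskySeries] using
        (hGrunsky v⁻¹ u⁻¹ (hle hv0 hv) (hle hu0 hu)).2 (inv_injective.ne huv.symm)

section GrunskySeries

variable {A : ℕ → ℕ → ℂ}

lemma grunskySeries_comm (hsym : ∀ k l, A k l = A l k) (u v : ℂ) :
    grunskySeries A u v = grunskySeries A v u := by
  rw [grunskySeries, ← (Equiv.prodComm ℕ ℕ).tsum_eq]
  refine tsum_congr fun p => ?_
  simp only [Equiv.prodComm_apply, Prod.fst_swap, Prod.snd_swap]
  rw [hsym, mul_right_comm]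

lemma grunskySeries_zero_left (v : ℂ) : grunskySeries A 0 v = 0 := by simp [grunskySeries]

lemma norm_grunskySeries_term_le {u v : ℂ} (hu : ‖u‖ ≤ 1) (hv : ‖v‖ ≤ 1) (p : ℕ × ℕ) :
    ‖A p.1 p.2 * u ^ (p.1 + 1) * v ^ (p.2 + 1)‖ ≤ ‖A p.1 p.2‖ := by
  rw [norm_mul, norm_mul, norm_pow, norm_pow, mul_assoc]
  exact mul_le_of_le_one_right (norm_nonneg _)
    (mul_le_one₀ (pow_le_one₀ (norm_nonneg _) hu) (by positivity) (pow_le_one₀ (norm_nonneg _) hv))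

variable (hA : Summable fun p : ℕ × ℕ => ‖A p.1 p.2‖)
include hA

lemma hasSum_grunskySeries {u v : ℂ} (hu : ‖u‖ ≤ 1) (hv : ‖v‖ ≤ 1) :
    HasSum (fun p : ℕ × ℕ => A p.1 p.2 * u ^ (p.1 + 1) * v ^ (p.2 + 1)) (grunskySeries A u v) :=
  (Summable.of_norm_bounded hA (norm_grunskySeries_term_le hu hv)).hasSum

lemma continuousOn_grunskySeries {X : Type*} [TopologicalSpace X] {s : Set X} {f g : X → ℂ}
    (hf : ContinuousOn f s) (hg : ContinuousOn g s) (hf1 : ∀ x ∈ s, ‖f x‖ ≤ 1)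
    (hg1 : ∀ x ∈ s, ‖g x‖ ≤ 1) : ContinuousOn (fun x => grunskySeries A (f x) (g x)) s :=
  continuousOn_tsum
    (fun p => (continuousOn_const.mul (hf.pow (p.1 + 1))).mul (hg.pow (p.2 + 1))) hA
    fun p x hx => norm_grunskySeries_term_le (hf1 x hx) (hg1 x hx) p

lemma differentiableOn_grunskySeries {U : Set ℂ} (hU : IsOpen U) {f g : ℂ → ℂ}
    (hf : DifferentiableOn ℂ f U) (hg : DifferentiableOn ℂ g U) (hf1 : ∀ x ∈ U, ‖f x‖ ≤ 1)
    (hg1 : ∀ x ∈ U, ‖g x‖ ≤ 1) : DifferentiableOn ℂ (fun x => grunskySeries A (f x) (g x)) U :=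
  Complex.differentiableOn_tsum_of_summable_norm hA
    (fun p => (hf.pow (p.1 + 1)).const_mul _ |>.mul (hg.pow (p.2 + 1))) hU
    fun p x hx => norm_grunskySeries_term_le (hf1 x hx) (hg1 x hx) p

lemma quadExp_powerSum {n : ℕ} {x : Fin n → ℂ} (hx : x ∈ unitTorus n) :
    quadExp A (powerSum x) = Complex.exp (-(1 / 2) * ∑ i, ∑ j, grunskySeries A (x i) (x j)) := by
  have hsum : HasSum (fun p : ℕ × ℕ => ∑ i, ∑ j, A p.1 p.2 * x i ^ (p.1 + 1) * x j ^ (p.2 + 1))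
      (∑ i, ∑ j, grunskySeries A (x i) (x j)) :=
    hasSum_sum fun i _ => hasSum_sum fun j _ => hasSum_grunskySeries hA (hx i).le (hx j).le
  rw [quadExp, ← (hsum.mul_left (-(1 / 2))).tsum_eq]
  refine congrArg Complex.exp (tsum_congr fun p => ?_)
  rw [powerSum, powerSum, Finset.sum_mul_sum]
  simp only [mul_assoc, Finset.mul_sum]

end GrunskySeries

section Derivative

lemma hasDerivAt_of_sub_eq_sub_mul {𝕜 R : Type*} [NontriviallyNormedField 𝕜] [NormedRing R]
    [NormedAlgebra 𝕜 R] {f g Q : 𝕜 → R} {g' : R} {x : 𝕜} (hg : HasDerivAt g g' x)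
    (hQ : ContinuousAt Q x) (h : ∀ᶠ y in nhds x, f y - f x = (g y - g x) * Q y) :
    HasDerivAt f (g' * Q x) x := by
  rw [hasDerivAt_iff_tendsto_slope] at hg ⊢
  refine (hg.mul (hQ.tendsto.mono_left nhdsWithin_le_nhds)).congr' ?_
  filter_upwards [nhdsWithin_le_nhds h] with y hy
  rw [slope_def_module, slope_def_module, hy, smul_mul_assoc]

namespace HasGrunskyCoeffs

variable {φ ψ : ℂ → ℂ} {A : ℕ → ℕ → ℂ} (h : HasGrunskyCoeffs φ A)
include h

lemma deriv_eq {z : ℂ} (hz : 1 < ‖z‖) :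
    deriv φ z = Complex.exp (-grunskySeries A z⁻¹ z⁻¹) := by
  have hopen : {w : ℂ | 1 < ‖w‖} ∈ nhds z :=
    (isOpen_lt continuous_const continuous_norm).mem_nhds hz
  have hne {w : ℂ} (hw : 1 < ‖w‖) : w ≠ 0 := norm_pos_iff.1 (one_pos.trans hw)
  have hle {w : ℂ} (hw : 1 < ‖w‖) : ‖w⁻¹‖ ≤ 1 := by
    rw [norm_inv]; exact inv_le_one_of_one_le₀ hw.le
  have hQ : ContinuousOn (fun w => Complex.exp (-grunskySeries A w⁻¹ z⁻¹)) {w | 1 < ‖w‖} :=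
    (continuousOn_grunskySeries h.summable (continuousOn_id.inv₀ fun w => hne) continuousOn_const
      (fun w => hle) fun w _ => hle hz).neg.cexp
  have hd := hasDerivAt_of_sub_eq_sub_mul (f := φ) (hasDerivAt_id z) (hQ.continuousAt hopen) <| by
    filter_upwards [hopen] with w hw
    simpa using h.sub_eq (inv_ne_zero (hne hw)) (inv_ne_zero (hne hz)) (hle hw) (hle hz)
  rw [hd.deriv, one_mul]

lemma apply_inv_eq_of_eq_deriv (hψcont : ContinuousOn ψ {z : ℂ | 1 ≤ ‖z‖})
    (hψ : ∀ z : ℂ, 1 < ‖z‖ → ψ z = deriv φ z) {u : ℂ} (hu : ‖u‖ = 1) :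
    ψ u⁻¹ = Complex.exp (-grunskySeries A u u) := by
  have hcont : ContinuousOn (fun z => Complex.exp (-grunskySeries A z⁻¹ z⁻¹)) {z | 1 ≤ ‖z‖} := by
    have hinv : ContinuousOn (fun z : ℂ => z⁻¹) {z | 1 ≤ ‖z‖} :=
      continuousOn_id.inv₀ fun z hz => norm_pos_iff.1 (one_pos.trans_le hz)
    have hle (z : ℂ) (hz : 1 ≤ ‖z‖) : ‖z⁻¹‖ ≤ 1 := by
      rw [norm_inv]; exact inv_le_one_of_one_le₀ hz
    exact (continuousOn_grunskySeries h.summable hinv hinv hle hle).neg.cexp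
  have hclosure : {z : ℂ | 1 ≤ ‖z‖} ⊆ closure {z : ℂ | 1 < ‖z‖} := fun z hz => by
    have : {z : ℂ | 1 < ‖z‖} = (Metric.closedBall 0 1)ᶜ := by ext; simp
    rw [this, closure_compl, interior_closedBall _ one_ne_zero]
    simpa using hz
  have heq : Set.EqOn ψ (fun z => Complex.exp (-grunskySeries A z⁻¹ z⁻¹)) {z | 1 ≤ ‖z‖} :=
    Set.EqOn.of_subset_closure (fun z hz => (hψ z hz).trans (h.deriv_eq hz)) hψcont hcont
      (fun z hz => le_of_lt (α := ℝ) hz) hclosure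
  simpa using heq (show 1 ≤ ‖u⁻¹‖ by simp [hu])

end HasGrunskyCoeffs

end Derivative

section PartitionFunction

lemma prod_filter_lt {ι M : Type*} [Fintype ι] [LinearOrder ι] [LocallyFiniteOrderTop ι]
    [CommMonoid M] (f : ι → ι → M) :
    ∏ p : ι × ι with p.1 < p.2, f p.1 p.2 = ∏ i, ∏ j ∈ Finset.Ioi i, f i j := by
  rw [Finset.prod_filter, Fintype.prod_prod_type]
  simp only [← Finset.prod_filter, Finset.filter_lt_eq_Ioi]

lemma prod_filter_lt_sq_mul_prod_diag {ι M : Type*} [Fintype ι] [LinearOrder ι]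
    [LocallyFiniteOrderTop ι] [LocallyFiniteOrderBot ι] [CommMonoid M] {f : ι → ι → M}
    (hf : ∀ i j, f i j = f j i) :
    (∏ p : ι × ι with p.1 < p.2, f p.1 p.2) ^ 2 * ∏ i, f i i = ∏ i, ∏ j, f i j := by
  have hoff := Finset.prod_prod_Ioi_mul_eq_prod_prod_off_diag f
  simp only [hf, ← pow_two, Finset.prod_pow] at hoff
  rw [prod_filter_lt, hoff, ← Finset.prod_mul_distrib]
  exact Finset.prod_congr rfl fun i _ => by
    rw [Fintype.prod_eq_mul_prod_compl i (f i), mul_comm]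

lemma norm_inv_sub_inv_of_norm_eq_one {u v : ℂ} (hu : ‖u‖ = 1) (hv : ‖v‖ = 1) :
    ‖u⁻¹ - v⁻¹‖ = ‖u - v‖ := by
  rw [inv_sub_inv (ne_zero_of_norm_eq_one hu) (ne_zero_of_norm_eq_one hv), norm_div, norm_mul, hu,
    hv, norm_sub_rev, mul_one, div_one]

lemma norm_det_vandermonde {n : ℕ} (x : Fin n → ℂ) :
    ‖(vandermonde x).det‖ = ∏ p : Fin n × Fin n with p.1 < p.2, ‖x p.1 - x p.2‖ := by
  rw [det_vandermonde, norm_prod, prod_filter_lt fun i j => ‖x i - x j‖]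
  simp only [norm_prod, norm_sub_rev]

lemma HasGrunskyCoeffs.prod_norm_sub_sq_mul_prod_norm_exp {φ : ℂ → ℂ} {A : ℕ → ℕ → ℂ}
    (h : HasGrunskyCoeffs φ A) {n : ℕ} {x : Fin n → ℂ} (hx : x ∈ unitTorus n) :
    (∏ p : Fin n × Fin n with p.1 < p.2, ‖φ (x p.1)⁻¹ - φ (x p.2)⁻¹‖ ^ 2)
        * ∏ i, ‖Complex.exp (-grunskySeries A (x i) (x i))‖
      = ‖(vandermonde x).det‖ ^ 2 * ‖quadExp A (powerSum x)‖ ^ 2 := by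
  set e : Fin n → Fin n → ℝ := fun i j => ‖Complex.exp (-grunskySeries A (x i) (x j))‖
  have hne (i : Fin n) : x i ≠ 0 := ne_zero_of_norm_eq_one (hx i)
  have hsub (p : Fin n × Fin n) :
      ‖φ (x p.1)⁻¹ - φ (x p.2)⁻¹‖ = ‖x p.1 - x p.2‖ * e p.1 p.2 := by
    rw [h.sub_eq (hne _) (hne _) (hx _).le (hx _).le, norm_mul,
      norm_inv_sub_inv_of_norm_eq_one (hx _) (hx _)]
  have hexp : ‖quadExp A (powerSum x)‖ ^ 2 = ∏ i, ∏ j, e i j := by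
    simp only [e, ← norm_prod, ← Complex.exp_sum, Finset.sum_neg_distrib]
    rw [quadExp_powerSum h.summable hx, ← norm_pow, ← Complex.exp_nat_mul]
    ring_nf
  simp only [hsub, mul_pow, Finset.prod_mul_distrib, Finset.prod_pow]
  rw [hexp, norm_det_vandermonde, mul_assoc, prod_filter_lt_sq_mul_prod_diag fun i j => by
    simp only [e, grunskySeries_comm h.symm]]

lemma torusMeasure_eq_smul_map (n : ℕ) :
    torusMeasure n = (ENNReal.ofReal (2 * Real.pi))⁻¹ ^ n •
      (volume.restrict (Set.pi Set.univ fun _ : Fin n => Set.Icc (-Real.pi) Real.pi)).map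
        fun θ i => circleParam (θ i) := by
  rw [volume_pi, Measure.restrict_pi_pi,
    Measure.pi_map_pi fun _ => continuous_circleParam.measurable.aemeasurable]
  refine Measure.pi_eq fun s _ => ?_
  simp only [circleMeasure, Measure.smul_apply, Measure.pi_pi, smul_eq_mul,
    Finset.prod_mul_distrib, Finset.prod_const, Finset.card_univ, Fintype.card_fin]

lemma integral_torusMeasure {n : ℕ} {f : (Fin n → ℂ) → ℝ} (hf : ContinuousOn f (unitTorus n)) :
    ∫ x, f x ∂torusMeasure n = ((2 * Real.pi) ^ n)⁻¹ *
      ∫ θ in Set.pi Set.univ fun _ : Fin n => Set.Icc (-Real.pi) Real.pi,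
        f fun i => circleParam (θ i) := by
  have hint := integrable_torusMeasure hf
  have hmeas : Measurable fun (θ : Fin n → ℝ) i => circleParam (θ i) :=
    measurable_pi_lambda _ fun i => continuous_circleParam.measurable.comp (measurable_pi_apply i)
  rw [torusMeasure_eq_smul_map, integrable_smul_measure
    (pow_ne_zero _ (ENNReal.inv_ne_zero.2 ENNReal.ofReal_ne_top))
    (ENNReal.pow_ne_top (by simp [Real.pi_pos]))] at hint
  rw [torusMeasure_eq_smul_map, integral_smul_measure, integral_map hmeas.aemeasurable hint.1,
    ENNReal.toReal_pow, ENNReal.toReal_inv, ENNReal.toReal_ofReal (by positivity), inv_pow,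
    smul_eq_mul]

lemma quadExpNormSq_eq_integral_torusMeasure (A : ℕ → ℕ → ℂ) (n : ℕ) :
    quadExpNormSq A n = (n.factorial : ℝ)⁻¹ *
      ∫ x, ‖(vandermonde x).det‖ ^ 2 * ‖quadExp A (powerSum x)‖ ^ 2 ∂torusMeasure n := by
  rw [quadExpNormSq, cueMeasure,
    integral_withDensity_eq_integral_smul continuous_cueDensity.measurable, ← integral_const_mul]
  refine integral_congr_ae (Eventually.of_forall fun x => ?_)
  simp only [cueDensity, NNReal.smul_def, smul_eq_mul]
  push_cast
  ring

theorem HasGrunskyCoeffs.partitionFunction_div_eq_quadExpNormSq {φ ψ : ℂ → ℂ} {A : ℕ → ℕ → ℂ}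
    (h : HasGrunskyCoeffs φ A) (hψcont : ContinuousOn ψ {z : ℂ | 1 ≤ ‖z‖})
    (hψ : ∀ z : ℂ, 1 < ‖z‖ → ψ z = deriv φ z) (n : ℕ) :
    1 / (n.factorial : ℝ) * (∫ θ in Set.pi Set.univ fun _ : Fin n => Set.Icc (-Real.pi) Real.pi,
        (∏ p : Fin n × Fin n with p.1 < p.2, ‖φ (Complex.exp (Complex.I * (θ p.1 : ℂ)))
          - φ (Complex.exp (Complex.I * (θ p.2 : ℂ)))‖ ^ 2)
        * ∏ i, ‖ψ (Complex.exp (Complex.I * (θ i : ℂ)))‖) / (2 * Real.pi) ^ n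
      = quadExpNormSq A n := by
  have hcont : ContinuousOn
      (fun x : Fin n → ℂ => ‖(vandermonde x).det‖ ^ 2 * ‖quadExp A (powerSum x)‖ ^ 2)
      (unitTorus n) :=
    (continuous_det_vandermonde.norm.pow 2).continuousOn.mul
      ((continuousOn_quadExp_powerSum h.summable).norm.pow 2)
  rw [quadExpNormSq_eq_integral_torusMeasure, integral_torusMeasure hcont]
  simp only [← circleParam_inv, h.apply_inv_eq_of_eq_deriv hψcont hψ (norm_circleParam _),
    ← h.prod_norm_sub_sq_mul_prod_norm_exp fun _ => norm_circleParam _]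
  ring

end PartitionFunction

/-! ### Lipschitz continuity of the Grunsky series on the circle -/

section TaylorBound

variable {E : Type*} [NormedAddCommGroup E] [NormedSpace ℝ E]

lemma exists_norm_sub_sub_smul_deriv_le {f : ℝ → E} (hf : ContDiff ℝ 2 f) (a b : ℝ) :
    ∃ C, 0 ≤ C ∧ ∀ s ∈ Set.Icc a b, ∀ t ∈ Set.Icc a b,
      ‖f s - f t - (s - t) • deriv f t‖ ≤ C * (s - t) ^ 2 := by
  have hderiv : ContDiff ℝ 1 (deriv f) := by
    rw [show (2 : WithTop ℕ∞) = 1 + 1 from one_add_one_eq_two.symm, contDiff_succ_iff_deriv] at hf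
    exact hf.2.2
  obtain ⟨L, hL⟩ := LocallyLipschitzOn.exists_lipschitzOnWith_of_compact isCompact_Icc
    (hderiv.locallyLipschitz.locallyLipschitzOn (s := Set.Icc a b))
  refine ⟨L, L.2, fun s hs t ht => ?_⟩
  have hsub : Set.uIcc t s ⊆ Set.Icc a b := Set.uIcc_subset_Icc ht hs
  have hd (x : ℝ) : HasDerivAt (fun x => f x - x • deriv f t) (deriv f x - deriv f t) x := by
    simpa only [one_smul] using ((hf.differentiable two_ne_zero x).hasDerivAt).fun_sub
      ((hasDerivAt_id' x).smul_const (deriv f t))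
  have hbound (x : ℝ) (hx : x ∈ Set.uIcc t s) : ‖deriv f x - deriv f t‖ ≤ L * |s - t| := by
    refine (hL.norm_sub_le (hsub hx) ht).trans ?_
    gcongr
    exact Set.abs_sub_left_of_mem_uIcc hx
  have hmv := (convex_uIcc t s).norm_image_sub_le_of_norm_hasDerivWithin_le
    (fun x _ => (hd x).hasDerivWithinAt) hbound Set.left_mem_uIcc Set.right_mem_uIcc
  rw [sub_sub_sub_comm, ← sub_smul] at hmv
  rwa [← sq_abs, pow_two, ← mul_assoc]

end TaylorBound

lemma exists_circleParam_eq_abs_sub_le {u v : ℂ} (hu : ‖u‖ = 1) (hv : ‖v‖ = 1) :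
    ∃ s ∈ Set.Icc (-(2 * Real.pi)) (2 * Real.pi), ∃ t ∈ Set.Icc (-(2 * Real.pi)) (2 * Real.pi),
      circleParam s = u ∧ circleParam t = v ∧ |s - t| ≤ Real.pi / 2 * ‖u - v‖ := by
  have hu0 := ne_zero_of_norm_eq_one hu
  have hv0 := ne_zero_of_norm_eq_one hv
  have hparam {z : ℂ} (hz : ‖z‖ = 1) : circleParam (-z.arg) = z := by
    have := Complex.norm_mul_exp_arg_mul_I z
    rw [hz, Complex.ofReal_one, one_mul] at this
    rw [circleParam, Complex.ofReal_neg, mul_neg, neg_neg, mul_comm, this]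
  have hadd (s t : ℝ) : circleParam (s + t) = circleParam s * circleParam t := by
    rw [circleParam, circleParam, circleParam, ← Complex.exp_add]
    push_cast
    ring_nf
  have harg := Complex.abs_arg_le_pi v
  have harg' := Complex.abs_arg_le_pi (u / v)
  rw [abs_le] at harg harg'
  refine ⟨-(u / v).arg + -v.arg, ⟨by linarith, by linarith⟩, -v.arg, ⟨by linarith, by linarith⟩,
    ?_, hparam hv, ?_⟩
  · rw [hadd, hparam hv, hparam (by rw [norm_div, hu, hv, div_one]), div_mul_cancel₀ _ hv0]
  · rw [add_sub_cancel_right, abs_neg, ← Complex.angle_eq_abs_arg hu0 hv0]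
    exact Complex.angle_le_mul_norm_sub hu hv

/-- The kernel `exp (g(u, v) - g(u, u) / 2 - g(v, v) / 2)`, where `g` is the Grunsky series. Up to a
Cauchy kernel it is the generating function of normalized Faber polynomials. -/
noncomputable def grunskyKernel (A : ℕ → ℕ → ℂ) (u v : ℂ) : ℂ :=
  Complex.exp (grunskySeries A u v - grunskySeries A u u / 2 - grunskySeries A v v / 2)

section Lipschitz

variable {A : ℕ → ℕ → ℂ}

lemma norm_exp_le_of_norm_le {z : ℂ} {r : ℝ} (hz : ‖z‖ ≤ r) : ‖Complex.exp z‖ ≤ Real.exp r :=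
  (Complex.norm_exp_le_exp_norm z).trans (Real.exp_le_exp.2 hz)

lemma norm_grunskySeries_le (hA : Summable fun p : ℕ × ℕ => ‖A p.1 p.2‖) {u v : ℂ}
    (hu : ‖u‖ ≤ 1) (hv : ‖v‖ ≤ 1) : ‖grunskySeries A u v‖ ≤ ∑' p : ℕ × ℕ, ‖A p.1 p.2‖ :=
  tsum_of_norm_bounded hA.hasSum (norm_grunskySeries_term_le hu hv)

lemma grunskyKernel_self (u : ℂ) : grunskyKernel A u u = 1 := by
  rw [grunskyKernel, sub_sub, add_halves, sub_self, Complex.exp_zero]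

lemma continuousOn_grunskyKernel (hA : Summable fun p : ℕ × ℕ => ‖A p.1 p.2‖) {X : Type*}
    [TopologicalSpace X] {s : Set X} {f g : X → ℂ} (hf : ContinuousOn f s)
    (hg : ContinuousOn g s) (hf1 : ∀ x ∈ s, ‖f x‖ ≤ 1) (hg1 : ∀ x ∈ s, ‖g x‖ ≤ 1) :
    ContinuousOn (fun x => grunskyKernel A (f x) (g x)) s :=
  (((continuousOn_grunskySeries hA hf hg hf1 hg1).sub
    ((continuousOn_grunskySeries hA hf hf hf1 hf1).div_const 2)).sub
    ((continuousOn_grunskySeries hA hg hg hg1 hg1).div_const 2)).cexp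

lemma norm_sub_one_le_norm_sq_sub_one {z : ℂ} (hz : ‖z - 1‖ ≤ 1) : ‖z - 1‖ ≤ ‖z ^ 2 - 1‖ := by
  have hadd : 1 ≤ ‖z + 1‖ := by
    have := norm_sub_le (z + 1) (z - 1)
    rw [add_sub_sub_cancel, one_add_one_eq_two, Complex.norm_ofNat] at this
    linarith
  rw [← one_pow (M := ℂ) 2, sq_sub_sq, one_pow, norm_mul]
  exact le_mul_of_one_le_left (norm_nonneg _) hadd

namespace HasGrunskyCoeffs

variable {φ : ℂ → ℂ} (h : HasGrunskyCoeffs φ A)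
include h

lemma norm_exp_neg_grunskySeries_le {u v : ℂ} (hu : ‖u‖ ≤ 1) (hv : ‖v‖ ≤ 1) :
    ‖Complex.exp (-grunskySeries A u v)‖ ≤ Real.exp (∑' p : ℕ × ℕ, ‖A p.1 p.2‖) :=
  norm_exp_le_of_norm_le (by rw [norm_neg]; exact norm_grunskySeries_le h.summable hu hv)

lemma sub_circleParam (s t : ℝ) :
    φ (Complex.exp (Complex.I * s)) - φ (Complex.exp (Complex.I * t))
      = (Complex.exp (Complex.I * s) - Complex.exp (Complex.I * t))
        * Complex.exp (-grunskySeries A (circleParam s) (circleParam t)) := by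
  simp only [← circleParam_inv]
  exact h.sub_eq (Complex.exp_ne_zero _) (Complex.exp_ne_zero _) (norm_circleParam s).le
    (norm_circleParam t).le

lemma deriv_circleParam (t : ℝ) :
    deriv (fun s : ℝ => φ (Complex.exp (Complex.I * s))) t
      = deriv (fun s : ℝ => Complex.exp (Complex.I * s)) t
        * Complex.exp (-grunskySeries A (circleParam t) (circleParam t)) := by
  have hexp : Differentiable ℝ fun s : ℝ => Complex.exp (Complex.I * s) := by fun_prop
  have hQ : Continuous fun s : ℝ =>
      Complex.exp (-grunskySeries A (circleParam s) (circleParam t)) :=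
    continuousOn_univ.1 (continuousOn_grunskySeries h.summable continuous_circleParam.continuousOn
      continuousOn_const (fun s _ => (norm_circleParam s).le)
      fun _ _ => (norm_circleParam t).le).neg.cexp
  exact (hasDerivAt_of_sub_eq_sub_mul (hexp t).hasDerivAt hQ.continuousAt
    (Eventually.of_forall fun s => h.sub_circleParam s t)).deriv

lemma exists_norm_exp_neg_sub_exp_neg_le
    (hφ : ContDiff ℝ 2 fun θ : ℝ => φ (Complex.exp (Complex.I * θ))) :
    ∃ C, ∀ u v : ℂ, ‖u‖ = 1 → ‖v‖ = 1 →
      ‖Complex.exp (-grunskySeries A u v) - Complex.exp (-grunskySeries A v v)‖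
        ≤ C * ‖u - v‖ := by
  set S := ∑' p : ℕ × ℕ, ‖A p.1 p.2‖
  obtain ⟨C₁, hC₁, hφle⟩ := exists_norm_sub_sub_smul_deriv_le hφ (-(2 * Real.pi)) (2 * Real.pi)
  obtain ⟨C₂, hC₂, hexple⟩ := exists_norm_sub_sub_smul_deriv_le
    (f := fun θ : ℝ => Complex.exp (Complex.I * θ))
    (contDiff_const.mul Complex.ofRealCLM.contDiff).cexp (-(2 * Real.pi)) (2 * Real.pi)
  refine ⟨(C₁ + C₂ * Real.exp S) * (Real.pi / 2) ^ 2, fun u v hu hv => ?_⟩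
  rcases eq_or_ne u v with rfl | huv
  · simp
  obtain ⟨s, hs, t, ht, rfl, rfl, hst⟩ := exists_circleParam_eq_abs_sub_le hu hv
  set Q := Complex.exp (-grunskySeries A (circleParam s) (circleParam t))
  set Q' := Complex.exp (-grunskySeries A (circleParam t) (circleParam t))
  set δ := ‖circleParam s - circleParam t‖ with hδ
  have hδexp : δ = ‖Complex.exp (Complex.I * s) - Complex.exp (Complex.I * t)‖ := by
    rw [hδ, ← norm_inv_sub_inv_of_norm_eq_one hu hv, circleParam_inv, circleParam_inv]
  have hφst := hφle s hs t ht
  rw [h.deriv_circleParam, h.sub_circleParam] at hφst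
  have hexpst := mul_le_mul (hexple s hs t ht)
    (h.norm_exp_neg_grunskySeries_le hv.le hv.le) (norm_nonneg _) (by positivity)
  rw [← norm_mul] at hexpst
  have hquad : δ * ‖Q - Q'‖ ≤ (C₁ + C₂ * Real.exp S) * (s - t) ^ 2 := by
    rw [hδexp, ← norm_mul]
    refine le_trans (le_of_eq (congrArg norm ?_))
      ((norm_sub_le_of_le hφst hexpst).trans_eq (by ring))
    simp only [Complex.real_smul]
    ring
  refine le_of_mul_le_mul_left (hquad.trans ?_) (norm_pos_iff.2 (sub_ne_zero.2 huv))
  calc (C₁ + C₂ * Real.exp S) * (s - t) ^ 2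
      ≤ (C₁ + C₂ * Real.exp S) * (Real.pi / 2 * δ) ^ 2 := by
        rw [← sq_abs (s - t)]; gcongr
    _ = δ * ((C₁ + C₂ * Real.exp S) * (Real.pi / 2) ^ 2 * δ) := by ring

lemma exists_norm_grunskyKernel_sq_sub_one_le
    (hφ : ContDiff ℝ 2 fun θ : ℝ => φ (Complex.exp (Complex.I * θ))) :
    ∃ C, ∀ u v : ℂ, ‖u‖ = 1 → ‖v‖ = 1 → ‖grunskyKernel A u v ^ 2 - 1‖ ≤ C * ‖u - v‖ := by
  obtain ⟨C, hC⟩ := h.exists_norm_exp_neg_sub_exp_neg_le hφ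
  set S := ∑' p : ℕ × ℕ, ‖A p.1 p.2‖
  refine ⟨Real.exp (S + S) * (2 * Real.exp S * C), fun u v hu hv => ?_⟩
  set Q : ℂ → ℂ → ℂ := fun u v => Complex.exp (-grunskySeries A u v)
  have hQle {u v : ℂ} (hu : ‖u‖ = 1) (hv : ‖v‖ = 1) : ‖Q u v‖ ≤ Real.exp S :=
    h.norm_exp_neg_grunskySeries_le hu.le hv.le
  have hcomm : Q u v = Q v u := by simp only [Q, grunskySeries_comm h.symm u]
  have hsq : grunskyKernel A u v ^ 2 - 1 = Complex.exp (grunskySeries A u v + grunskySeries A u v)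
      * (Q u v * (Q v v - Q u v) + (Q u u - Q v u) * Q v v) := by
    have hexp : grunskyKernel A u v ^ 2 = Complex.exp (grunskySeries A u v + grunskySeries A u v)
        * (Q u u * Q v v) := by
      rw [grunskyKernel, ← Complex.exp_nat_mul, ← Complex.exp_add, ← Complex.exp_add]
      push_cast
      ring_nf
    have hone : Complex.exp (grunskySeries A u v + grunskySeries A u v) * Q u v ^ 2 = 1 := by
      rw [← Complex.exp_nat_mul, ← Complex.exp_add]
      push_cast
      ring_nf
      exact Complex.exp_zero
    rw [hexp, ← hone, ← hcomm]
    ring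
  have hg := norm_grunskySeries_le h.summable hu.le hv.le
  rw [hsq, norm_mul, mul_assoc]
  gcongr
  · exact norm_exp_le_of_norm_le (norm_add_le_of_le hg hg)
  calc ‖Q u v * (Q v v - Q u v) + (Q u u - Q v u) * Q v v‖
      ≤ Real.exp S * (C * ‖u - v‖) + C * ‖u - v‖ * Real.exp S := by
        refine norm_add_le_of_le (norm_mul_le_of_le (hQle hu hv) ?_)
          (norm_mul_le_of_le ?_ (hQle hv hv))
        · rw [norm_sub_rev]; exact hC u v hu hv
        · rw [norm_sub_rev, norm_sub_rev u]; exact hC v u hv hu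
    _ = 2 * Real.exp S * C * ‖u - v‖ := by ring

lemma exists_norm_grunskyKernel_sub_one_le
    (hφ : ContDiff ℝ 2 fun θ : ℝ => φ (Complex.exp (Complex.I * θ))) :
    ∃ M, ∀ u v : ℂ, ‖u‖ = 1 → ‖v‖ = 1 → ‖grunskyKernel A u v - 1‖ ≤ M * ‖u - v‖ := by
  obtain ⟨C, hC⟩ := h.exists_norm_grunskyKernel_sq_sub_one_le hφ
  have hE : ContinuousOn (fun p : ℂ × ℂ => grunskyKernel A p.1 p.2)
      (Metric.sphere 0 1 ×ˢ Metric.sphere 0 1) :=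
    continuousOn_grunskyKernel h.summable continuousOn_fst continuousOn_snd
      (fun p hp => (mem_sphere_zero_iff_norm.1 hp.1).le)
      fun p hp => (mem_sphere_zero_iff_norm.1 hp.2).le
  have hcompact : IsCompact (Metric.sphere (0 : ℂ) 1 ×ˢ Metric.sphere (0 : ℂ) 1) :=
    (isCompact_sphere _ _).prod (isCompact_sphere _ _)
  obtain ⟨B, hB⟩ := hcompact.exists_bound_of_continuousOn (hE.sub continuousOn_const)
  obtain ⟨δ, hδ, hnear⟩ := Metric.uniformContinuousOn_iff_le.1
    (hcompact.uniformContinuousOn_of_continuous hE) 1 one_pos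
  refine ⟨max C (B / δ), fun u v hu hv => ?_⟩
  have hu' := mem_sphere_zero_iff_norm.2 hu
  have hv' := mem_sphere_zero_iff_norm.2 hv
  rcases le_total ‖u - v‖ δ with huv | huv
  · have hone : ‖grunskyKernel A u v - 1‖ ≤ 1 := by
      have := hnear (u, v) ⟨hu', hv'⟩ (v, v) ⟨hv', hv'⟩ (by simpa [Prod.dist_eq, dist_eq_norm])
      simpa [dist_eq_norm, grunskyKernel_self] using this
    refine (norm_sub_one_le_norm_sq_sub_one hone).trans ((hC u v hu hv).trans ?_)
    gcongr
    exact le_max_left _ _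
  · have hB0 : 0 ≤ B := (norm_nonneg _).trans (hB (u, v) ⟨hu', hv'⟩)
    calc ‖grunskyKernel A u v - 1‖ ≤ B / δ * δ := by
          rw [div_mul_cancel₀ _ hδ.ne']; exact hB (u, v) ⟨hu', hv'⟩
      _ ≤ max C (B / δ) * ‖u - v‖ := by
          gcongr
          exact le_max_right _ _

end HasGrunskyCoeffs

end Lipschitz

/-! ### Taylor series on the unit disc -/

section MaximumModulus

lemma norm_sub_le_norm_sub_smul {F : Type*} [NormedAddCommGroup F] [InnerProductSpace ℝ F]
    {u v : F} (h : ‖u‖ ≤ ‖v‖) {R : ℝ} (hR : 1 ≤ R) : ‖u - v‖ ≤ ‖u - R • v‖ := by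
  have hinner : inner ℝ u v ≤ ‖v‖ ^ 2 := (real_inner_le_norm u v).trans <| by
    rw [pow_two]
    gcongr
  rw [← sq_le_sq₀ (norm_nonneg _) (norm_nonneg _), norm_sub_sq_real, norm_sub_sq_real, norm_smul,
    inner_smul_right, Real.norm_of_nonneg (by linarith)]
  nlinarith [mul_nonneg (sub_nonneg.2 hR) (sub_nonneg.2 hinner), sq_nonneg ((R - 1) * ‖v‖)]

variable {E : Type*} [NormedAddCommGroup E] [NormedSpace ℂ E]

/-- The maximum modulus principle is applied to `f z / (z - R v)` for `R > 1`, and `R` tends to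
`1`. -/
theorem norm_le_mul_norm_sub_of_forall_sphere {f : ℂ → E}
    (hf : DiffContOnCl ℂ f (Metric.ball 0 1)) {v : ℂ} (hv : ‖v‖ = 1) {M : ℝ}
    (hM : ∀ u, ‖u‖ = 1 → ‖f u‖ ≤ M * ‖u - v‖) {z : ℂ} (hz : ‖z‖ ≤ 1) :
    ‖f z‖ ≤ M * ‖z - v‖ := by
  have hM0 : 0 ≤ M := by
    have := (norm_nonneg _).trans (hM (-v) (by rwa [norm_neg]))
    rw [norm_sub_rev, sub_neg_eq_add, ← two_mul, norm_mul, hv, Complex.norm_ofNat] at this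
    linarith
  have hle (R : ℝ) (hR : 1 < R) : ‖f z‖ ≤ M * ‖z - R * v‖ := by
    have hne {w : ℂ} (hw : ‖w‖ ≤ 1) : w - R * v ≠ 0 := sub_ne_zero.2 fun h => by
      rw [h, norm_mul, hv, Complex.norm_of_nonneg (by linarith)] at hw
      linarith
    have hdiff : DiffContOnCl ℂ (fun w => (w - R * v)⁻¹ • f w) (Metric.ball 0 1) :=
      ((differentiable_id.sub_const _).diffContOnCl.inv fun w hw => hne
        (mem_closedBall_zero_iff.1 (Metric.closure_ball_subset_closedBall hw))).smul hf
    have hmax := Complex.norm_le_of_forall_mem_frontier_norm_le Metric.isBounded_ball hdiff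
      (C := M) (fun w hw => ?_) (z := z) (by
        rwa [closure_ball _ one_ne_zero, mem_closedBall_zero_iff])
    · rwa [norm_smul, norm_inv, inv_mul_le_iff₀ (norm_pos_iff.2 (hne hz)), mul_comm] at hmax
    · rw [frontier_ball _ one_ne_zero, mem_sphere_zero_iff_norm] at hw
      rw [norm_smul, norm_inv, inv_mul_le_iff₀ (norm_pos_iff.2 (hne hw.le)), mul_comm]
      have hRv := norm_sub_le_norm_sub_smul (hw.trans hv.symm).le hR.le
      rw [Complex.real_smul] at hRv
      exact (hM w hw).trans (by gcongr)
  have hlim : Tendsto (fun R : ℝ => M * ‖z - R * v‖) (nhdsWithin 1 (Set.Ioi 1))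
      (nhds (M * ‖z - (1 : ℝ) * v‖)) :=
    (Continuous.tendsto (by fun_prop) 1).mono_left nhdsWithin_le_nhds
  rw [Complex.ofReal_one, one_mul] at hlim
  exact ge_of_tendsto hlim (eventually_nhdsWithin_of_forall hle)

end MaximumModulus

/-- The Taylor series at `0` of a function `f : ℂ → ℂ`, as a formal power series. -/
noncomputable def taylorSeries (f : ℂ → ℂ) : PowerSeries ℂ :=
  PowerSeries.mk fun n => iteratedDeriv n f 0 / n.factorial

section TaylorSeries

variable {f g : ℂ → ℂ}

lemma constantCoeff_taylorSeries (f : ℂ → ℂ) :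
    PowerSeries.constantCoeff (taylorSeries f) = f 0 := by
  simp [taylorSeries, ← PowerSeries.coeff_zero_eq_constantCoeff_apply]

lemma taylorSeries_congr (h : f =ᶠ[nhds 0] g) : taylorSeries f = taylorSeries g := by
  simp only [taylorSeries, h.iteratedDeriv_eq]

lemma taylorSeries_const (c : ℂ) : taylorSeries (fun _ => c) = PowerSeries.C c := by
  ext n
  rw [taylorSeries, PowerSeries.coeff_mk, iteratedDeriv_const, PowerSeries.coeff_C]
  split_ifs with hn <;> simp [hn]

lemma taylorSeries_id : taylorSeries (fun z => z) = PowerSeries.X := by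
  ext n
  rw [taylorSeries, PowerSeries.coeff_mk, iteratedDeriv_fun_id_zero, PowerSeries.coeff_X]
  split_ifs with hn <;> simp [hn]

lemma taylorSeries_sub (hf : AnalyticAt ℂ f 0) (hg : AnalyticAt ℂ g 0) :
    taylorSeries (fun z => f z - g z) = taylorSeries f - taylorSeries g := by
  ext n
  simp only [taylorSeries, map_sub, PowerSeries.coeff_mk]
  rw [iteratedDeriv_fun_sub hf.contDiffAt hg.contDiffAt, sub_div]

lemma taylorSeries_mul (hf : AnalyticAt ℂ f 0) (hg : AnalyticAt ℂ g 0) :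
    taylorSeries (fun z => f z * g z) = taylorSeries f * taylorSeries g := by
  ext n
  simp only [taylorSeries, PowerSeries.coeff_mk, PowerSeries.coeff_mul,
    iteratedDeriv_fun_mul hf.contDiffAt hg.contDiffAt, Finset.sum_div,
    Finset.Nat.sum_antidiagonal_eq_sum_range_succ_mk]
  refine Finset.sum_congr rfl fun i hi => ?_
  rw [Nat.cast_choose _ (Finset.mem_range_succ_iff.1 hi)]
  field_simp [Nat.factorial_ne_zero]

variable (hf : DifferentiableOn ℂ f (Metric.ball 0 1))
include hf

lemma hasSum_taylorSeries {z : ℂ} (hz : ‖z‖ < 1) :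
    HasSum (fun n => PowerSeries.coeff n (taylorSeries f) * z ^ n) (f z) := by
  refine (Complex.hasSum_taylorSeries_on_ball hf (mem_ball_zero_iff.2 hz)).congr_fun fun n => ?_
  rw [taylorSeries, PowerSeries.coeff_mk, sub_zero, smul_eq_mul, smul_eq_mul]
  ring

lemma hasSum_norm_sq_coeff_taylorSeries {ρ : ℝ} (hρ : 0 ≤ ρ) (hρ' : ρ < 1) :
    HasSum (fun n => ‖PowerSeries.coeff n (taylorSeries f) * ρ ^ n‖ ^ 2)
      (∫ u, ‖f (ρ * u)‖ ^ 2 ∂circleMeasure) := by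
  have hnorm : ‖(ρ : ℂ)‖ < 1 := by rwa [Complex.norm_of_nonneg hρ]
  refine hasSum_norm_sq_of_orthonormal (e := fun n u => u ^ n)
    (fun n => Continuous.aestronglyMeasurable (by fun_prop))
    (ae_norm_eq_one.mono fun u hu n => by simp [hu]) (hasSum_taylorSeries hf hnorm).summable.norm
    (ae_norm_eq_one.mono fun u hu => ?_) fun a b => ?_
  · simpa only [mul_pow, mul_assoc] using
      hasSum_taylorSeries hf (z := ρ * u) (by rwa [norm_mul, hu, mul_one])
  · simpa only [map_pow] using integral_pow_mul_conj_pow a b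

theorem sum_norm_sq_coeff_taylorSeries_le {M : ℝ} (hM : ∀ z, ‖z‖ < 1 → ‖f z‖ ≤ M)
    (s : Finset ℕ) : ∑ n ∈ s, ‖PowerSeries.coeff n (taylorSeries f)‖ ^ 2 ≤ M ^ 2 := by
  have hle (ρ : ℝ) (hρ : ρ ∈ Set.Ioo 0 1) :
      ∑ n ∈ s, ‖PowerSeries.coeff n (taylorSeries f) * ρ ^ n‖ ^ 2 ≤ M ^ 2 := by
    refine (sum_le_hasSum s (fun _ _ => sq_nonneg _)
      (hasSum_norm_sq_coeff_taylorSeries hf hρ.1.le hρ.2)).trans ?_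
    have hint : ∀ᵐ u ∂circleMeasure, ‖f (ρ * u)‖ ^ 2 ≤ M ^ 2 := ae_norm_eq_one.mono fun u hu =>
      pow_le_pow_left₀ (norm_nonneg _)
        (hM _ (by rw [norm_mul, hu, mul_one, Complex.norm_of_nonneg hρ.1.le]; exact hρ.2)) 2
    simpa using integral_mono_of_nonneg (.of_forall fun _ => sq_nonneg _)
      (integrable_const (M ^ 2)) hint
  have hlim : Tendsto (fun ρ : ℝ => ∑ n ∈ s, ‖PowerSeries.coeff n (taylorSeries f) * ρ ^ n‖ ^ 2)
      (nhdsWithin 1 (Set.Iio 1))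
      (nhds (∑ n ∈ s, ‖PowerSeries.coeff n (taylorSeries f) * (1 : ℝ) ^ n‖ ^ 2)) :=
    (Continuous.tendsto (by fun_prop) 1).mono_left nhdsWithin_le_nhds
  simp only [Complex.ofReal_one, one_pow, mul_one] at hlim
  exact le_of_tendsto hlim (mem_of_superset (Ioo_mem_nhdsLT one_pos) hle)

end TaylorSeries

/-! ### Faber polynomials -/

section FaberPolynomial

variable {F : Type*} [Field F]

/-- The Faber polynomials `P_n`, generated by `∑ P_n(w) X ^ n = R / (K - w X)`. For
`K(x) = x φ(1 / x)` and the weight `R(x) = K(x) - x K'(x)` they are the Faber polynomials of the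
exterior map `φ`; other weights `R` give the generalized Faber polynomials. -/
noncomputable def faberPolynomial (K R : PowerSeries F) (n : ℕ) : Polynomial F :=
  ∑ j ∈ Finset.range (n + 1),
    Polynomial.C (PowerSeries.coeff (n - j) (R * K⁻¹ ^ (j + 1))) * Polynomial.X ^ j

variable {K R S : PowerSeries F} {c w : F}

lemma natDegree_faberPolynomial_le (K R : PowerSeries F) (n : ℕ) :
    (faberPolynomial K R n).natDegree ≤ n :=
  Polynomial.natDegree_sum_le_of_forall_le _ _ fun _ hj =>
    (Polynomial.natDegree_C_mul_X_pow_le _ _).trans (Finset.mem_range_succ_iff.1 hj)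

lemma coeff_faberPolynomial_self (hK : PowerSeries.constantCoeff K = 1)
    (hR : PowerSeries.constantCoeff R = 1) (n : ℕ) : (faberPolynomial K R n).coeff n = 1 := by
  simp [faberPolynomial, Polynomial.coeff_C_mul, Polynomial.coeff_X_pow, hK, hR]

lemma natDegree_faberPolynomial (hK : PowerSeries.constantCoeff K = 1)
    (hR : PowerSeries.constantCoeff R = 1) (n : ℕ) : (faberPolynomial K R n).natDegree = n :=
  Polynomial.natDegree_eq_of_le_of_coeff_ne_zero (natDegree_faberPolynomial_le K R n) <| by
    simp [coeff_faberPolynomial_self hK hR]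

lemma faberPolynomial_monic (hK : PowerSeries.constantCoeff K = 1)
    (hR : PowerSeries.constantCoeff R = 1) (n : ℕ) : (faberPolynomial K R n).Monic :=
  Polynomial.monic_of_natDegree_le_of_coeff_eq_one n (natDegree_faberPolynomial_le K R n)
    (coeff_faberPolynomial_self hK hR n)

lemma faberPolynomial_one_one (n : ℕ) :
    faberPolynomial (1 : PowerSeries F) 1 n = Polynomial.X ^ n := by
  rw [faberPolynomial, Finset.sum_range_succ, Finset.sum_eq_zero fun j hj => ?_]
  · simp
  · have : n - j ≠ 0 := (Nat.sub_pos_of_lt (Finset.mem_range.1 hj)).ne'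
    simp [PowerSeries.coeff_one, this]

lemma eval_faberPolynomial (K R : PowerSeries F) (n : ℕ) (w : F) :
    (faberPolynomial K R n).eval w = PowerSeries.coeff n
      (R * K⁻¹ * ∑ j ∈ Finset.range (n + 1), (K⁻¹ * (PowerSeries.C w * PowerSeries.X)) ^ j) := by
  simp only [faberPolynomial, Polynomial.eval_finsetSum, Finset.mul_sum, map_sum,
    Polynomial.eval_mul, Polynomial.eval_C, Polynomial.eval_pow, Polynomial.eval_X]
  refine Finset.sum_congr rfl fun j hj => ?_
  have hterm : R * K⁻¹ * (K⁻¹ * (PowerSeries.C w * PowerSeries.X)) ^ j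
      = R * K⁻¹ ^ (j + 1) * PowerSeries.C (w ^ j) * PowerSeries.X ^ j := by
    rw [map_pow]
    ring
  rw [hterm, PowerSeries.coeff_mul_X_pow', if_pos (Finset.mem_range_succ_iff.1 hj),
    PowerSeries.coeff_mul_C]

theorem coeff_eq_mul_eval_faberPolynomial (hK : PowerSeries.constantCoeff K ≠ 0)
    (hS : S * (K - PowerSeries.C w * PowerSeries.X) = PowerSeries.C c * R) (n : ℕ) :
    PowerSeries.coeff n S = c * (faberPolynomial K R n).eval w := by
  set Y := K⁻¹ * (PowerSeries.C w * PowerSeries.X) with hY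
  have hgeom : S * (1 - Y) = PowerSeries.C c * (R * K⁻¹) := by
    rw [← mul_assoc, ← hS, mul_assoc, sub_mul, PowerSeries.mul_inv_cancel _ hK, hY,
      mul_comm K⁻¹]
  have hsum : PowerSeries.C c * (R * K⁻¹ * ∑ j ∈ Finset.range (n + 1), Y ^ j)
      = S - S * K⁻¹ ^ (n + 1) * PowerSeries.C w ^ (n + 1) * PowerSeries.X ^ (n + 1) := by
    rw [← mul_assoc, ← hgeom, mul_assoc, mul_comm (1 - Y), geom_sum_mul_neg, hY]
    ring
  rw [eval_faberPolynomial, ← PowerSeries.coeff_C_mul, hsum, map_sub,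
    PowerSeries.coeff_mul_X_pow', if_neg (by omega), sub_zero]

end FaberPolynomial

/-! ### Normalized Faber polynomials of the exterior map -/

/-- The function `x φ(1 / x)` on the closed unit disc, extended by `1` to `x = 0`. -/
noncomputable def invertedMap (φ : ℂ → ℂ) : ℂ → ℂ := Function.update (fun x => x * φ x⁻¹) 0 1

/-- The square root `exp (-g(u, u) / 2)` of `φ' (1 / u)`, where `g` is the Grunsky series. -/
noncomputable def sqrtDeriv (A : ℕ → ℕ → ℂ) (u : ℂ) : ℂ :=
  Complex.exp (-(grunskySeries A u u / 2))

/-- The boundary function `√φ'(1 / v) P_n(φ(1 / v))`, where `P_n` is the generalized Faber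
polynomial of the exterior map `φ` with weight `√φ'`. -/
noncomputable def faberFunction (φ : ℂ → ℂ) (A : ℕ → ℕ → ℂ) (n : ℕ) (v : ℂ) : ℂ :=
  sqrtDeriv A v * (faberPolynomial (taylorSeries (invertedMap φ))
    (taylorSeries (sqrtDeriv A)) n).eval (φ v⁻¹)

lemma taylorSeries_sub_const_mul {f : ℂ → ℂ} (hf : AnalyticAt ℂ f 0) (c : ℂ) :
    taylorSeries (fun z => f z - c * z)
      = taylorSeries f - PowerSeries.C c * PowerSeries.X := by
  have hmul : taylorSeries (fun z => c * z) = PowerSeries.C c * PowerSeries.X := by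
    rw [taylorSeries_mul (g := fun z => z) analyticAt_const analyticAt_id, taylorSeries_const,
      taylorSeries_id]
  rw [taylorSeries_sub hf (by fun_prop), hmul]

lemma coeff_taylorSeries_inv_one_sub_mul (c : ℂ) (n : ℕ) :
    PowerSeries.coeff n (taylorSeries fun z => (1 - c * z)⁻¹) = c ^ n := by
  have hden : AnalyticAt ℂ (fun z => 1 - c * z) 0 := by fun_prop
  have hinv : AnalyticAt ℂ (fun z => (1 - c * z)⁻¹) 0 := hden.fun_inv (by simp)
  have hne : ∀ᶠ z in nhds (0 : ℂ), 1 - c * z ≠ 0 := hden.continuousAt.eventually_ne (by simp)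
  have hmul : taylorSeries (fun z => (1 - c * z)⁻¹)
      * (1 - PowerSeries.C c * PowerSeries.X) = PowerSeries.C 1 * 1 := by
    rw [← map_one PowerSeries.C, ← taylorSeries_const, ← taylorSeries_sub_const_mul
      analyticAt_const, ← taylorSeries_mul hinv hden, taylorSeries_const, map_one, mul_one,
      ← map_one PowerSeries.C, ← taylorSeries_const]
    exact taylorSeries_congr (hne.mono fun z hz => inv_mul_cancel₀ hz)
  rw [coeff_eq_mul_eval_faberPolynomial (by simp) hmul, faberPolynomial_one_one,
    Polynomial.eval_X_pow, one_mul]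

section Grunsky

variable {A : ℕ → ℕ → ℂ}

lemma diffContOnCl_grunskySeries (hA : Summable fun p : ℕ × ℕ => ‖A p.1 p.2‖) {f g : ℂ → ℂ}
    (hf : Differentiable ℂ f) (hg : Differentiable ℂ g) (hf1 : ∀ x, ‖x‖ ≤ 1 → ‖f x‖ ≤ 1)
    (hg1 : ∀ x, ‖x‖ ≤ 1 → ‖g x‖ ≤ 1) :
    DiffContOnCl ℂ (fun x => grunskySeries A (f x) (g x)) (Metric.ball 0 1) := by
  refine .mk_ball (differentiableOn_grunskySeries hA Metric.isOpen_ball hf.differentiableOn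
    hg.differentiableOn (fun x hx => hf1 x (mem_ball_zero_iff.1 hx).le)
    fun x hx => hg1 x (mem_ball_zero_iff.1 hx).le)
    (continuousOn_grunskySeries hA hf.continuous.continuousOn hg.continuous.continuousOn
    (fun x hx => hf1 x (mem_closedBall_zero_iff.1 hx))
    fun x hx => hg1 x (mem_closedBall_zero_iff.1 hx))

lemma diffContOnCl_sqrtDeriv (hA : Summable fun p : ℕ × ℕ => ‖A p.1 p.2‖) :
    DiffContOnCl ℂ (sqrtDeriv A) (Metric.ball 0 1) :=
  Complex.differentiable_exp.comp_diffContOnCl <| by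
    simpa only [div_eq_mul_inv] using! ((diffContOnCl_grunskySeries hA differentiable_id
      differentiable_id (fun _ => id) fun _ => id).smul_const (2 : ℂ)⁻¹).neg

lemma grunskyKernel_eq (u v : ℂ) :
    grunskyKernel A u v = Complex.exp (grunskySeries A u v) * sqrtDeriv A u * sqrtDeriv A v := by
  rw [sqrtDeriv, sqrtDeriv, ← Complex.exp_add, ← Complex.exp_add, ← sub_eq_add_neg,
    ← sub_eq_add_neg, grunskyKernel]

lemma sqrtDeriv_zero : sqrtDeriv A 0 = 1 := by
  rw [sqrtDeriv, grunskySeries_zero_left, zero_div, neg_zero, Complex.exp_zero]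

lemma diffContOnCl_grunskyKernel (hA : Summable fun p : ℕ × ℕ => ‖A p.1 p.2‖) {v : ℂ}
    (hv : ‖v‖ ≤ 1) : DiffContOnCl ℂ (fun x => grunskyKernel A x v) (Metric.ball 0 1) := by
  simp only [grunskyKernel_eq]
  exact ((Complex.differentiable_exp.comp_diffContOnCl (diffContOnCl_grunskySeries hA
    differentiable_id (differentiable_const v) (fun _ => id) fun _ _ => hv)).smul
    (diffContOnCl_sqrtDeriv hA)).smul_const _

end Grunsky

namespace HasGrunskyCoeffs

variable {φ : ℂ → ℂ} {A : ℕ → ℕ → ℂ} (h : HasGrunskyCoeffs φ A)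
include h

lemma invertedMap_sub {x v : ℂ} (hx : ‖x‖ ≤ 1) (hv : ‖v‖ = 1) :
    invertedMap φ x - φ v⁻¹ * x = (1 - v⁻¹ * x) * Complex.exp (-grunskySeries A x v) := by
  rcases eq_or_ne x 0 with rfl | hx0
  · simp [invertedMap, grunskySeries_zero_left]
  · rw [invertedMap, Function.update_of_ne hx0, mul_comm _ x, ← mul_sub,
      h.sub_eq hx0 (ne_zero_of_norm_eq_one hv) hx hv.le, ← mul_assoc, mul_sub,
      mul_inv_cancel₀ hx0, mul_comm x]

lemma diffContOnCl_invertedMap : DiffContOnCl ℂ (invertedMap φ) (Metric.ball 0 1) := by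
  have heq : Set.EqOn (invertedMap φ)
      (fun x => (1 - x) * Complex.exp (-grunskySeries A x 1) + φ 1 * x) (Metric.closedBall 0 1) :=
    fun x hx => by
      have := h.invertedMap_sub (mem_closedBall_zero_iff.1 hx) norm_one
      rw [inv_one, one_mul] at this
      exact sub_eq_iff_eq_add.1 this
  have hg := diffContOnCl_grunskySeries h.summable differentiable_id (differentiable_const 1)
    (fun _ => id) fun _ _ => norm_one.le
  have hd := hg.differentiableOn
  have hc := hg.continuousOn_ball
  refine .mk_ball (DifferentiableOn.congr ?_ (heq.mono Metric.ball_subset_closedBall))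
    (ContinuousOn.congr ?_ heq)
  · exact ((differentiableOn_const 1).sub differentiableOn_id).mul hd.neg.cexp |>.add
      (differentiableOn_id.const_mul _)
  · exact ((continuousOn_const.sub continuousOn_id).mul hc.neg.cexp).add
      (continuousOn_const.mul continuousOn_id)

end HasGrunskyCoeffs

lemma analyticAt_zero_of_diffContOnCl {f : ℂ → ℂ} (hf : DiffContOnCl ℂ f (Metric.ball 0 1)) :
    AnalyticAt ℂ f 0 :=
  hf.differentiableOn.analyticAt (Metric.ball_mem_nhds 0 one_pos)

namespace HasGrunskyCoeffs

variable {φ : ℂ → ℂ} {A : ℕ → ℕ → ℂ} (h : HasGrunskyCoeffs φ A) {v : ℂ}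
include h

lemma coeff_taylorSeries_grunskyKernel_mul_inv (hv : ‖v‖ = 1) (n : ℕ) :
    PowerSeries.coeff n (taylorSeries fun x => grunskyKernel A x v * (1 - v⁻¹ * x)⁻¹)
      = faberFunction φ A n v := by
  have hmap := analyticAt_zero_of_diffContOnCl h.diffContOnCl_invertedMap
  have hden : AnalyticAt ℂ (fun x => 1 - v⁻¹ * x) 0 := by fun_prop
  have hquot : AnalyticAt ℂ (fun x => grunskyKernel A x v * (1 - v⁻¹ * x)⁻¹) 0 :=
    (analyticAt_zero_of_diffContOnCl (diffContOnCl_grunskyKernel h.summable hv.le)).mul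
      (hden.inv (by simp))
  have hkernel : taylorSeries (fun x => grunskyKernel A x v * (1 - v⁻¹ * x)⁻¹)
      * (taylorSeries (invertedMap φ) - PowerSeries.C (φ v⁻¹) * PowerSeries.X)
      = PowerSeries.C (sqrtDeriv A v) * taylorSeries (sqrtDeriv A) := by
    rw [← taylorSeries_sub_const_mul hmap, ← taylorSeries_const,
      ← taylorSeries_mul hquot (hmap.fun_sub (by fun_prop)),
      ← taylorSeries_mul analyticAt_const
        (analyticAt_zero_of_diffContOnCl (diffContOnCl_sqrtDeriv h.summable))]
    refine taylorSeries_congr ?_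
    filter_upwards [Metric.ball_mem_nhds (0 : ℂ) one_pos,
      hden.continuousAt.eventually_ne (by simp : 1 - v⁻¹ * 0 ≠ 0)] with x hx hne
    rw [h.invertedMap_sub (mem_ball_zero_iff.1 hx).le hv, mul_assoc, inv_mul_cancel_left₀ hne,
      grunskyKernel_eq, Complex.exp_neg]
    field_simp
  have hone : PowerSeries.constantCoeff (taylorSeries (invertedMap φ)) ≠ 0 := by
    rw [constantCoeff_taylorSeries, invertedMap, Function.update_self]
    exact one_ne_zero
  rw [coeff_eq_mul_eval_faberPolynomial hone hkernel, faberFunction]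

lemma coeff_taylorSeries_grunskyKernel_sub_one_mul_inv (hv : ‖v‖ = 1) (n : ℕ) :
    PowerSeries.coeff n (taylorSeries fun x => (grunskyKernel A x v - 1) * (1 - v⁻¹ * x)⁻¹)
      = faberFunction φ A n v - v⁻¹ ^ n := by
  have hkernel : AnalyticAt ℂ (fun x => grunskyKernel A x v) 0 :=
    analyticAt_zero_of_diffContOnCl (diffContOnCl_grunskyKernel h.summable hv.le)
  have hinv : AnalyticAt ℂ (fun x => (1 - v⁻¹ * x)⁻¹) 0 :=
    AnalyticAt.fun_inv (by fun_prop) (by simp)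
  simp only [sub_mul, one_mul]
  rw [taylorSeries_sub (hkernel.fun_mul hinv) hinv, map_sub,
    h.coeff_taylorSeries_grunskyKernel_mul_inv hv, coeff_taylorSeries_inv_one_sub_mul]

theorem sum_norm_sq_faberFunction_sub_le {M : ℝ}
    (hM : ∀ u, ‖u‖ = 1 → ‖grunskyKernel A u v - 1‖ ≤ M * ‖u - v‖) (hv : ‖v‖ = 1) (s : Finset ℕ) :
    ∑ n ∈ s, ‖faberFunction φ A n v - v⁻¹ ^ n‖ ^ 2 ≤ M ^ 2 := by
  have hkernel := (diffContOnCl_grunskyKernel h.summable hv.le).sub_const 1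
  have hnorm (x : ℂ) : ‖1 - v⁻¹ * x‖ = ‖x - v‖ := by
    rw [← mul_one ‖1 - v⁻¹ * x‖, ← hv, ← norm_mul, sub_mul, mul_right_comm,
      inv_mul_cancel₀ (ne_zero_of_norm_eq_one hv), one_mul, one_mul, norm_sub_rev]
  have hpos (x : ℂ) (hx : ‖x‖ < 1) : 0 < ‖1 - v⁻¹ * x‖ :=
    hnorm x ▸ norm_sub_pos_iff.2 fun hxv => (hxv ▸ hx).ne hv
  simp only [← h.coeff_taylorSeries_grunskyKernel_sub_one_mul_inv hv]
  refine sum_norm_sq_coeff_taylorSeries_le (fun x hx => ?_) (fun x hx => ?_) s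
  · exact (hkernel.differentiableOn x hx).mul <| DifferentiableWithinAt.fun_inv (by fun_prop)
      (norm_pos_iff.1 (hpos x (mem_ball_zero_iff.1 hx)))
  · rw [norm_mul, norm_inv, ← div_eq_mul_inv, div_le_iff₀ (hpos x hx), hnorm]
    exact norm_le_mul_norm_sub_of_forall_sphere hkernel hv hM hx.le

lemma exists_diffContOnCl_eq_pow_mul_faberFunction (n : ℕ) :
    ∃ H : ℂ → ℂ, DiffContOnCl ℂ H (Metric.ball 0 1) ∧ H 0 = 1 ∧
      ∀ v, v ≠ 0 → H v = v ^ n * faberFunction φ A n v := by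
  have hmap0 : invertedMap φ 0 = 1 := Function.update_self ..
  set P := faberPolynomial (taylorSeries (invertedMap φ)) (taylorSeries (sqrtDeriv A)) n
  have hcoeff : P.coeff n = 1 := coeff_faberPolynomial_self
    (by rw [constantCoeff_taylorSeries, hmap0])
    (by rw [constantCoeff_taylorSeries, sqrtDeriv_zero]) n
  have hdeg : P.natDegree < n + 1 := Nat.lt_succ_of_le (natDegree_faberPolynomial_le _ _ n)
  refine ⟨fun v => sqrtDeriv A v *
    ∑ i ∈ Finset.range (n + 1), P.coeff i * (v ^ (n - i) * invertedMap φ v ^ i), ?_, ?_, ?_⟩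
  · have hmap := h.diffContOnCl_invertedMap
    have hsqrt := diffContOnCl_sqrtDeriv h.summable
    refine .mk_ball (hsqrt.differentiableOn.mul (.fun_sum fun i _ => ?_))
      (hsqrt.continuousOn_ball.mul (continuousOn_finsetSum _ fun i _ => ?_))
    · exact ((differentiableOn_pow _).mul (hmap.differentiableOn.pow i)).const_mul _
    · exact continuousOn_const.mul ((continuousOn_pow _).mul (hmap.continuousOn_ball.pow i))
  · simp only [sqrtDeriv_zero, one_mul, hmap0, one_pow, mul_one]
    rw [Finset.sum_range_succ, Finset.sum_eq_zero fun i hi => ?_, hcoeff, Nat.sub_self, pow_zero,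
      mul_one, zero_add]
    rw [zero_pow (Nat.sub_pos_of_lt (Finset.mem_range.1 hi)).ne', mul_zero]
  · intro v hv
    have hφ : φ v⁻¹ = v⁻¹ * invertedMap φ v := by
      rw [invertedMap, Function.update_of_ne hv, inv_mul_cancel_left₀ hv]
    rw [faberFunction, Polynomial.eval_eq_sum_range' hdeg, mul_left_comm,
      Finset.mul_sum]
    refine congrArg _ (Finset.sum_congr rfl fun i hi => ?_)
    rw [hφ, mul_pow, pow_sub₀ v hv (Finset.mem_range_succ_iff.1 hi), inv_pow]
    ring

lemma continuousOn_faberFunction (n : ℕ) :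
    ContinuousOn (faberFunction φ A n) (Metric.sphere 0 1) := by
  obtain ⟨H, hH, -, hfaber⟩ := h.exists_diffContOnCl_eq_pow_mul_faberFunction n
  have hne (v : ℂ) (hv : v ∈ Metric.sphere (0 : ℂ) 1) : v ≠ 0 :=
    ne_zero_of_norm_eq_one (mem_sphere_zero_iff_norm.1 hv)
  refine ContinuousOn.congr (f := fun v => (v ^ n)⁻¹ * H v) (.mul ((continuousOn_pow n).inv₀
    fun v hv => pow_ne_zero n (hne v hv)) (hH.continuousOn_ball.mono
    Metric.sphere_subset_closedBall)) fun v hv => ?_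
  simp only [hfaber v (hne v hv), inv_mul_cancel_left₀ (pow_ne_zero n (hne v hv))]

lemma integral_pow_mul_faberFunction (n : ℕ) :
    ∫ v, v ^ n * faberFunction φ A n v ∂circleMeasure = 1 := by
  obtain ⟨H, hH, hH0, hfaber⟩ := h.exists_diffContOnCl_eq_pow_mul_faberFunction n
  rw [← hH0, ← integral_circleMeasure_eq_apply_zero hH]
  exact integral_congr_ae (ae_norm_eq_one.mono fun v hv =>
    (hfaber v (ne_zero_of_norm_eq_one hv)).symm)

lemma integral_norm_sq_faberFunction_sub (n : ℕ) :
    ∫ v, ‖faberFunction φ A n v - v⁻¹ ^ n‖ ^ 2 ∂circleMeasure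
      = ∫ v, ‖faberFunction φ A n v‖ ^ 2 ∂circleMeasure - 1 := by
  have hcont := h.continuousOn_faberFunction n
  have hmul : Integrable (fun v => v ^ n * faberFunction φ A n v) circleMeasure :=
    integrable_circleMeasure ((continuousOn_pow n).mul hcont)
  have hre : ∫ v, (v ^ n * faberFunction φ A n v).re ∂circleMeasure = 1 := by
    rw [← Complex.one_re, ← h.integral_pow_mul_faberFunction n]
    exact integral_re hmul
  have hexpand : ∀ᵐ v ∂circleMeasure, ‖faberFunction φ A n v - v⁻¹ ^ n‖ ^ 2
      = ‖faberFunction φ A n v‖ ^ 2 - 2 * (v ^ n * faberFunction φ A n v).re + 1 := by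
    filter_upwards [ae_norm_eq_one] with v hv
    rw [Complex.inv_eq_conj hv, ← map_pow, ← Complex.normSq_eq_norm_sq, Complex.normSq_sub,
      Complex.conj_conj, Complex.normSq_conj, Complex.normSq_eq_norm_sq, Complex.normSq_eq_norm_sq,
      norm_pow, hv, one_pow, one_pow, mul_comm (v ^ n)]
    ring
  rw [integral_congr_ae hexpand, integral_add _ (integrable_const 1), integral_sub _ _,
    integral_const_mul, hre, integral_const, probReal_univ, one_smul]
  · ring
  · exact integrable_circleMeasure (hcont.norm.pow 2)
  · exact hmul.re.const_mul 2
  · exact (integrable_circleMeasure (hcont.norm.pow 2)).sub (hmul.re.const_mul 2)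

theorem sum_integral_norm_sq_faberFunction_le {M : ℝ}
    (hM : ∀ u v, ‖u‖ = 1 → ‖v‖ = 1 → ‖grunskyKernel A u v - 1‖ ≤ M * ‖u - v‖) (n : ℕ) :
    ∑ j : Fin n, ∫ v, ‖faberFunction φ A j v‖ ^ 2 ∂circleMeasure ≤ n + M ^ 2 := by
  have hsum : ∑ j : Fin n, ∫ v, ‖faberFunction φ A j v - v⁻¹ ^ (j : ℕ)‖ ^ 2 ∂circleMeasure
      ≤ M ^ 2 := by
    have hint (j : Fin n) : Integrable (fun v => ‖faberFunction φ A j v - v⁻¹ ^ (j : ℕ)‖ ^ 2)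
        circleMeasure := integrable_circleMeasure <| ContinuousOn.pow (ContinuousOn.norm <|
      (h.continuousOn_faberFunction j).sub <| ContinuousOn.pow (continuousOn_id.inv₀ fun v hv =>
        ne_zero_of_norm_eq_one (mem_sphere_zero_iff_norm.1 hv)) j) 2
    rw [← integral_finsetSum _ fun j _ => hint j]
    calc ∫ v, ∑ j : Fin n, ‖faberFunction φ A j v - v⁻¹ ^ (j : ℕ)‖ ^ 2 ∂circleMeasure
        ≤ ∫ _, M ^ 2 ∂circleMeasure := by
          refine integral_mono_ae (integrable_finsetSum _ fun j _ => hint j)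
            (integrable_const _) (ae_norm_eq_one.mono fun v hv => ?_)
          simp only [Fin.sum_univ_eq_sum_range fun j => ‖faberFunction φ A j v - v⁻¹ ^ j‖ ^ 2]
          exact h.sum_norm_sq_faberFunction_sub_le (fun u hu => hM u v hu hv) hv _
      _ = M ^ 2 := by rw [integral_const, probReal_univ, one_smul]
  simp only [h.integral_norm_sq_faberFunction_sub, Finset.sum_sub_distrib, Finset.sum_const,
    Finset.card_univ, Fintype.card_fin, nsmul_eq_mul, mul_one] at hsum
  linarith

end HasGrunskyCoeffs

/-! ### Determinantal integrals -/

section Determinant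

variable {ι 𝕜 : Type*} [Fintype ι] [DecidableEq ι] [RCLike 𝕜]

lemma sum_perm_sign_mul_prod_apply_apply (G : Matrix ι ι 𝕜) :
    ∑ σ : Equiv.Perm ι, ∑ τ : Equiv.Perm ι, (σ.sign : 𝕜) * τ.sign * ∏ i, G (σ i) (τ i)
      = (Fintype.card ι).factorial * G.det := by
  have hτ (τ : Equiv.Perm ι) :
      ∑ σ : Equiv.Perm ι, (σ.sign : 𝕜) * τ.sign * ∏ i, G (σ i) (τ i) = G.det := by
    have hperm := det_permute' τ G
    rw [det_apply'] at hperm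
    simp only [submatrix_apply, id_eq] at hperm
    simp only [mul_right_comm, ← Finset.sum_mul, hperm]
    rw [mul_comm, ← mul_assoc, ← Int.cast_mul, Int.units_coe_mul_self, Int.cast_one, one_mul]
  rw [Finset.sum_comm]
  simp only [hτ, Finset.sum_const, Finset.card_univ, Fintype.card_perm, nsmul_eq_mul]

open ComplexOrder in
lemma re_det_le_exp_re_trace_sub_card {G : Matrix ι ι 𝕜} (hG : G.PosSemidef) :
    RCLike.re G.det ≤ Real.exp (RCLike.re G.trace - Fintype.card ι) := by
  rw [hG.1.det_eq_prod_eigenvalues, hG.1.trace_eq_sum_eigenvalues, ← RCLike.ofReal_prod,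
    ← RCLike.ofReal_sum, RCLike.ofReal_re, RCLike.ofReal_re]
  calc ∏ i, hG.1.eigenvalues i ≤ ∏ i, Real.exp (hG.1.eigenvalues i - 1) :=
        Finset.prod_le_prod (fun i _ => hG.eigenvalues_nonneg i) fun i _ => by
          simpa using Real.add_one_le_exp (hG.1.eigenvalues i - 1)
    _ = Real.exp (∑ i, hG.1.eigenvalues i - Fintype.card ι) := by
        rw [← Real.exp_sum, Finset.sum_sub_distrib, Finset.sum_const, Finset.card_univ,
          nsmul_one]

variable {X : Type*} [MeasurableSpace X] {μ : Measure X} [SigmaFinite μ]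

/-- Andréief's identity. -/
theorem integral_det_mul_det {f g : ι → X → 𝕜}
    (hfg : ∀ i j, Integrable (fun t => f i t * g j t) μ) :
    ∫ x, (of fun i j => f i (x j)).det * (of fun i j => g i (x j)).det ∂Measure.pi (fun _ : ι => μ)
      = (Fintype.card ι).factorial * (of fun i j => ∫ t, f i t * g j t ∂μ).det := by
  have hexpand (x : ι → X) : (of fun i j => f i (x j)).det * (of fun i j => g i (x j)).det
      = ∑ σ : Equiv.Perm ι, ∑ τ : Equiv.Perm ι, (σ.sign : 𝕜) * τ.sign *
        ∏ i, f (σ i) (x i) * g (τ i) (x i) := by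
    simp only [det_apply', of_apply, Finset.sum_mul_sum, Finset.prod_mul_distrib]
    refine Finset.sum_congr rfl fun σ _ => Finset.sum_congr rfl fun τ _ => by ring
  have hint (σ τ : Equiv.Perm ι) : Integrable (fun x : ι → X => (σ.sign : 𝕜) * τ.sign *
      ∏ i, f (σ i) (x i) * g (τ i) (x i)) (Measure.pi fun _ => μ) :=
    (Integrable.fintype_prod fun i => hfg (σ i) (τ i)).const_mul _
  simp only [hexpand]
  rw [integral_finsetSum _ fun σ _ => integrable_finsetSum _ fun τ _ => hint σ τ,
    ← sum_perm_sign_mul_prod_apply_apply]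
  refine Finset.sum_congr rfl fun σ _ => ?_
  rw [integral_finsetSum _ fun τ _ => hint σ τ]
  refine Finset.sum_congr rfl fun τ _ => ?_
  rw [integral_const_mul, integral_fintype_prod_eq_prod (μ := fun _ : ι => μ)
    (f := fun i t => f (σ i) t * g (τ i) t)]
  rfl

theorem integral_norm_sq_det_le {f : ι → X → 𝕜} (hf : ∀ i, MemLp (f i) 2 μ) :
    ∫ x, ‖(of fun i j => f i (x j)).det‖ ^ 2 ∂Measure.pi (fun _ : ι => μ)
      ≤ (Fintype.card ι).factorial
        * Real.exp (∑ i, ∫ t, ‖f i t‖ ^ 2 ∂μ - Fintype.card ι) := by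
  have hgram : gram 𝕜 (fun i => (hf i).toLp) = of fun i j => ∫ t, conj (f i t) * f j t ∂μ := by
    ext i j
    rw [gram_apply, L2.inner_def, of_apply]
    refine integral_congr_ae ?_
    filter_upwards [(hf i).coeFn_toLp, (hf j).coeFn_toLp] with t hi hj
    rw [hi, hj, RCLike.inner_apply']
  have hdet : ∫ x, ‖(of fun i j => f i (x j)).det‖ ^ 2 ∂Measure.pi (fun _ : ι => μ)
      = (Fintype.card ι).factorial * RCLike.re (gram 𝕜 fun i => (hf i).toLp).det := by
    have hint (i j : ι) : Integrable (fun t => conj (f i t) * f j t) μ :=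
      (hf i).star.integrable_mul (hf j)
    rw [hgram, ← RCLike.re_ofReal_mul, RCLike.ofReal_natCast, ← integral_det_mul_det hint,
      ← RCLike.ofReal_re (K := 𝕜) (∫ _, _ ∂_), ← integral_ofReal]
    congr 2 with x
    have hconj : (of fun i j => conj (f i (x j))).det = conj (of fun i j => f i (x j)).det :=
      (RingHom.map_det conj _).symm
    rw [hconj, RCLike.conj_mul, RCLike.ofReal_pow]
  have htrace : RCLike.re (gram 𝕜 fun i => (hf i).toLp).trace = ∑ i, ∫ t, ‖f i t‖ ^ 2 ∂μ := by
    simp only [hgram, trace, diag_apply, of_apply, map_sum, RCLike.conj_mul,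
      ← RCLike.ofReal_pow, integral_ofReal, RCLike.ofReal_re]
  rw [hdet, ← htrace]
  gcongr
  exact re_det_le_exp_re_trace_sub_card (posSemidef_gram 𝕜 _)

end Determinant

/-! ### Uniform bound on the partition functions -/

namespace HasGrunskyCoeffs

variable {φ : ℂ → ℂ} {A : ℕ → ℕ → ℂ} (h : HasGrunskyCoeffs φ A)
include h

lemma norm_sq_det_faberFunction {n : ℕ} {x : Fin n → ℂ} (hx : x ∈ unitTorus n) :
    ‖(of fun i j : Fin n => faberFunction φ A i (x j)).det‖ ^ 2
      = ‖(vandermonde x).det‖ ^ 2 * ‖quadExp A (powerSum x)‖ ^ 2 := by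
  set P : Fin n → Polynomial ℂ := fun j =>
    faberPolynomial (taylorSeries (invertedMap φ)) (taylorSeries (sqrtDeriv A)) j
  have hK : PowerSeries.constantCoeff (taylorSeries (invertedMap φ)) = 1 := by
    rw [constantCoeff_taylorSeries, invertedMap, Function.update_self]
  have hR : PowerSeries.constantCoeff (taylorSeries (sqrtDeriv A)) = 1 := by
    rw [constantCoeff_taylorSeries, sqrtDeriv_zero]
  have hvand : (vandermonde fun i => φ (x i)⁻¹).det
      = (of fun i j => (P j).eval (φ (x i)⁻¹)).det :=
    det_eval_matrixOfPolynomials_eq_det_vandermonde _ P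
      (fun j => natDegree_faberPolynomial hK hR j) fun j => faberPolynomial_monic hK hR j
  have hdet : (of fun i j : Fin n => faberFunction φ A i (x j)).det
      = (∏ i, sqrtDeriv A (x i)) * (vandermonde fun i => φ (x i)⁻¹).det := by
    rw [hvand, ← det_mul_column, ← det_transpose]
    rfl
  have hsqrt (u : ℂ) : ‖sqrtDeriv A u‖ ^ 2 = ‖Complex.exp (-grunskySeries A u u)‖ := by
    rw [sqrtDeriv, ← norm_pow, ← Complex.exp_nat_mul]
    ring_nf
  rw [← h.prod_norm_sub_sq_mul_prod_norm_exp hx, hdet, norm_mul, mul_pow, norm_det_vandermonde,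
    norm_prod, ← Finset.prod_pow, ← Finset.prod_pow, mul_comm]
  simp only [hsqrt]

lemma memLp_faberFunction (n : ℕ) : MemLp (faberFunction φ A n) 2 circleMeasure := by
  have hcont := h.continuousOn_faberFunction n
  exact (memLp_two_iff_integrable_sq_norm (integrable_circleMeasure hcont).1).2
    (integrable_circleMeasure (hcont.norm.pow 2))

theorem exists_quadExpNormSq_le (hφ : ContDiff ℝ 2 fun θ : ℝ => φ (Complex.exp (Complex.I * θ))) :
    ∃ C, ∀ n, quadExpNormSq A n ≤ C := by
  obtain ⟨M, hM⟩ := h.exists_norm_grunskyKernel_sub_one_le hφ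
  refine ⟨Real.exp (M ^ 2), fun n => ?_⟩
  have hfact : (0 : ℝ) < n.factorial := by exact_mod_cast n.factorial_pos
  calc quadExpNormSq A n
      = (n.factorial : ℝ)⁻¹ *
          ∫ x, ‖(of fun i j : Fin n => faberFunction φ A i (x j)).det‖ ^ 2 ∂torusMeasure n := by
        rw [quadExpNormSq_eq_integral_torusMeasure]
        refine congrArg _ (integral_congr_ae ?_)
        filter_upwards [ae_mem_unitTorus n] with x hx using (h.norm_sq_det_faberFunction hx).symm
    _ ≤ Real.exp (∑ i : Fin n, ∫ v, ‖faberFunction φ A i v‖ ^ 2 ∂circleMeasure - n) := by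
        rw [inv_mul_le_iff₀ hfact]
        simpa only [torusMeasure, Fintype.card_fin] using
          integral_norm_sq_det_le fun i : Fin n => h.memLp_faberFunction i
    _ ≤ Real.exp (M ^ 2) :=
        Real.exp_le_exp.2 (sub_le_iff_le_add'.2 (h.sum_integral_norm_sq_faberFunction_le hM n))

end HasGrunskyCoeffs

end CoulombGas

theorem stmt19_general (φ ψ : ℂ → ℂ) (a : ℕ → ℕ → ℂ)
    (hφ : ContDiff ℝ 2 (fun θ : ℝ => φ (Complex.exp (Complex.I * (θ : ℂ)))))
    (hψcont : ContinuousOn ψ {z : ℂ | 1 ≤ ‖z‖})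
    (hψ : ∀ z : ℂ, 1 < ‖z‖ → ψ z = deriv φ z)
    (hsym : ∀ k l, a k l = a l k)
    (hGrunsky : ∀ z ζ : ℂ, 1 ≤ ‖z‖ → 1 ≤ ‖ζ‖ →
      Summable (fun p : ℕ × ℕ =>
        ‖a (p.1 + 1) (p.2 + 1) * ζ ^ (-(p.1 : ℤ) - 1) * z ^ (-(p.2 : ℤ) - 1)‖) ∧
      (z ≠ ζ → φ ζ - φ z = (ζ - z) * Complex.exp
        (-∑' p : ℕ × ℕ, a (p.1 + 1) (p.2 + 1) * ζ ^ (-(p.1 : ℤ) - 1) * z ^ (-(p.2 : ℤ) - 1))))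
    (Z : ℕ → ℝ)
    (hZ : ∀ n : ℕ, Z n = (1 / (n.factorial : ℝ)) *
      ∫ θ in Set.pi Set.univ (fun _ : Fin n => Set.Icc (-Real.pi) Real.pi),
        (∏ p ∈ Finset.univ.filter (fun p : Fin n × Fin n => p.1 < p.2),
          ‖φ (Complex.exp (Complex.I * (θ p.1 : ℂ)))
            - φ (Complex.exp (Complex.I * (θ p.2 : ℂ)))‖ ^ 2) *
        ∏ μ, ‖ψ (Complex.exp (Complex.I * (θ μ : ℂ)))‖) :
    (∀ m : ℕ, 0 < (1 + grunskyK a m).det) ∧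
    ∃ D : ℝ, 0 < D ∧
      Tendsto (fun m : ℕ => (1 + grunskyK a m).det) atTop (nhds D) ∧
      Tendsto (fun n : ℕ => Z n / (2 * Real.pi) ^ n) atTop (nhds ((Real.sqrt D)⁻¹)) := by
  set A : ℕ → ℕ → ℂ := fun k l => a (k + 1) (l + 1)
  have hA : CoulombGas.HasGrunskyCoeffs φ A :=
    CoulombGas.HasGrunskyCoeffs.of_expansion hsym hGrunsky
  obtain ⟨C, hC⟩ := hA.exists_quadExpNormSq_le hφ
  have hs := CoulombGas.summable_limitTerm_of_bounded hA.summable hC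
  have hpos := CoulombGas.tsum_limitTerm_pos hA.symm hs
  have hK (m : ℕ) : grunskyK a m = CoulombGas.realForm (CoulombGas.scaledTruncation A m) :=
    CoulombGas.grunskyK_eq_realForm a m
  have hZ' (n : ℕ) : Z n / (2 * Real.pi) ^ n = CoulombGas.quadExpNormSq A n := by
    rw [hZ, hA.partitionFunction_div_eq_quadExpNormSq hψcont hψ]
  simp only [hK, hZ']
  refine ⟨fun m => (CoulombGas.det_scaledTruncation_pos_and_inv_sqrt_eq hA.symm hs m).1, _,
    inv_pos.2 (pow_pos hpos 2), CoulombGas.tendsto_det_scaledTruncation hA.symm hs, ?_⟩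
  rw [Real.sqrt_inv, inv_inv, Real.sqrt_sq hpos.le]
  exact CoulombGas.tendsto_quadExpNormSq hA.summable hs

/-- Asymptotics of the Coulomb gas partition function on a `C^{5+α}`
Jordan curve of capacity `1` (parametrized by the boundary values of the exterior map
`φ`, with `ψ` the continuous boundary extension of `φ'`): `det(I + K_m) > 0` for every
`m`, these determinants converge to some `D ∈ (0, ∞)`, and
`Z_n/(2π)^n → D^{-1/2}` as `n → ∞`. -/
theorem stmt19 (φ ψ : ℂ → ℂ) (φ₀ : ℂ) (c : ℕ → ℂ) (a : ℕ → ℕ → ℂ) (α : ℝ)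
    (hα : α ∈ Set.Ioo (0 : ℝ) 1)
    (hcont : ContinuousOn φ {z : ℂ | 1 ≤ ‖z‖})
    (hinj : Set.InjOn φ {z : ℂ | 1 ≤ ‖z‖})
    (hholo : DifferentiableOn ℂ φ {z : ℂ | 1 < ‖z‖})
    (hLaurent : ∀ z : ℂ, 1 < ‖z‖ →
      Summable (fun k : ℕ => ‖c k * z ^ (-(k : ℤ) - 1)‖) ∧
      φ z = z + φ₀ + ∑' k : ℕ, c k * z ^ (-(k : ℤ) - 1))
    (hC5 : ContDiff ℝ 5 (fun θ : ℝ => φ (Complex.exp (Complex.I * (θ : ℂ)))))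
    (hHolder : ∃ Cα : ℝ, ∀ x y : ℝ,
      ‖iteratedDeriv 5 (fun θ : ℝ => φ (Complex.exp (Complex.I * (θ : ℂ)))) x
        - iteratedDeriv 5 (fun θ : ℝ => φ (Complex.exp (Complex.I * (θ : ℂ)))) y‖
        ≤ Cα * |x - y| ^ α)
    (hderiv_ne : ∀ θ : ℝ,
      deriv (fun t : ℝ => φ (Complex.exp (Complex.I * (t : ℂ)))) θ ≠ 0)
    (hψcont : ContinuousOn ψ {z : ℂ | 1 ≤ ‖z‖})
    (hψ : ∀ z : ℂ, 1 < ‖z‖ → ψ z = deriv φ z)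
    (hψ0 : ∀ z : ℂ, 1 ≤ ‖z‖ → ψ z ≠ 0)
    (hsym : ∀ k l, a k l = a l k)
    (hGrunsky : ∀ z ζ : ℂ, 1 ≤ ‖z‖ → 1 ≤ ‖ζ‖ →
      Summable (fun p : ℕ × ℕ =>
        ‖a (p.1 + 1) (p.2 + 1) * ζ ^ (-(p.1 : ℤ) - 1) * z ^ (-(p.2 : ℤ) - 1)‖) ∧
      (z ≠ ζ → φ ζ - φ z = (ζ - z) * Complex.exp
        (-∑' p : ℕ × ℕ, a (p.1 + 1) (p.2 + 1) * ζ ^ (-(p.1 : ℤ) - 1) * z ^ (-(p.2 : ℤ) - 1))))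
    (Z : ℕ → ℝ)
    (hZ : ∀ n : ℕ, Z n = (1 / (n.factorial : ℝ)) *
      ∫ θ in Set.pi Set.univ (fun _ : Fin n => Set.Icc (-Real.pi) Real.pi),
        (∏ p ∈ Finset.univ.filter (fun p : Fin n × Fin n => p.1 < p.2),
          ‖φ (Complex.exp (Complex.I * (θ p.1 : ℂ)))
            - φ (Complex.exp (Complex.I * (θ p.2 : ℂ)))‖ ^ 2) *
        ∏ μ, ‖ψ (Complex.exp (Complex.I * (θ μ : ℂ)))‖) :
    (∀ m : ℕ, 0 < (1 + grunskyK a m).det) ∧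
    ∃ D : ℝ, 0 < D ∧
      Tendsto (fun m : ℕ => (1 + grunskyK a m).det) atTop (nhds D) ∧
      Tendsto (fun n : ℕ => Z n / (2 * Real.pi) ^ n) atTop (nhds ((Real.sqrt D)⁻¹)) :=
  stmt19_general φ ψ a (hC5.of_le (by norm_num)) hψcont hψ hsym hGrunsky Z hZ
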